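/- arXiv:1911.06170 — 3 statements merged into one kernel-verified Lean document; each statement's English description precedes it below -/
import Mathlib

section
/- Let b ≥ 3 be an integer and α = (b+√(b²+4))/2, so that α > 3 is a quadratic unit with conjugate α₂ = −1/α < 0. Define integer sequences (p_n) and (q_n) by p₀ = 0, p₂ = b, p_{2n+2} = (b²+2)·p_{2n} − p_{2n−2}, p_{2n−1} = p_{2n−2} + p_{2n}, and q₀ = 1, q₂ = b²+3, q_{2n+2} = (b²+2)·q_{2n} − q_{2n−2}, q_{2n−1} = q_{2n−2} + q_{2n} for n ≥ 1. Then the sequence (p_n/q_n)_{n≥0} is strictly increasing and converges to b/(1+α²), and 𝓛(α) ∩ [0, b/(1+α²)] = { p_n/q_n : n = 0, 1, 2, … } ∪ { b/(1+α²) }. Moreover the set X_∞ = { ξ ∈ ℝ : limsup_{n→∞} ‖ξ·α^n‖ = b/(1+α²) } is uncountable. -/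
/-- Distance from `x` to the nearest integer. -/
noncomputable def distNearestInt (x : ℝ) : ℝ := |x - round x|

/-- `limsup_{n→∞} ‖ξ·α^n‖`. -/
noncomputable def limsupDist (α ξ : ℝ) : ℝ :=
  Filter.limsup (fun n : ℕ => distNearestInt (ξ * α ^ n)) Filter.atTop

/-- The multiplicative Markoff–Lagrange spectrum `𝓛(α)`. -/
noncomputable def specL (α : ℝ) : Set ℝ := {l : ℝ | ∃ ξ : ℝ, limsupDist α ξ = l}

/-- The local reflection property. -/
def MidProp (H : ℤ → ℤ) (K : ℕ) : Prop :=
  ∀ n : ℤ, ∃ N : ℤ, 1 ≤ N ∧ N ≤ K ∧ H (n + N) + H (n - N) = 2 * H n ∧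
    ∃ δ : ℤ, (δ = 1 ∨ δ = -1) ∧ ∀ j : ℤ, 0 < j → j < N → H (n + j) + H (n - j) = 2 * H n + δ

lemma mid_max (H : ℤ → ℝ) (K : ℕ)
    (hm : ∀ n : ℤ, ∃ N : ℤ, 1 ≤ N ∧ N ≤ K ∧ H (n + N) + H (n - N) = 2 * H n)
    (γ : ℝ) (l r : ℤ)
    (h1 : ∀ n, l - K ≤ n → n < l → H n ≤ γ)
    (h2 : ∀ n, r < n → n ≤ r + K → H n ≤ γ) :
    ∀ n, l ≤ n → n ≤ r → H n ≤ γ := by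
  intro n hln hnr
  by_contra hcon
  push Not at hcon
  obtain ⟨x, hx, hmax⟩ := Finset.exists_max_image (Finset.Icc (l - K) (r + K)) H
    ⟨n, by simp; omega⟩
  have hxγ : γ < H x := lt_of_lt_of_le hcon (hmax n (by simp; omega))
  set S := (Finset.Icc (l - (K:ℤ)) (r + K)).filter (fun y => H y = H x) with hS
  have hne : S.Nonempty := ⟨x, Finset.mem_filter.2 ⟨hx, rfl⟩⟩
  have hy := S.min'_mem hne
  set y := S.min' hne with hydef
  simp only [hS, Finset.mem_filter, Finset.mem_Icc] at hy
  obtain ⟨⟨hy1, hy2⟩, hyx⟩ := hy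
  have hyl : l ≤ y := by
    by_contra hc
    have := h1 y hy1 (by omega)
    linarith
  have hyr : y ≤ r := by
    by_contra hc
    have := h2 y (by omega) hy2
    linarith
  obtain ⟨N, hN1, hN2, hN⟩ := hm y
  have ha := hmax (y + N) (by simp; omega)
  have hb := hmax (y - N) (by simp; omega)
  have hmem : y - N ∈ S := by
    simp only [hS, Finset.mem_filter, Finset.mem_Icc]
    refine ⟨⟨by omega, by omega⟩, by linarith⟩
  have := S.min'_le _ hmem
  omega

lemma lip_of_step (H : ℤ → ℤ) (h : ∀ n, |H (n + 1) - H n| ≤ 1) (n : ℤ) (m : ℕ) :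
    |H (n + m) - H n| ≤ m := by
  induction m with
  | zero => simp
  | succ m ih =>
    have := h (n + m)
    push_cast
    rw [show n + ((m:ℤ) + 1) = n + m + 1 by ring]
    rw [abs_le] at *
    constructor <;> linarith [this.1, this.2, ih.1, ih.2]

lemma lip_of_step' (H : ℤ → ℤ) (h : ∀ n, |H (n + 1) - H n| ≤ 1) (n m : ℤ) (hnm : n ≤ m) :
    |(H m : ℝ) - H n| ≤ m - n := by
  have := lip_of_step H h n (m - n).toNat
  rw [show n + ((m - n).toNat : ℤ) = m by omega, show ((m - n).toNat : ℤ) = m - n by omega] at this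
  exact_mod_cast this

lemma slope_R (H : ℤ → ℤ) (K : ℕ) (hs : ∀ n, |H (n + 1) - H n| ≤ 1)
    (hm : ∀ n : ℤ, ∃ N : ℤ, 1 ≤ N ∧ N ≤ K ∧ H (n + N) + H (n - N) = 2 * H n) (R : ℕ) (hR : 1 ≤ R) :
    ∃ θ : ℝ, θ ∈ Set.Icc (-1 : ℝ) 1 ∧ ∀ n : ℤ, -R ≤ n → n ≤ R →
      |(H n : ℝ) - H 0 - θ * n| ≤ 4 * K := by
  have hRpos : (0:ℝ) < 2 * R := by have : (1:ℝ) ≤ R := by exact_mod_cast hR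
                                   linarith
  set θ : ℝ := ((H R : ℝ) - H (-R)) / (2 * R) with hθ
  have hθR : θ * (2 * R) = (H R : ℝ) - H (-R) := by rw [hθ]; field_simp
  have hθ1 : θ ∈ Set.Icc (-1 : ℝ) 1 := by
    have := lip_of_step' H hs (-R) R (by omega)
    rw [← hθR] at this
    push_cast at this
    rw [abs_le] at this
    constructor <;> nlinarith [this.1, this.2]
  have key : ∀ n : ℤ, -R ≤ n → n ≤ R → |(H n : ℝ) - H (-R) - θ * (n + R)| ≤ 2 * K := by
    intro n hn1 hn2
    rw [abs_le]
    have bl : ∀ n : ℤ, -(R:ℤ) - K ≤ n → n < -R → |(H n : ℝ) - H (-R) - θ * (n + R)| ≤ 2 * K := by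
      intro n h1 h2
      have := lip_of_step' H hs n (-R) (by omega)
      have h3 : (-(R:ℝ) - K) ≤ n := by exact_mod_cast h1
      have h4 : (n:ℝ) < -R := by exact_mod_cast h2
      push_cast at this
      rw [abs_le] at *
      constructor <;> nlinarith [this.1, this.2, hθ1.1, hθ1.2]
    have br : ∀ n : ℤ, R < n → n ≤ (R:ℤ) + K → |(H n : ℝ) - H (-R) - θ * (n + R)| ≤ 2 * K := by
      intro n h1 h2
      have := lip_of_step' H hs R n (by omega)
      have h3 : (n:ℝ) ≤ R + K := by exact_mod_cast h2
      have h4 : (R:ℝ) < n := by exact_mod_cast h1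
      push_cast at this
      rw [abs_le] at *
      constructor <;> nlinarith [this.1, this.2, hθ1.1, hθ1.2]
    constructor
    · have := mid_max (fun n => -((H n : ℝ) - H (-R) - θ * (n + R))) K (by
        intro n
        obtain ⟨N, h1, h2, h3⟩ := hm n
        refine ⟨N, h1, h2, ?_⟩
        have h3' : (H (n + N) : ℝ) + H (n - N) = 2 * H n := by exact_mod_cast h3
        push_cast
        linear_combination -h3') (2 * K) (-R) R
        (fun n h1 h2 => by have := abs_le.1 (bl n h1 h2); linarith [this.1])
        (fun n h1 h2 => by have := abs_le.1 (br n h1 h2); linarith [this.1]) n hn1 hn2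
      linarith
    · exact mid_max (fun n => ((H n : ℝ) - H (-R) - θ * (n + R))) K (by
        intro n
        obtain ⟨N, h1, h2, h3⟩ := hm n
        refine ⟨N, h1, h2, ?_⟩
        have h3' : (H (n + N) : ℝ) + H (n - N) = 2 * H n := by exact_mod_cast h3
        push_cast
        linear_combination h3') (2 * K) (-R) R
        (fun n h1 h2 => by have := abs_le.1 (bl n h1 h2); linarith [this.2])
        (fun n h1 h2 => by have := abs_le.1 (br n h1 h2); linarith [this.2]) n hn1 hn2
  refine ⟨θ, hθ1, fun n h1 h2 => ?_⟩
  have k1 := abs_le.1 (key n h1 h2)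
  have k2 := abs_le.1 (key 0 (by omega) (by omega))
  push_cast at k2
  rw [abs_le]
  constructor <;> linarith [k1.1, k1.2, k2.1, k2.2]

lemma slope_exists (H : ℤ → ℤ) (K : ℕ) (hs : ∀ n, |H (n + 1) - H n| ≤ 1)
    (hm : ∀ n : ℤ, ∃ N : ℤ, 1 ≤ N ∧ N ≤ K ∧ H (n + N) + H (n - N) = 2 * H n) :
    ∃ θ : ℝ, ∀ n : ℤ, |(H n : ℝ) - H 0 - θ * n| ≤ 4 * K := by
  choose t ht using fun R : ℕ => slope_R H K hs hm (R + 1) (by omega)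
  obtain ⟨θ, -, φ, hφ, hlim⟩ := (isCompact_Icc (a := (-1:ℝ)) (b := 1)).tendsto_subseq
    (fun R => (ht R).1)
  refine ⟨θ, fun n => ?_⟩
  have h1 : Filter.Tendsto (fun R => |(H n : ℝ) - H 0 - (t ∘ φ) R * n|) Filter.atTop
      (nhds |(H n : ℝ) - H 0 - θ * n|) := by
    exact ((tendsto_const_nhds).sub (hlim.mul_const _)).abs
  refine le_of_tendsto h1 ?_
  filter_upwards [Filter.eventually_ge_atTop n.natAbs] with R hR
  have := hφ.id_le R
  simp only [id] at this
  refine (ht (φ R)).2 n ?_ ?_ <;> push_cast <;> omega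

lemma gap_int (θ : ℝ) (K : ℕ) : ∃ ε > 0, ∀ N : ℤ, 1 ≤ N → N ≤ K → ∀ z : ℤ,
    |θ * N - z| < ε → θ * N = z := by
  induction K with
  | zero => exact ⟨1, one_pos, fun N h1 h2 => by push_cast at h2; omega⟩
  | succ K ih =>
    obtain ⟨ε, hε, h⟩ := ih
    by_cases hz : ∃ z : ℤ, θ * ((K:ℤ) + 1 : ℤ) = z
    · obtain ⟨w, hw⟩ := hz
      refine ⟨min ε 1, by positivity, fun N h1 h2 z hz => ?_⟩
      by_cases hN : N ≤ K
      · exact h N h1 hN z (lt_of_lt_of_le hz (min_le_left _ _))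
      · have : N = (K:ℤ) + 1 := by push_cast at h2; omega
        subst this
        rw [hw] at hz ⊢
        have := lt_of_lt_of_le hz (min_le_right _ _)
        have h3 : |w - z| < 1 := by exact_mod_cast this
        rw [Int.abs_lt_one_iff] at h3
        have : w = z := by omega
        rw [this]
    · push Not at hz
      set d := |θ * ((K:ℤ) + 1 : ℤ) - round (θ * ((K:ℤ) + 1 : ℤ))| with hd
      have hdpos : 0 < d := abs_pos.2 (sub_ne_zero.2 (hz _))
      refine ⟨min ε d, by positivity, fun N h1 h2 z hz' => ?_⟩
      by_cases hN : N ≤ K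
      · exact h N h1 hN z (lt_of_lt_of_le hz' (min_le_left _ _))
      · have : N = (K:ℤ) + 1 := by push_cast at h2; omega
        subst this
        have h3 := lt_of_lt_of_le hz' (min_le_right _ _)
        have h4 := round_le (θ * ((K:ℤ) + 1 : ℤ)) z
        linarith

lemma slope_rat (H : ℤ → ℤ) (K : ℕ)
    (hm : ∀ n : ℤ, ∃ N : ℤ, 1 ≤ N ∧ N ≤ K ∧ H (n + N) + H (n - N) = 2 * H n)
    (θ B : ℝ) (hθ : ∀ n : ℤ, |(H n : ℝ) - H 0 - θ * n| ≤ B) : ∃ q : ℚ, θ = q := by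
  obtain ⟨ε, hε, hgap⟩ := gap_int θ K
  set G : ℤ → ℝ := fun n => (H n : ℝ) - H 0 - θ * n with hG
  have hbdd : BddAbove (Set.range G) := ⟨B, by rintro _ ⟨n, rfl⟩; exact (abs_le.1 (hθ n)).2⟩
  obtain ⟨_, ⟨n, rfl⟩, hn⟩ := exists_lt_of_lt_csSup (Set.range_nonempty G)
    (show sSup (Set.range G) - ε < sSup (Set.range G) by linarith)
  have hle : ∀ m, G m ≤ sSup (Set.range G) := fun m => le_csSup hbdd ⟨m, rfl⟩
  obtain ⟨N, h1, h2, h3⟩ := hm n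
  have h3' : (H (n + N) : ℝ) + H (n - N) = 2 * H n := by exact_mod_cast h3
  have h4 : G (n + N) + G (n - N) = 2 * G n := by
    simp only [hG]; push_cast; linear_combination h3'
  have h5 : |θ * N - (H (n + N) - H n : ℤ)| < ε := by
    have : θ * N - (H (n + N) - H n : ℤ) = G n - G (n + N) := by
      simp only [hG]; push_cast; ring
    rw [this, abs_lt]
    constructor <;> linarith [hle (n + N), hle (n - N)]
  have h6 := hgap N h1 h2 _ h5
  refine ⟨((H (n + N) - H n : ℤ) : ℚ) / N, ?_⟩
  have hN : (N:ℝ) ≠ 0 := by exact_mod_cast (by omega : N ≠ 0)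
  push_cast at h6 ⊢
  field_simp
  linarith

/-- two-valued rigidity -/
lemma two_val_const (f : ℤ → ℤ) (u v : ℤ) (_huv : u ≠ v) (hf : ∀ i, f i = u ∨ f i = v)
    (hr : ∀ i, ∃ r : ℤ, 1 ≤ r ∧ f (i + r) = f i ∧ f (i - r) = f i ∧
      ∀ t, 0 < t → t < r → f (i + t) ≠ f (i - t)) : ∀ i, f (i + 1) = f i := by
  intro i
  by_contra hne
  have key : ∀ t : ℕ, (f (i + 1 + t) = f (i + 1)) ∧ f (i - t) = f i := by
    intro t
    induction t using Nat.strong_induction_on with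
    | _ t ih =>
      rcases Nat.eq_zero_or_pos t with h0 | hpos
      · subst h0; simp
      obtain ⟨r, hr1, hra, hrb, hrc⟩ := hr i
      obtain ⟨r', hr1', hra', hrb', hrc'⟩ := hr (i + 1)
      -- `f (i+1+t)`
      have hA : f (i + 1 + t) = f (i + 1) := by
        by_cases hlt : (t:ℤ) < r'
        · have h1 := hrc' t (by omega) hlt
          have h2 : f (i + 1 - t) = f i := by
            have := (ih (t - 1) (by omega)).2
            rwa [show i - ((t - 1 : ℕ) : ℤ) = i + 1 - t by omega] at this
          rcases hf (i + 1 + t) with h | h <;> rcases hf (i + 1) with h' | h' <;>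
            rcases hf i with h'' | h'' <;> simp_all
        · rcases eq_or_lt_of_le (not_lt.1 hlt) with h | h
          · rw [← h]; exact hra'
          · exfalso
            have h2 := (ih (r' - 1).toNat (by omega)).2
            rw [show i - (((r' - 1).toNat : ℕ) : ℤ) = i + 1 - r' by omega] at h2
            rw [hrb'] at h2
            exact hne h2
      refine ⟨hA, ?_⟩
      have hle : ∀ s : ℕ, s ≤ t → f (i + 1 + s) = f (i + 1) := by
        intro s hs
        rcases eq_or_lt_of_le hs with h | h
        · rw [h]; exact hA
        · exact (ih s h).1
      by_cases hlt : (t:ℤ) < r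
      · have h1 := hrc t (by omega) hlt
        have h2 : f (i + t) = f (i + 1) := by
          have := hle (t - 1) (by omega)
          rwa [show i + 1 + ((t - 1 : ℕ) : ℤ) = i + t by omega] at this
        rcases hf (i - t) with h | h <;> rcases hf (i + 1) with h' | h' <;>
            rcases hf i with h'' | h'' <;> simp_all
      · exfalso
        have h2 := hle (r - 1).toNat (by omega)
        rw [show i + 1 + (((r - 1).toNat : ℕ) : ℤ) = i + r by omega] at h2
        rw [hra] at h2
        exact hne h2.symm
  obtain ⟨r, hr1, hra, hrb, hrc⟩ := hr i
  have h2 := (key (r - 1).toNat).1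
  rw [show i + 1 + (((r - 1).toNat : ℕ) : ℤ) = i + r by omega, hra] at h2
  exact hne h2.symm

theorem mid_structure (H : ℤ → ℤ) (K : ℕ) (hs : ∀ n, |H (n + 1) - H n| ≤ 1) (hm : MidProp H K) :
    ∃ Q : ℕ, 1 ≤ Q ∧ (∀ n j : ℤ, |H (n + j) + H (n - j) - 2 * H n| ≤ 1) ∧
      (∀ n j : ℤ, (Q : ℤ) ∣ j → H (n + j) + H (n - j) - 2 * H n = 0) ∧
      ∃ n0 : ℤ, ∀ j : ℤ, ¬ (Q : ℤ) ∣ j → H (n0 + j) + H (n0 - j) - 2 * H n0 = -1 := by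
  have hm' : ∀ n : ℤ, ∃ N : ℤ, 1 ≤ N ∧ N ≤ K ∧ H (n + N) + H (n - N) = 2 * H n := by
    intro n
    obtain ⟨N, h1, h2, h3, -⟩ := hm n
    exact ⟨N, h1, h2, h3⟩
  obtain ⟨θ, hθ⟩ := slope_exists H K hs hm'
  obtain ⟨q, hq⟩ := slope_rat H K hm' θ _ hθ
  set Q : ℤ := (q.den : ℤ) with hQ
  set P : ℤ := q.num with hP
  have hQpos : 0 < Q := by rw [hQ]; exact_mod_cast q.den_pos
  have hθQ : θ * Q = P := by
    rw [hq, hQ, hP]; exact_mod_cast Rat.mul_den_eq_num q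
  have hcop : IsCoprime Q P := by
    rw [Int.isCoprime_iff_gcd_eq_one, hQ, hP, Int.gcd_comm]
    simpa [Int.gcd] using q.reduced
  set W : ℤ → ℤ := fun n => Q * H n - P * n with hW
  have hWb : ∀ n, W n ≤ Q * H 0 + Q * (4 * K) := by
    intro n
    have h1 := (abs_le.1 (hθ n)).2
    have hQr : (0:ℝ) < Q := by exact_mod_cast hQpos
    have h2 : (W n : ℝ) ≤ Q * H 0 + Q * (4 * K) := by
      simp only [hW]; push_cast; rw [← hθQ]; nlinarith
    exact_mod_cast h2
  obtain ⟨M, ⟨n0, hn0⟩, hM⟩ := Int.exists_greatest_of_bdd (P := fun z => ∃ n, W n = z)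
    ⟨_, by rintro z ⟨n, rfl⟩; exact hWb n⟩ ⟨W 0, 0, rfl⟩
  have hWM : ∀ n, W n ≤ M := fun n => hM _ ⟨n, rfl⟩
  -- congruence
  have hcong : ∀ x y : ℤ, Q ∣ W x - W y → Q ∣ x - y := by
    intro x y hxy
    have : Q ∣ P * (x - y) := by
      have h2 : P * (x - y) = Q * (H x - H y) - (W x - W y) := by simp only [hW]; ring
      rw [h2]; exact dvd_sub (dvd_mul_right _ _) hxy
    exact hcop.dvd_of_dvd_mul_left this
  have hcong' : ∀ x y : ℤ, Q ∣ x - y → Q ∣ W x - W y := by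
    intro x y hxy
    have h2 : W x - W y = Q * (H x - H y) - P * (x - y) := by simp only [hW]; ring
    rw [h2]; exact dvd_sub (dvd_mul_right _ _) (hxy.mul_left _)
  have hloc : ∀ n, ∃ N : ℤ, 1 ≤ N ∧ W (n + N) + W (n - N) = 2 * W n ∧
      ∃ δ : ℤ, (δ = 1 ∨ δ = -1) ∧ ∀ j : ℤ, 0 < j → j < N → W (n + j) + W (n - j) = 2 * W n + Q * δ := by
    intro n
    obtain ⟨N, h1, h2, h3, δ, hδ, h4⟩ := hm n
    refine ⟨N, h1, ?_, δ, hδ, fun j hj1 hj2 => ?_⟩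
    · simp only [hW]; linear_combination Q * h3
    · simp only [hW]; linear_combination Q * h4 j hj1 hj2
  have hmaxstep : ∀ n, W n = M → ∃ N : ℤ, 1 ≤ N ∧ W (n + N) = M ∧ W (n - N) = M ∧
      ∀ j : ℤ, 0 ≤ j → j ≤ N → M - Q ≤ W (n + j) ∧ M - Q ≤ W (n - j) := by
    intro n hn
    obtain ⟨N, h1, h2, δ, hδ, h3⟩ := hloc n
    have ha := hWM (n + N)
    have hb := hWM (n - N)
    refine ⟨N, h1, by omega, by omega, fun j hj0 hjN => ?_⟩
    rcases eq_or_lt_of_le hj0 with h | h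
    · subst h; simp only [add_zero, sub_zero, hn]; omega
    rcases eq_or_lt_of_le hjN with h' | h'
    · subst h'; omega
    have h4 := h3 j h h'
    have hc := hWM (n + j)
    have hd := hWM (n - j)
    rcases hδ with hδ | hδ <;> subst hδ <;> omega
  have hlow : ∀ x, M - Q ≤ W x := by
    have aux : ∀ d : ℕ, ∀ n, W n = M → ∀ j : ℤ, 0 ≤ j → j ≤ d → M - Q ≤ W (n + j) ∧ M - Q ≤ W (n - j) := by
      intro d
      induction d with
      | zero =>
        intro n hn j h1 h2
        have : j = 0 := by push_cast at h2; omega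
        subst this; simp only [add_zero, sub_zero, hn]; omega
      | succ d ih =>
        intro n hn j h1 h2
        obtain ⟨N, k1, k2, k3, k4⟩ := hmaxstep n hn
        by_cases hj : j ≤ N
        · exact k4 j h1 hj
        · have a1 := (ih (n + N) k2 (j - N) (by omega) (by push_cast at h2; omega)).1
          have a2 := (ih (n - N) k3 (j - N) (by omega) (by push_cast at h2; omega)).2
          rw [show n + N + (j - N) = n + j by ring] at a1
          rw [show n - N - (j - N) = n - j by ring] at a2
          exact ⟨a1, a2⟩
    intro x
    rcases le_total n0 x with h | h
    · have := (aux (x - n0).toNat n0 hn0 (x - n0) (by omega) (by omega)).1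
      rwa [show n0 + (x - n0) = x by ring] at this
    · have := (aux (n0 - x).toNat n0 hn0 (n0 - x) (by omega) (by omega)).2
      rwa [show n0 - (n0 - x) = x by ring] at this
  have hext : ∀ z, Q ∣ z - M → M - Q ≤ z → z ≤ M → z = M ∨ z = M - Q := by
    rintro z ⟨c, hc⟩ h1 h2
    have hc1 : c ≤ 0 := by by_contra h; nlinarith
    have hc2 : -1 ≤ c := by by_contra h; nlinarith
    have : c = 0 ∨ c = -1 := by omega
    rcases this with h | h <;> subst h
    · left; linarith
    · right; linarith
  set f : ℤ → ℤ := fun i => W (n0 + Q * i) with hf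
  have hf2 : ∀ i, f i = M ∨ f i = M - Q := by
    intro i
    refine hext _ ?_ (hlow _) (hWM _)
    rw [← hn0]
    exact hcong' _ _ ⟨i, by ring⟩
  have hfc : ∀ i, f (i + 1) = f i := by
    refine two_val_const f M (M - Q) (by omega) hf2 fun i => ?_
    obtain ⟨N, h1, h2, δ, hδ, h3⟩ := hloc (n0 + Q * i)
    have e1 : W (n0 + Q * i + N) = W (n0 + Q * i) ∧ W (n0 + Q * i - N) = W (n0 + Q * i) := by
      have a1 := hWM (n0 + Q * i + N)
      have a2 := hWM (n0 + Q * i - N)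
      have a3 := hlow (n0 + Q * i + N)
      have a4 := hlow (n0 + Q * i - N)
      have a5 := hf2 i
      simp only [hf] at a5
      omega
    obtain ⟨r, hr⟩ := hcong _ _ (by rw [e1.1, sub_self]; exact dvd_zero _ :
      Q ∣ W (n0 + Q * i + N) - W (n0 + Q * i))
    have hr' : N = Q * r := by linarith
    subst hr'
    have hr1 : 1 ≤ r := by by_contra h; nlinarith
    refine ⟨r, hr1, ?_, ?_, ?_⟩
    · simp only [hf]; rw [← e1.1]; congr 1; ring
    · simp only [hf]; rw [← e1.2]; congr 1; ring
    · intro t ht1 ht2 heq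
      have h4 := h3 (Q * t) (by positivity) (by nlinarith)
      rw [show n0 + Q * i + Q * t = n0 + Q * (i + t) by ring,
        show n0 + Q * i - Q * t = n0 + Q * (i - t) by ring] at h4
      have a5 := hf2 i
      have a6 := hf2 (i + t)
      simp only [hf] at a5 a6 heq
      rcases hδ with hδ | hδ <;> subst hδ <;> omega
  have hfM : ∀ i, f i = M := by
    intro i
    have h0 : f 0 = M := by simp only [hf, mul_zero, add_zero, hn0]
    induction i using Int.induction_on with
    | zero => exact h0
    | succ i ih => rw [hfc, ih]
    | pred i ih => rw [← ih, ← hfc]; congr 1; ring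
  have hlow' : ∀ x, M - Q < W x := by
    intro x
    rcases eq_or_lt_of_le (hlow x) with h | h
    · exfalso
      obtain ⟨i, hi⟩ := hcong x n0 (by rw [← h, hn0]; exact ⟨-1, by ring⟩)
      have := hfM i
      simp only [hf] at this
      rw [← hi, show n0 + (x - n0) = x by ring] at this
      omega
    · exact h
  have hper : ∀ x y, Q ∣ x - y → W x = W y := by
    intro x y hxy
    obtain ⟨c, hc⟩ := hcong' x y hxy
    have a1 := hlow' x
    have a2 := hlow' y
    have a3 := hWM x
    have a4 := hWM y
    have hc1 : c < 1 := by by_contra h; nlinarith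
    have hc2 : -1 < c := by by_contra h; nlinarith
    have : c = 0 := by omega
    subst this; linarith
  have hE : ∀ n j, Q * (H (n + j) + H (n - j) - 2 * H n) = W (n + j) + W (n - j) - 2 * W n := by
    intro n j; simp only [hW]; ring
  refine ⟨q.den, q.den_pos, ?_, ?_, n0, ?_⟩
  · intro n j
    have h1 := hE n j
    have a1 := hlow' (n + j)
    have a2 := hlow' (n - j)
    have a3 := hWM (n + j)
    have a4 := hWM (n - j)
    have a5 := hlow' n
    have a6 := hWM n
    rw [abs_le]
    constructor
    · by_contra h; nlinarith
    · by_contra h; nlinarith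
  · intro n j hj
    have h1 := hE n j
    rw [hper (n + j) n (by simpa using hj), hper (n - j) n (by simpa using hj)] at h1
    have : Q * (H (n + j) + H (n - j) - 2 * H n) = 0 := by rw [h1]; ring
    rcases mul_eq_zero.1 this with h | h
    · omega
    · exact h
  · intro j hj
    have h1 := hE n0 j
    have b1 : W (n0 + j) ≠ M := by
      intro h
      apply hj
      have := hcong (n0 + j) n0 (by rw [h, hn0]; simp)
      simpa using this
    have a1 := hlow' (n0 + j)
    have a2 := hlow' (n0 - j)
    have a3 := hWM (n0 + j)
    have a4 := hWM (n0 - j)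
    have a3' : W (n0 + j) < M := lt_of_le_of_ne a3 b1
    have l1 : -2 < H (n0 + j) + H (n0 - j) - 2 * H n0 := by by_contra h; nlinarith
    have l2 : H (n0 + j) + H (n0 - j) - 2 * H n0 < 0 := by by_contra h; nlinarith
    omega

/-- signed symmetric coefficient -/
def dd (a : ℤ → ℤ) (n : ℤ) (k : ℕ) : ℤ := a n * (a (n + k) + (-1) ^ k * a (n - k))

def LexHyp (a : ℤ → ℤ) (K0 : ℕ) : Prop :=
  (∀ n, |a n| ≤ 1) ∧ ∀ n, a n ≠ 0 → dd a n 1 ≤ 0 ∧ (dd a n 1 = 0 → dd a n 2 ≤ -1) ∧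
    (dd a n 1 = 0 → dd a n 2 = -1 →
      (∀ K, 3 ≤ K → (∀ j, 3 ≤ j → j < K → dd a n j = 0) → dd a n K ≤ 0) ∧
      ∃ K, 3 ≤ K ∧ K ≤ K0 ∧ dd a n K ≠ 0)

def reflA (a : ℤ → ℤ) (m : ℤ) : ℤ := (-1) ^ m.natAbs * a (-m)

lemma neg_pow_natAbs (m : ℤ) : ((-1 : ℤ)) ^ m.natAbs = if Even m then 1 else -1 := by
  split_ifs with h
  · exact (Int.natAbs_even.2 h).neg_one_pow
  · exact (Int.natAbs_odd.2 (Int.not_even_iff_odd.1 h)).neg_one_pow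

lemma neg_pow_nat (m : ℕ) : ((-1 : ℤ)) ^ m = if Even (m:ℤ) then 1 else -1 := by
  have := neg_pow_natAbs m
  simpa using this

lemma dd_refl (a : ℤ → ℤ) (n : ℤ) (k : ℕ) : dd (reflA a) n k = dd a (-n) k := by
  unfold dd reflA
  rw [neg_pow_natAbs, neg_pow_natAbs, neg_pow_natAbs, neg_pow_nat]
  rw [show -(n + (k:ℤ)) = -n - k by ring, show -(n - (k:ℤ)) = -n + k by ring]
  by_cases h1 : Even n <;> by_cases h2 : Even (k:ℤ) <;>
    simp only [Int.even_add, Int.even_sub, h1, h2, if_true, if_false, iff_true, iff_false, not_true, iff_self] <;> ring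

lemma reflA_ne (a : ℤ → ℤ) (n : ℤ) : reflA a n ≠ 0 ↔ a (-n) ≠ 0 := by
  unfold reflA
  rw [neg_pow_natAbs]
  split_ifs <;> simp

lemma LexHyp.refl {a : ℤ → ℤ} {K0 : ℕ} (h : LexHyp a K0) : LexHyp (reflA a) K0 := by
  refine ⟨fun n => ?_, fun n hn => ?_⟩
  · unfold reflA
    rw [abs_mul, abs_pow]; simpa using h.1 (-n)
  · have := h.2 (-n) ((reflA_ne a n).1 hn)
    simpa only [dd_refl] using this

lemma abs1 {z : ℤ} (h : |z| ≤ 1) : z = 0 ∨ z = 1 ∨ z = -1 := by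
  rw [abs_le] at h; omega

lemma opp_of {x y : ℤ} (hx : |x| ≤ 1) (hy : |y| ≤ 1) (hx0 : x ≠ 0) (hy0 : y ≠ 0) (h : ¬ y = x) :
    y = -x := by
  rw [abs_le] at *; omega

lemma opp_of2 {x y : ℤ} (hx : |x| ≤ 1) (hy : |y| ≤ 1) (h : x * (0 + (-1) ^ 2 * y) ≤ -1) :
    y = -x := by
  rcases abs1 hx with e | e | e <;> subst e <;> rcases abs1 hy with e | e | e <;> subst e <;>
    norm_num at *

lemma opp_of3 {x y : ℤ} (hx : |x| ≤ 1) (hy : |y| ≤ 1) (h : x * (x + (-1) ^ 2 * y) ≤ -1) :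
    False := by
  rcases abs1 hx with e | e | e <;> subst e <;> rcases abs1 hy with e | e | e <;> subst e <;>
    norm_num at *

lemma same_adj {a : ℤ → ℤ} {K0 : ℕ} (h : LexHyp a K0) (n : ℤ) (hn : a n ≠ 0)
    (h1 : a (n + 1) = a n) : False := by
  have step : ∀ m, a m ≠ 0 → a (m + 1) = a m → a (m - 1) = a m := by
    intro m hm hm1
    have := (h.2 m hm).1
    simp only [dd, pow_one, Nat.cast_one, hm1] at this
    rcases abs1 (h.1 m) with e | e | e <;> rcases abs1 (h.1 (m - 1)) with e' | e' | e' <;>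
      simp_all
  have e1 := step n hn h1
  have e2 := step (n - 1) (by rw [e1]; exact hn) (by rw [sub_add_cancel, e1])
  rw [show n - 1 - 1 = n - 2 by ring, e1] at e2
  have h0 := (h.2 n hn).2.1
  simp only [dd, pow_one, Nat.cast_one, h1, e1] at h0
  have := h0 (by ring)
  push_cast at this
  rw [e2] at this
  rcases abs1 (h.1 n) with e | e | e <;> rcases abs1 (h.1 (n + 2)) with e' | e' | e' <;>
      simp_all

lemma no_adj {a : ℤ → ℤ} {K0 : ℕ} (h : LexHyp a K0) (n : ℤ) (hn : a n ≠ 0) : a (n + 1) = 0 := by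
  by_contra h1
  by_cases he : a (n + 1) = a n
  · exact same_adj h n hn he
  · have he' : a (n + 1) = - a n := by
      rcases abs1 (h.1 n) with e | e | e <;> rcases abs1 (h.1 (n + 1)) with e' | e' | e' <;>
        simp_all
    refine same_adj h.refl (-(n + 1)) (by rw [reflA_ne, neg_neg]; exact h1) ?_
    unfold reflA
    rw [neg_pow_natAbs, neg_pow_natAbs, neg_neg, show -(-(n + 1) + 1) = n by ring, he']
    by_cases hp : Even n <;> simp [Int.even_add, parity_simps, hp]

lemma same_gap {a : ℤ → ℤ} {K0 : ℕ} (h : LexHyp a K0) (d : ℕ) (hd : 1 ≤ d)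
    (ih : ∀ d' : ℕ, 1 ≤ d' → d' < d → ∀ n, a n ≠ 0 → a (n + d') ≠ 0 →
      (∀ j : ℕ, 0 < j → j < d' → a (n + j) = 0) → Even d' ∧ a (n + d') = - a n)
    (n : ℤ) (hn : a n ≠ 0) (hnd : a (n + d) = a n) (hz : ∀ j : ℕ, 0 < j → j < d → a (n + j) = 0) :
    False := by
  have hsq : a n * a n = 1 := by
    rcases abs1 (h.1 n) with e | e | e <;> simp_all
  have hp1 : a (n + 1) = 0 := no_adj h n hn
  have hm1 : a (n - 1) = 0 := by
    by_contra hc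
    have := no_adj h (n - 1) hc
    rw [sub_add_cancel] at this
    exact hn this
  have hd1 : d ≠ 1 := by
    rintro rfl
    push_cast at hnd
    rw [hp1] at hnd; exact hn hnd.symm
  obtain ⟨-, h2, h3⟩ := h.2 n hn
  have z1 : dd a n 1 = 0 := by simp [dd, hp1, hm1]
  have h2 := h2 z1
  have hd2 : d ≠ 2 := by
    rintro rfl
    push_cast at hnd
    simp only [dd, Nat.cast_ofNat, hnd] at h2
    exact opp_of3 (h.1 _) (h.1 _) h2
  have hp2 : a (n + 2) = 0 := hz 2 (by omega) (by omega)
  have hm2 : a (n - 2) = - a n := by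
    simp only [dd, Nat.cast_ofNat, hp2] at h2
    exact opp_of2 (h.1 _) (h.1 _) h2
  have z2 : dd a n 2 = -1 := by
    simp only [dd, Nat.cast_ofNat, hp2, hm2]; linear_combination -hsq
  obtain ⟨h3, -⟩ := h3 z1 z2
  by_cases hex : ∃ k : ℕ, 3 ≤ k ∧ k ≤ d ∧ a (n - k) ≠ 0
  · classical
    have hk := Nat.find_spec hex
    have hmin := fun m => Nat.find_min hex (m := m)
    set k := Nat.find hex with hkdef
    obtain ⟨hk3, hkd, hka⟩ := hk
    have hzero : ∀ j : ℕ, 3 ≤ j → j < k → a (n - j) = 0 := by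
      intro j hj1 hj2
      by_contra hc
      exact hmin j hj2 ⟨hj1, by omega, hc⟩
    have hg := ih (k - 2) (by omega) (by omega) (n - k) hka
      (by rw [show n - (k:ℤ) + ((k - 2 : ℕ) : ℤ) = n - 2 by omega, hm2]; exact neg_ne_zero.2 hn)
      (by
        intro j hj1 hj2
        have := hzero (k - j) (by omega) (by omega)
        rwa [show n - ((k - j : ℕ) : ℤ) = n - k + j by omega] at this)
    rw [show n - (k:ℤ) + ((k - 2 : ℕ) : ℤ) = n - 2 by omega, hm2] at hg
    have hke : Even k := by
      have := hg.1
      rw [Nat.even_sub (by omega)] at this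
      simpa using this
    have hak : a (n - k) = a n := by linarith [hg.2]
    have := h3 k hk3 (by
      intro j hj1 hj2
      simp only [dd, hzero j hj1 hj2, hz j (by omega) (by omega)]; ring)
    simp only [dd, hke.neg_one_pow, hak, one_mul] at this
    rcases eq_or_lt_of_le hkd with e | e
    · rw [e, hnd] at this; nlinarith
    · rw [hz k (by omega) e] at this; nlinarith
  · push Not at hex
    have := h3 d (by omega) (by
      intro j hj1 hj2
      simp only [dd, hex j hj1 (by omega), hz j (by omega) (by omega)]; ring)
    simp only [dd, hex d (by omega) le_rfl, hnd] at this
    nlinarith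

lemma good_gap (K0 : ℕ) (d : ℕ) : 1 ≤ d → ∀ (a : ℤ → ℤ), LexHyp a K0 → ∀ n, a n ≠ 0 → a (n + d) ≠ 0 →
      (∀ j : ℕ, 0 < j → j < d → a (n + j) = 0) → Even d ∧ a (n + d) = - a n := by
  induction d using Nat.strong_induction_on with
  | _ d ih =>
    intro hd a h n hn hnd hz
    have ih' : ∀ a, LexHyp a K0 → ∀ d' : ℕ, 1 ≤ d' → d' < d → ∀ n, a n ≠ 0 → a (n + d') ≠ 0 →
      (∀ j : ℕ, 0 < j → j < d' → a (n + j) = 0) → Even d' ∧ a (n + d') = - a n :=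
      fun a h d' h1 h2 => ih d' h2 h1 a h
    by_cases he : a (n + d) = a n
    · exact (same_gap h d hd (ih' a h) n hn he hz).elim
    have he' : a (n + d) = - a n := opp_of (h.1 _) (h.1 _) hn hnd he
    refine ⟨?_, he'⟩
    by_contra hodd
    refine same_gap h.refl d hd (ih' _ h.refl) (-(n + d)) (by rw [reflA_ne, neg_neg]; exact hnd) ?_ ?_
    · unfold reflA
      have hodd' : ¬ Even (d:ℤ) := by simpa using hodd
      rw [neg_pow_natAbs, neg_pow_natAbs, neg_neg, show -(-(n + (d:ℤ)) + d) = n by ring, he',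
        show -(n + (d:ℤ)) + d = -n by ring]
      by_cases hp : Even n <;> simp [Int.even_add, hp, hodd]
    · intro j hj1 hj2
      by_contra hc
      have := (reflA_ne a _).1 hc
      apply this
      have := hz (d - j) (by omega) (by omega)
      rwa [show n + ((d - j : ℕ) : ℤ) = -(-(n + (d:ℤ)) + j) by omega] at this

lemma run_sum {a : ℤ → ℤ} {K0 : ℕ} (h : LexHyp a K0) (n : ℤ) (hn : a n ≠ 0) (m : ℕ) :
    ∃ l : ℕ, l ≤ m ∧ Even l ∧ a (n + l) ≠ 0 ∧ (∀ j : ℕ, l < j → j ≤ m → a (n + j) = 0) ∧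
      ((∑ j ∈ Finset.range (m + 1), a (n + j) = a n ∧ a (n + l) = a n) ∨
       (∑ j ∈ Finset.range (m + 1), a (n + j) = 0 ∧ a (n + l) = - a n)) := by
  induction m with
  | zero => exact ⟨0, le_rfl, by simp, by simpa using hn, by intros; omega, by simp⟩
  | succ m ih =>
    obtain ⟨l, hl, hle, hla, hz, hsum⟩ := ih
    rw [Finset.sum_range_succ]
    by_cases h0 : a (n + ((m + 1 : ℕ) : ℤ)) = 0
    · refine ⟨l, by omega, hle, hla, ?_, by rw [h0, add_zero]; exact hsum⟩
      intro j hj1 hj2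
      rcases Nat.lt_or_ge j (m + 1) with hj | hj
      · exact hz j hj1 (by omega)
      · rw [show j = m + 1 by omega]; exact h0
    · have hg := good_gap K0 (m + 1 - l) (by omega) a h (n + l) hla
        (by rw [show n + (l:ℤ) + ((m + 1 - l : ℕ) : ℤ) = n + ((m + 1 : ℕ) : ℤ) by omega]; exact h0)
        (by
          intro j hj1 hj2
          have := hz (l + j) (by omega) (by omega)
          rwa [show n + ((l + j : ℕ) : ℤ) = n + l + j by omega] at this)
      rw [show n + (l:ℤ) + ((m + 1 - l : ℕ) : ℤ) = n + ((m + 1 : ℕ) : ℤ) by omega] at hg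
      refine ⟨m + 1, le_rfl, ?_, h0, by intros; omega, ?_⟩
      · have := hg.1.add hle
        rwa [show m + 1 - l + l = m + 1 by omega] at this
      · rw [hg.2]
        rcases hsum with ⟨s1, s2⟩ | ⟨s1, s2⟩
        · right; rw [s1, s2]; simp
        · left; rw [s1, s2]; simp

lemma parity_of {a : ℤ → ℤ} {K0 : ℕ} (h : LexHyp a K0) (n m : ℤ) (hn : a n ≠ 0) (hm : a m ≠ 0) :
    Even (m - n) := by
  have aux : ∀ n m : ℤ, n ≤ m → a n ≠ 0 → a m ≠ 0 → Even (m - n) := by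
    intro n m hnm hn hm
    obtain ⟨l, hl, hle, -, hz, -⟩ := run_sum h n hn (m - n).toNat
    have : l = (m - n).toNat := by
      by_contra hc
      have := hz (m - n).toNat (by omega) le_rfl
      rw [show n + ((m - n).toNat : ℤ) = m by omega] at this
      exact hm this
    have h2 : (m - n) = (l : ℤ) := by omega
    rw [h2]; exact_mod_cast hle
  rcases le_total n m with hh | hh
  · exact aux n m hh hn hm
  · have := aux m n hh hm hn
    rw [← neg_sub]; exact this.neg

lemma sum_le_one {a : ℤ → ℤ} {K0 : ℕ} (h : LexHyp a K0) (m : ℕ) :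
    ∀ n, |∑ j ∈ Finset.range m, a (n + j)| ≤ 1 := by
  induction m with
  | zero => simp
  | succ m ih =>
    intro n
    by_cases hn : a n = 0
    · rw [Finset.sum_range_succ']
      have := ih (n + 1)
      simp only [Nat.cast_zero, add_zero, hn]
      have e : ∑ j ∈ Finset.range m, a (n + ((j + 1 : ℕ) : ℤ)) =
          ∑ j ∈ Finset.range m, a (n + 1 + (j : ℤ)) :=
        Finset.sum_congr rfl fun j _ => by push_cast; congr 1; ring
      rw [e]; exact this
    · obtain ⟨l, -, -, -, -, hs⟩ := run_sum h n hn m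
      rcases hs with ⟨s, -⟩ | ⟨s, -⟩ <;> rw [s]
      · exact h.1 n
      · simp

lemma antidiff (A : ℤ → ℤ) : ∃ s : ℤ → ℤ, s 0 = 0 ∧ ∀ i, s (i + 1) - s i = A i := by
  refine ⟨fun n => ∑ j ∈ Finset.range n.toNat, A j - ∑ j ∈ Finset.range (-n).toNat, A (-(j:ℤ) - 1), by simp, fun i => ?_⟩
  rcases le_or_gt 0 i with h | h
  · simp only []
    rw [show (i + 1).toNat = i.toNat + 1 by omega, show (-(i + 1)).toNat = 0 by omega,
      show (-i).toNat = 0 by omega, Finset.sum_range_succ]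
    simp [show ((i.toNat : ℕ) : ℤ) = i by omega, h]
  · simp only []
    rw [show (-i).toNat = (-(i + 1)).toNat + 1 by omega, show (i + 1).toNat = 0 by omega,
      show i.toNat = 0 by omega, Finset.sum_range_succ]
    rw [show -(((-(i + 1)).toNat : ℕ) : ℤ) - 1 = i by omega]
    simp

lemma build_H {a : ℤ → ℤ} {K0 : ℕ} (h : LexHyp a K0) (hodd : ∀ i : ℤ, a (2 * i + 1) = 0) :
    ∃ H : ℤ → ℤ, (∀ n, |H (n + 1) - H n| ≤ 1) ∧ (∀ i, H (i + 1) - 2 * H i + H (i - 1) = a (2 * i)) ∧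
      MidProp H (K0 + 2) := by
  obtain ⟨s, hs0, hs⟩ := antidiff (fun i => a (2 * (i + 1)))
  obtain ⟨H, -, hH⟩ := antidiff s
  have hsum : ∀ (j : ℤ) (m : ℕ), s (j + m) - s j = ∑ l ∈ Finset.range (2 * m), a (2 * j + 1 + l) := by
    intro j m
    induction m with
    | zero => simp
    | succ m ih =>
      rw [show 2 * (m + 1) = 2 * m + 1 + 1 by ring, Finset.sum_range_succ, Finset.sum_range_succ, ← ih]
      have h1 := hs (j + m)
      have h2 := hodd (j + m)
      push_cast
      rw [show 2 * j + 1 + 2 * (m:ℤ) = 2 * (j + m) + 1 by ring, h2,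
        show 2 * j + 1 + (2 * (m:ℤ) + 1) = 2 * (j + m + 1) by ring, ← h1,
        show j + ((m:ℤ) + 1) = j + m + 1 by ring]
      ring
  have hs1' : ∀ i j : ℤ, j ≤ i → |s i - s j| ≤ 1 := by
    intro i j hij
    have := hsum j (i - j).toNat
    rw [show j + ((i - j).toNat : ℤ) = i by omega] at this
    rw [this]
    exact sum_le_one h _ _
  have hs1 : ∀ i j : ℤ, |s i - s j| ≤ 1 := by
    intro i j
    rcases le_total j i with hh | hh
    · exact hs1' i j hh
    · rw [abs_sub_comm]; exact hs1' j i hh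
  have hA : ∀ i, H (i + 1) - 2 * H i + H (i - 1) = a (2 * i) := by
    intro i
    have h1 := hH i
    have h2 := hH (i - 1)
    have h3 := hs (i - 1)
    simp only [sub_add_cancel] at h1 h2 h3
    linarith
  refine ⟨H, fun n => ?_, hA, fun n => ?_⟩
  · rw [hH]
    have := hs1 n 0
    rwa [hs0, sub_zero] at this
  by_cases h0 : a (2 * n) = 0
  · refine ⟨1, le_rfl, by push_cast; omega, ?_, 1, Or.inl rfl, fun j h1 h2 => by omega⟩
    have := hA n
    rw [h0] at this; linarith
  set x := a (2 * n) with hx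
  have hx1 : x = 1 ∨ x = -1 := by
    rcases abs1 (h.1 (2 * n)) with e | e | e
    · exact absurd e h0
    · left; exact e
    · right; exact e
  have hxx : x * x = 1 := by rcases hx1 with e | e <;> rw [e] <;> rfl
  set D : ℕ → ℤ := fun j => x * (s (n + j) - s (n - 1 - j)) with hD
  set E : ℕ → ℤ := fun j => x * (H (n + j) + H (n - j) - 2 * H n) with hE
  have hED : ∀ j, E (j + 1) = E j + D j := by
    intro j
    have h1 := hH (n + j)
    have h2 := hH (n - 1 - j)
    simp only [hE, hD]
    rw [← h1, ← h2]
    push_cast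
    rw [show n + ((j:ℤ) + 1) = n + j + 1 by ring, show n - ((j:ℤ) + 1) = n - 1 - j by ring,
      show n - 1 - (j:ℤ) + 1 = n - j by ring]
    ring
  have hDd : ∀ j, D (j + 1) = D j + dd a (2 * n) (2 * (j + 1)) := by
    intro j
    have h1 := hs (n + j)
    have h2 := hs (n - 1 - j - 1)
    simp only [hD, dd]
    rw [Even.neg_one_pow (even_two_mul _)]
    push_cast
    rw [show 2 * n + 2 * ((j:ℤ) + 1) = 2 * (n + j + 1) by ring,
      show 2 * n - 2 * ((j:ℤ) + 1) = 2 * (n - 1 - j - 1 + 1) by ring, ← h1, ← h2,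
      show n + ((j:ℤ) + 1) = n + j + 1 by ring, show n - 1 - ((j:ℤ) + 1) = n - 1 - j - 1 by ring,
      show n - 1 - (j:ℤ) - 1 + 1 = n - 1 - j by ring]
    ring
  have hD1 : ∀ j, |D j| ≤ 1 := by
    intro j
    simp only [hD]
    rw [abs_mul]
    rcases hx1 with e | e <;> rw [e] <;> simpa using hs1 _ _
  have hE0 : E 0 = 0 := by simp only [hE]; push_cast; ring_nf
  have hD0 : D 0 = 1 := by
    simp only [hD]
    have h3 := hs (n - 1)
    simp only [sub_add_cancel] at h3
    push_cast
    rw [add_zero, sub_zero, h3, ← hx, hxx]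
  have hdodd : ∀ j, dd a (2 * n) (2 * j + 1) = 0 := by
    intro j
    simp only [dd]
    push_cast
    rw [show 2 * n + (2 * (j:ℤ) + 1) = 2 * (n + j) + 1 by ring,
      show 2 * n - (2 * (j:ℤ) + 1) = 2 * (n - j - 1) + 1 by ring, hodd, hodd]
    ring
  have finish : ∀ j : ℕ, 1 ≤ j → j ≤ K0 + 1 → (∀ i, 1 ≤ i → i < j → D i = 0) → D j = -1 →
      ∃ N : ℤ, 1 ≤ N ∧ N ≤ (K0 + 2 : ℕ) ∧ H (n + N) + H (n - N) = 2 * H n ∧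
    ∃ δ : ℤ, (δ = 1 ∨ δ = -1) ∧ ∀ j : ℤ, 0 < j → j < N → H (n + j) + H (n - j) = 2 * H n + δ := by
    intro j hj1 hjK hz hj
    have hE1 : ∀ i, 1 ≤ i → i ≤ j → E i = 1 := by
      intro i hi
      induction i, hi using Nat.le_induction with
      | base => intro _; rw [hED, hE0, hD0]; rfl
      | succ i hi ih => intro hij; rw [hED, ih (by omega), hz i hi (by omega)]; rfl
    have hE2 : E (j + 1) = 0 := by rw [hED, hE1 j hj1 le_rfl, hj]; rfl
    refine ⟨j + 1, by omega, by push_cast; omega, ?_, x, hx1, fun i hi1 hi2 => ?_⟩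
    · simp only [hE] at hE2
      push_cast at hE2
      rcases mul_eq_zero.1 hE2 with e | e
      · exact absurd e h0
      · linarith
    · have := hE1 i.toNat (by omega) (by omega)
      simp only [hE] at this
      rw [show ((i.toNat : ℕ) : ℤ) = i by omega] at this
      have h5 := congrArg (fun z => x * z) this
      simp only [← mul_assoc, hxx] at h5
      linarith
  obtain ⟨-, h2, h3⟩ := h.2 (2 * n) h0
  have z1 : dd a (2 * n) 1 = 0 := hdodd 0
  have h2 := h2 z1
  have e1 := hDd 0
  rw [hD0] at e1
  norm_num at e1
  have b1 := abs_le.1 (hD1 1)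
  by_cases h22 : dd a (2 * n) 2 = -1
  · obtain ⟨h3, K, hK3, hK0, hKne⟩ := h3 z1 h22
    rw [h22] at e1
    have hex : ∃ j : ℕ, 2 ≤ j ∧ dd a (2 * n) (2 * j) ≠ 0 := by
      rcases Nat.even_or_odd' K with ⟨c, hc | hc⟩
      · exact ⟨c, by omega, by rw [← hc]; exact hKne⟩
      · exact absurd (hdodd c) (by rw [← hc]; exact hKne)
    classical
    have hk := Nat.find_spec hex
    have hmin := fun m => Nat.find_min hex (m := m)
    have hminK : Nat.find hex ≤ K0 := by
      rcases Nat.even_or_odd' K with ⟨c, hc | hc⟩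
      · have := Nat.find_min' hex (m := c) ⟨by omega, by rw [← hc]; exact hKne⟩
        omega
      · exact absurd (hdodd c) (by rw [← hc]; exact hKne)
    set k := Nat.find hex with hkdef
    have hz : ∀ i, 2 ≤ i → i < k → dd a (2 * n) (2 * i) = 0 := by
      intro i hi1 hi2
      by_contra hc
      exact hmin i hi2 ⟨hi1, hc⟩
    have hDz : ∀ i, 1 ≤ i → i < k → D i = 0 := by
      intro i hi
      induction i, hi using Nat.le_induction with
      | base => intro _; rw [e1]; rfl
      | succ i hi ih => intro hij; rw [hDd, ih (by omega), hz (i + 1) (by omega) hij]; rfl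
    have hle := h3 (2 * k) (by omega) (by
      intro j hj1 hj2
      rcases Nat.even_or_odd' j with ⟨c, hc | hc⟩
      · rw [hc]; exact hz c (by omega) (by omega)
      · rw [hc]; exact hdodd c)
    have hDk := hDd (k - 1)
    rw [hDz (k - 1) (by omega) (by omega), show k - 1 + 1 = k by omega] at hDk
    have b2 := abs_le.1 (hD1 k)
    have := hk.2
    exact finish k (by omega) (by omega) hDz (by omega)
  · exact finish 1 le_rfl (by omega) (by intros; omega) (by omega)

lemma lex_seq (α η : ℝ) (hα : 3 < α) (hη : 0 < η) (h : ℕ → ℝ) (d : ℕ → ℤ)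
    (hh : ∀ k, |h k| < 1) (hr : ∀ k, h (k+1) = α * h k - d (k+1))
    (h0 : α^2 * h 0 ≤ -1 - α^2 * η) (K0 : ℕ) (hK0 : 3 ≤ K0) (hK : 1 ≤ α^K0 * η) :
    d 1 ≤ 0 ∧ (d 1 = 0 → d 2 ≤ -1) ∧ (d 1 = 0 → d 2 = -1 →
      (∀ K, 3 ≤ K → (∀ j, 3 ≤ j → j < K → d j = 0) → d K ≤ 0) ∧
      ∃ K, 3 ≤ K ∧ K ≤ K0 ∧ d K ≠ 0) := by
  have hl : ∀ k, -1 < h k := fun k => (abs_lt.1 (hh k)).1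
  have hu : ∀ k, h k < 1 := fun k => (abs_lt.1 (hh k)).2
  have hα2 : 0 < α^2 := by positivity
  have hneg : h 0 < 0 := by
    by_contra hc
    push Not at hc
    have := mul_nonneg hα2.le hc
    have := mul_pos hα2 hη
    linarith
  have e1 := hr 0
  have e2 := hr 1
  norm_num at e1 e2
  refine ⟨?_, ?_, ?_⟩
  · have : (d 1 : ℝ) < 1 := by
      have := hl 1
      nlinarith
    have : d 1 < 1 := by exact_mod_cast this
    omega
  · intro hd
    rw [hd] at e1
    have : (d 2 : ℝ) < 0 := by
      have := hl 2
      push_cast at e1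
      have e3 : α * h 1 = α^2 * h 0 := by rw [e1]; ring
      have := mul_pos hα2 hη
      linarith
    have : d 2 < 0 := by exact_mod_cast this
    omega
  · intro hd hd2
    rw [hd] at e1
    rw [hd2] at e2
    push_cast at e1 e2
    have e3 : α * h 1 = α^2 * h 0 := by rw [e1]; ring
    have key : ∀ m : ℕ, (∀ j, 3 ≤ j → j < m + 3 → d j = 0) → h (m+2) ≤ - (α^(m+2) * η) := by
      intro m
      induction m with
      | zero => intro _; simp only [zero_add]; linarith
      | succ m ih =>
        intro hj
        have i1 := ih (fun j a1 a2 => hj j a1 (by omega))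
        have i2 := hr (m+2)
        rw [hj (m+2+1) (by omega) (by omega)] at i2
        have : h (m+1+2) = α * h (m+2) := by
          rw [show m+1+2 = m+2+1 by ring, i2]; simp
        rw [this]
        calc α * h (m+2) ≤ α * (- (α^(m+2) * η)) := by
              apply mul_le_mul_of_nonneg_left i1; linarith
          _ = _ := by ring
    constructor
    · intro K hK3 hj
      obtain ⟨m, rfl⟩ := Nat.exists_eq_add_of_le' hK3
      have i1 := key m hj
      have i2 := hr (m+2)
      have i3 := hl (m+2+1)
      have : (d (m+2+1) : ℝ) < 1 := by
        have : 0 < α^(m+2) * η := by positivity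
        nlinarith
      have : d (m+2+1) < 1 := by exact_mod_cast this
      have e : m + 3 = m+2+1 := by ring
      rw [e]; omega
    · by_contra hc
      push Not at hc
      obtain ⟨m, rfl⟩ := Nat.exists_eq_add_of_le' hK0
      have i1 := key (m+1) (fun j a1 a2 => hc j a1 (by omega))
      have := hl (m+1+2)
      rw [show m+3 = m+1+2 by ring] at hK
      linarith

theorem lex_of_lt (b : ℤ) (hb : 3 ≤ b) (α : ℝ) (hα2 : α^2 = b*α+1) (hα : 3 < α)
    (e : ℤ → ℝ) (a : ℤ → ℤ) (hrec : ∀ k, e (k+1) = b * e k + e (k-1) - a k)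
    (V : ℝ) (hV : V < b / (1+α^2)) (hbd : ∀ k, |e k| ≤ V) : ∃ K0, LexHyp a K0 := by
  have hα0 : 0 < α := by linarith
  have hαi : α * α⁻¹ = 1 := mul_inv_cancel₀ hα0.ne'
  set r := α⁻¹ with hr
  have hr0 : 0 < r := by positivity
  have hbα : (b:ℝ) = α - r := by
    have : α * (b:ℝ) = α * (α - r) := by linarith [mul_sub α α r]
    exact mul_left_cancel₀ hα0.ne' this
  have hV0 : 0 ≤ V := (abs_nonneg _).trans (hbd 0)
  set L := (b:ℝ) / (1+α^2) with hL
  have hLm : L * (1+α^2) = b := by rw [hL]; field_simp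
  have hLb : L * (α + r) = 1 - r^2 := by
    have : L * (α + r) = r * (L * (1+α^2)) := by
      linear_combination (-L * α) * hαi
    rw [this, hLm, hbα]
    linear_combination hαi
  have hL0 : 0 < L := hV0.trans_lt hV
  have hr3 : r < 1/3 := by nlinarith
  have hVs : 2 * V * (1 + r) < 1 := by
    have h1 : 2 * L * (1+r) < 1 := by
      have h2 : 3 * L ≤ 1 := by nlinarith
      nlinarith
    nlinarith
  set η := (L - V) * (α + r) with hη
  have hη0 : 0 < η := mul_pos (by linarith) (by linarith)
  have hVη : V * (α + r) = 1 - r^2 - η := by rw [hη, ← hLb]; ring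
  obtain ⟨N, hN⟩ := pow_unbounded_of_one_lt (1/η) (by linarith : 1 < α)
  set K0 := N + 3 with hK0
  have hK : 1 ≤ α^K0 * η := by
    have h1 : 1 ≤ α^N * η := by
      rw [div_lt_iff₀ hη0] at hN; exact hN.le
    have h2 : α^N ≤ α^K0 := pow_le_pow_right₀ (by linarith) (by omega)
    nlinarith
  have hg0 : ∀ n, |(α + r) * e n| ≤ 1 - r^2 - η := by
    intro n
    rw [abs_mul, abs_of_pos (by linarith : 0 < α + r), ← hVη]
    have := hbd n
    nlinarith
  let f : ℤ → ℕ → ℝ := fun n k => e (n+k) + (-1)^k * e (n-k)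
  let c : ℤ → ℕ → ℤ := fun n k => a (n+k) + (-1)^k * a (n-k)
  let g : ℤ → ℕ → ℝ := fun n k => f n (k+1) + r * f n k
  have hf : ∀ n k, f n (k+2) = b * f n (k+1) + f n k - c n (k+1) := by
    intro n k
    have h1 := hrec (n+k+1)
    have h2 := hrec (n-k-1)
    rw [show n + (k:ℤ)+1+1 = n+(k+2) by ring, show n + (k:ℤ)+1-1 = n+k by ring] at h1
    rw [show n - (k:ℤ)-1+1 = n-k by ring, show n - (k:ℤ)-1-1 = n-(k+2) by ring] at h2
    simp only [f, c]
    push_cast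
    rw [show n + ((k:ℤ)+1) = n+k+1 by ring, show n - ((k:ℤ)+1) = n-k-1 by ring]
    rw [h1]
    have e2 : e (n-(k+2)) = e (n-k) - b * e (n-k-1) + a (n-k-1) := by linarith
    rw [e2]
    ring
  have hg : ∀ n k, g n (k+1) = α * g n k - c n (k+1) := by
    intro n k
    simp only [g]
    rw [show k+1+1 = k+2 by ring, hf, hbα]
    linear_combination (- f n k) * hαi
  have hgz : ∀ n, g n 0 = (α + r) * e n - a n := by
    intro n
    have h1 := hrec n
    simp only [g, f]
    norm_num
    rw [h1, hbα]; ring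
  have hfb : ∀ n k, |f n k| ≤ 2 * V := by
    intro n k
    have h1 := hbd (n+k)
    have h2 := hbd (n-k)
    have h3 : |(-1:ℝ)^k * e (n-k)| = |e (n-k)| := by simp [abs_mul]
    calc |f n k| ≤ |e (n+k)| + |(-1:ℝ)^k * e (n-k)| := abs_add_le _ _
      _ ≤ _ := by rw [h3]; linarith
  have hgb : ∀ n k, |g n k| < 1 := by
    intro n k
    have h1 := hfb n k
    have h2 := hfb n (k+1)
    calc |g n k| ≤ |f n (k+1)| + |r * f n k| := abs_add_le _ _
      _ = |f n (k+1)| + r * |f n k| := by rw [abs_mul, abs_of_pos hr0]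
      _ ≤ 2*V + r * (2*V) := by nlinarith
      _ < 1 := by linarith
  have ha : ∀ n, |a n| ≤ 1 := by
    intro n
    have h1 := hgb n 0
    rw [hgz] at h1
    have h2 := abs_lt.1 h1
    have h3 := abs_le.1 (hg0 n)
    have h4 : (a n : ℝ) < 2 := by nlinarith
    have h5 : (-2:ℝ) < a n := by nlinarith
    have h6 : a n < 2 := by exact_mod_cast h4
    have h7 : -2 < a n := by exact_mod_cast h5
    rw [abs_le]; omega
  refine ⟨K0, ha, ?_⟩
  intro n hn
  have hsq : (a n : ℝ) * a n = 1 ∧ |(a n:ℝ)| = 1 := by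
    have := abs_le.1 (ha n)
    have : a n = 1 ∨ a n = -1 := by omega
    rcases this with h | h <;> rw [h] <;> norm_num
  apply lex_seq α η hα hη0 (fun k => a n * g n k) (dd a n) _ _ _ K0 (by omega) hK
  · intro k
    rw [abs_mul, hsq.2, one_mul]; exact hgb n k
  · intro k
    rw [hg]
    simp only [dd, c]
    push_cast
    ring
  · simp only [hgz]
    have h1 : (a n:ℝ) * ((α + r) * e n) ≤ 1 - r^2 - η := by
      refine (le_abs_self _).trans ?_
      rw [abs_mul, hsq.2, one_mul]; exact hg0 n
    have h2 : (a n:ℝ) * ((α + r) * e n - a n) ≤ - r^2 - η := by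
      rw [mul_sub, hsq.1]; linarith
    have h3 : α^2 * r^2 = 1 := by rw [← mul_pow, hαi, one_pow]
    have h4 : 0 < α^2 := by positivity
    calc _ ≤ α^2 * (- r^2 - η) := mul_le_mul_of_nonneg_left h2 h4.le
      _ = _ := by linear_combination (-1 : ℝ) * h3

lemma growth_nonpos (β C : ℝ) (hβ : 1 < β) (z : ℕ → ℝ) (h : ∀ k, β * z k ≤ z (k+1))
    (hC : ∀ k, z k ≤ C) : z 0 ≤ 0 := by
  by_contra hc
  push Not at hc
  have h1 : ∀ k, β^k * z 0 ≤ z k := by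
    intro k
    induction k with
    | zero => simp
    | succ k ih =>
      calc β^(k+1) * z 0 = β * (β^k * z 0) := by ring
        _ ≤ β * z k := mul_le_mul_of_nonneg_left ih (by linarith)
        _ ≤ _ := h k
  obtain ⟨N, hN⟩ := pow_unbounded_of_one_lt (C / z 0) hβ
  rw [div_lt_iff₀ hc] at hN
  linarith [h1 N, hC N]

lemma w_rec (B β : ℝ) (hβ : 1 < β) (Q : ℕ) (hQ : 1 ≤ Q) (j : ℕ) :
    B * (1/(β-1) - β^((j+1)%Q)/(β^Q-1)) =
      β * (B * (1/(β-1) - β^(j%Q)/(β^Q-1))) - B * (if Q ∣ (j+1) then 0 else 1) := by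
  have h1 : β - 1 ≠ 0 := by linarith
  have h2 : β^Q - 1 ≠ 0 := by
    have : 1 < β^Q := one_lt_pow₀ hβ (by omega)
    linarith
  split_ifs with h
  · have e1 : (j+1)%Q = 0 := Nat.mod_eq_zero_of_dvd h
    have e2 : j % Q + 1 = Q := by
      obtain ⟨t, ht⟩ := h
      have ht0 : t ≠ 0 := by rintro rfl; simp at ht
      obtain ⟨u, rfl⟩ := Nat.exists_eq_succ_of_ne_zero ht0
      have : j = (Q - 1) + Q * u := by
        rw [Nat.succ_eq_add_one, mul_add] at ht; omega
      rw [this, Nat.add_mul_mod_self_left, Nat.mod_eq_of_lt (by omega)]; omega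
    rw [e1]
    have e3 : β^Q = β * β^(j%Q) := by
      conv_lhs => rw [← e2]
      ring
    rw [e3] at h2 ⊢
    field_simp
    ring
  · have e1 : (j+1)%Q = j%Q + 1 := by
      have hne : (j+1)%Q ≠ 0 := fun h' => h (Nat.dvd_of_mod_eq_zero h')
      have hlt : j % Q < Q := Nat.mod_lt _ (by omega)
      have : (j+1)%Q = (j%Q+1)%Q := by simp
      rcases Nat.lt_or_ge (j%Q+1) Q with h3 | h3
      · rw [this, Nat.mod_eq_of_lt h3]
      · have : j%Q + 1 = Q := by omega
        rw [‹(j+1)%Q = (j%Q+1)%Q›, this, Nat.mod_self] at hne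
        exact absurd rfl hne
    rw [e1, pow_succ]
    field_simp
    ring

theorem value_eq (b : ℤ) (hb : 3 ≤ b) (β : ℝ) (hβ : 1 < β) (hβb : (β - 1)^2 = b^2 * β)
    (e : ℤ → ℝ) (a : ℤ → ℤ) (hrec : ∀ k, e (k+1) = b * e k + e (k-1) - a k)
    (V : ℝ) (hbd : ∀ k, |e k| ≤ V) (hatt : ∃ k, |e k| = V)
    (hodd : ∀ i : ℤ, a (2*i+1) = 0) (H : ℤ → ℤ)
    (hH : ∀ i, H (i+1) - 2*H i + H (i-1) = a (2*i)) (Q : ℕ) (hQ : 1 ≤ Q)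
    (hE1 : ∀ n j : ℤ, |H (n+j)+H (n-j)-2*H n| ≤ 1)
    (hE0 : ∀ n j : ℤ, (Q:ℤ) ∣ j → H (n+j)+H (n-j)-2*H n = 0)
    (n0 : ℤ) (hn0 : ∀ j : ℤ, ¬ (Q:ℤ) ∣ j → H (n0+j)+H (n0-j)-2*H n0 = -1) :
    V = b * β * (β^(Q-1) - 1) / ((β+1) * (β^Q - 1)) := by
  have hβ0 : 0 < β := by linarith
  set s := β⁻¹ with hs
  have hs0 : 0 < s := by positivity
  have hβs : β * s = 1 := mul_inv_cancel₀ hβ0.ne'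
  have hs1 : s < 1 := by nlinarith
  have hb2 : β + s = b^2 + 2 := by
    have : β * (β + s) = β * (b^2+2) := by linear_combination hβb + hβs
    exact mul_left_cancel₀ hβ0.ne' this
  have hbR : (3:ℝ) ≤ b := by exact_mod_cast hb
  have hb0 : (0:ℝ) < b := by linarith
  have hV0 : 0 ≤ V := (abs_nonneg _).trans (hbd 0)
  let X : ℤ → ℝ := fun i => e (2*i)
  have hXb : ∀ i, |X i| ≤ V := fun i => hbd _
  have hodde : ∀ i, b * e (2*i+1) = X (i+1) - X i := by
    intro i
    have h1 := hrec (2*i+1)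
    rw [hodd] at h1
    simp only [X]
    rw [show 2*(i+1) = 2*i+1+1 by ring, h1, show 2*i+1-1 = 2*i by ring]
    push_cast; ring
  have hXr : ∀ i, X (i+1) - (β+s) * X i + X (i-1) = - b * (H (i+1) - 2*H i + H (i-1)) := by
    intro i
    have h1 := hodde i
    have h2 := hodde (i-1)
    have h3 := hrec (2*i)
    have h4 : ((H (i+1) - 2*H i + H (i-1) : ℤ):ℝ) = a (2*i) := by rw [hH]
    push_cast at h4
    rw [h4, hb2]
    rw [show 2*(i-1)+1 = 2*i-1 by ring, show i-1+1 = i by ring] at h2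
    simp only [X] at *
    linear_combination (-1)*h1 + h2 + (b:ℝ) * h3
  let E : ℤ → ℕ → ℤ := fun i j => H (i+j) + H (i-j) - 2*H i
  let U : ℤ → ℕ → ℝ := fun i j => X (i+j) + X (i-j) + b * E i j
  let T : ℤ → ℕ → ℝ := fun i j => U i (j+1) - s * U i j
  let χ : ℕ → ℝ := fun j => if Q ∣ (j+1) then 0 else 1
  let B : ℝ := (b:ℝ)^3
  have hB : 0 < B := by positivity
  let w : ℕ → ℝ := fun j => B * (1/(β-1) - β^(j%Q)/(β^Q-1))
  have hw : ∀ j, w (j+1) = β * w j - B * χ j := fun j => w_rec B β hβ Q hQ j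
  have hU : ∀ i j, U i (j+2) - (β+s) * U i (j+1) + U i j = - B * E i (j+1) := by
    intro i j
    have h1 := hXr (i+j+1)
    have h2 := hXr (i-j-1)
    simp only [U, E, B]
    push_cast
    rw [show i+(j:ℤ)+1+1 = i+(j+2) by ring, show i+(j:ℤ)+1-1 = i+j by ring] at h1
    rw [show i-(j:ℤ)-1+1 = i-j by ring, show i-(j:ℤ)-1-1 = i-(j+2) by ring] at h2
    rw [show i + ((j:ℤ)+1) = i+j+1 by ring, show i - ((j:ℤ)+1) = i-j-1 by ring]
    rw [hb2] at h1 h2 ⊢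
    linear_combination h1 + h2
  have hT : ∀ i j, T i (j+1) = β * T i j - B * E i (j+1) := by
    intro i j
    have h1 := hU i j
    simp only [T]
    rw [show j+1+1 = j+2 by ring]
    linear_combination h1 + (U i j) * hβs
  have hT0 : ∀ i, T i 0 = (β - s) * X i := by
    intro i
    have h1 := hXr i
    simp only [T, U, E]
    norm_num
    linear_combination h1
  have hEb : ∀ i j, |(E i (j+1) : ℝ)| ≤ χ j := by
    intro i j
    simp only [χ]
    split_ifs with h
    · have : E i (j+1) = 0 := hE0 i ((j+1:ℕ):ℤ) (by exact_mod_cast h)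
      rw [this]; simp
    · have := hE1 i ((j+1:ℕ):ℤ)
      have h2 : |E i (j+1)| ≤ 1 := this
      exact_mod_cast h2
  have hEn : ∀ j, (E n0 (j+1) : ℝ) = - χ j := by
    intro j
    simp only [χ]
    split_ifs with h
    · have : E n0 (j+1) = 0 := hE0 n0 ((j+1:ℕ):ℤ) (by exact_mod_cast h)
      rw [this]; simp
    · have : E n0 (j+1) = -1 := hn0 ((j+1:ℕ):ℤ) (by exact_mod_cast h)
      rw [this]; simp
  have hEb1 : ∀ i j, |(E i j : ℝ)| ≤ 1 := by
    intro i j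
    have h2 : |E i j| ≤ 1 := hE1 i j
    exact_mod_cast h2
  have hUb : ∀ i j, |U i j| ≤ 2*V + b := by
    intro i j
    have h1 := hXb (i+j)
    have h2 := hXb (i-j)
    have h3 := hEb1 i j
    rw [abs_le] at *
    simp only [U]
    constructor <;> nlinarith
  have hTb : ∀ i j, |T i j| ≤ 2*(2*V+b) := by
    intro i j
    have h1 := hUb i j
    have h2 := hUb i (j+1)
    calc |T i j| ≤ |U i (j+1)| + |s * U i j| := abs_sub _ _
      _ = |U i (j+1)| + s * |U i j| := by rw [abs_mul, abs_of_pos hs0]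
      _ ≤ _ := by nlinarith [abs_nonneg (U i j)]
  have hpQ : 1 < β^Q := one_lt_pow₀ hβ (by omega)
  obtain ⟨C, hC⟩ : ∃ C, ∀ j, |w j| ≤ C := by
    refine ⟨B * (1/(β-1) + β^Q/(β^Q-1)), fun j => ?_⟩
    have h1 : 0 ≤ 1/(β-1) := by apply div_nonneg <;> linarith
    have h2 : 0 ≤ β^(j%Q)/(β^Q-1) := by
      apply div_nonneg
      · positivity
      · linarith
    have h3 : β^(j%Q)/(β^Q-1) ≤ β^Q/(β^Q-1) := by
      apply div_le_div_of_nonneg_right _ (by linarith)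
      exact pow_le_pow_right₀ hβ.le (Nat.mod_lt _ (by omega)).le
    simp only [w]
    rw [abs_mul, abs_of_pos hB]
    apply mul_le_mul_of_nonneg_left _ hB.le
    rw [abs_le]; constructor <;> linarith
  have hle : ∀ i, |T i 0| ≤ w 0 := by
    intro i
    have := growth_nonpos β (2*(2*V+b) + C) hβ (fun j => |T i j| - w j) ?_ ?_
    · simpa using this
    · intro j
      rw [hT, hw]
      have h1 : |β * T i j| - |B * (E i (j+1):ℝ)| ≤ |β * T i j - B * E i (j+1)| :=
        abs_sub_abs_le_abs_sub _ _
      rw [abs_mul, abs_mul, abs_of_pos hβ0, abs_of_pos hB] at h1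
      have h2 := mul_le_mul_of_nonneg_left (hEb i j) hB.le
      linarith
    · intro j
      have := hTb i j
      have := (abs_le.1 (hC j)).1
      linarith
  have hz : ∀ j, T n0 (j+1) + w (j+1) = β * (T n0 j + w j) := by
    intro j
    rw [hT, hw, hEn]; ring
  have hzb : ∀ j, |T n0 j + w j| ≤ 2*(2*V+b) + C := fun j =>
    (abs_add_le _ _).trans (add_le_add (hTb _ _) (hC _))
  have heq : T n0 0 = - w 0 := by
    have h1 := growth_nonpos β (2*(2*V+b) + C) hβ (fun j => T n0 j + w j)
      (fun j => (hz j).ge) (fun j => (le_abs_self _).trans (hzb j))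
    have h2 := growth_nonpos β (2*(2*V+b) + C) hβ (fun j => -(T n0 j + w j))
      (fun j => by rw [hz]; linarith) (fun j => (neg_le_abs _).trans (hzb j))
    linarith
  have hw0 : 0 ≤ w 0 := (abs_nonneg _).trans (hle 0)
  have hβs0 : 0 < β - s := by linarith
  have hXM : ∀ i, |X i| ≤ w 0 / (β - s) := by
    intro i
    have := hle i
    rw [hT0, abs_mul, abs_of_pos hβs0] at this
    rw [le_div_iff₀ hβs0]; linarith
  have hXn : w 0 / (β - s) = |X n0| := by
    rw [hT0] at heq
    rw [div_eq_iff hβs0.ne', ← abs_of_nonneg hw0, ← abs_neg, ← heq, abs_mul, abs_of_pos hβs0]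
    ring
  have hVM : V = w 0 / (β - s) := by
    apply le_antisymm
    · obtain ⟨k, hk⟩ := hatt
      rw [← hk]
      rcases Int.even_or_odd' k with ⟨c, rfl | rfl⟩
      · exact hXM c
      · have h1 := hodde c
        have h2 : b * |e (2*c+1)| ≤ 2 * (w 0 / (β-s)) := by
          rw [show b * |e (2*c+1)| = |b * e (2*c+1)| by rw [abs_mul, abs_of_pos hb0], h1]
          have := hXM c
          have := hXM (c+1)
          have := abs_sub (X (c+1)) (X c)
          linarith
        nlinarith [abs_nonneg (e (2*c+1))]
    · rw [hXn]; exact hXb n0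
  rw [hVM]
  have hQ' : β^Q = β * β^(Q-1) := by
    obtain ⟨m, rfl⟩ := Nat.exists_eq_add_of_le' hQ
    simp [pow_succ]; ring
  simp only [w, B, Nat.zero_mod, pow_zero]
  have h1 : β - 1 ≠ 0 := by linarith
  have h2 : β^Q - 1 ≠ 0 := by linarith
  have h3 : β + 1 ≠ 0 := by linarith
  have h4 : β - s ≠ 0 := hβs0.ne'
  have h6 : β * (β - s) = (β-1)*(β+1) := by linear_combination (-1)*hβs
  rw [hQ'] at h2 ⊢
  set y := β^(Q-1)
  have h5 : (1/(β-1) - 1/(β*y-1)) = β * (y-1) / ((β-1)*(β*y-1)) := by field_simp; ring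
  have h8 : β - s = (β-1)*(β+1)/β := by rw [eq_div_iff hβ0.ne']; linarith
  have h9 : (b:ℝ)^3 = b * ((β-1)^2/β) := by rw [hβb]; field_simp
  rw [h5, h8, h9]
  field_simp

def IsLS (u : ℕ → ℝ) (v : ℝ) : Prop :=
  (∀ c, v < c → ∀ᶠ n in Filter.atTop, u n ≤ c) ∧ (∀ c, c < v → ∃ᶠ n in Filter.atTop, c ≤ u n)

lemma IsLS.limsup_eq {u : ℕ → ℝ} {v C : ℝ} (hb : ∀ n, |u n| ≤ C) (h : IsLS u v) :
    Filter.limsup u Filter.atTop = v := by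
  have b1 : Filter.IsBoundedUnder (· ≤ ·) Filter.atTop u :=
    Filter.isBoundedUnder_of ⟨C, fun n => (abs_le.1 (hb n)).2⟩
  have b2 : Filter.IsBoundedUnder (· ≥ ·) Filter.atTop u :=
    Filter.isBoundedUnder_of ⟨-C, fun n => (abs_le.1 (hb n)).1⟩
  apply le_antisymm
  · apply le_of_forall_gt_imp_ge_of_dense
    intro c hc
    exact Filter.limsup_le_of_le b2.isCoboundedUnder_le (h.1 c hc)
  · apply le_of_forall_lt_imp_le_of_dense
    intro c hc
    exact Filter.le_limsup_of_frequently_le (h.2 c hc) b1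

lemma isLS_limsup {u : ℕ → ℝ} {C : ℝ} (hb : ∀ n, |u n| ≤ C) :
    IsLS u (Filter.limsup u Filter.atTop) := by
  have b1 : Filter.IsBoundedUnder (· ≤ ·) Filter.atTop u :=
    Filter.isBoundedUnder_of ⟨C, fun n => (abs_le.1 (hb n)).2⟩
  have b2 : Filter.IsBoundedUnder (· ≥ ·) Filter.atTop u :=
    Filter.isBoundedUnder_of ⟨-C, fun n => (abs_le.1 (hb n)).1⟩
  constructor
  · intro c hc
    exact (Filter.eventually_lt_of_limsup_lt hc b1).mono fun n hn => hn.le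
  · intro c hc
    exact (Filter.frequently_lt_of_lt_limsup b2.isCoboundedUnder_le hc).mono fun n hn => hn.le

lemma dist_bd (x : ℝ) : |distNearestInt x| ≤ 1/2 := by
  unfold distNearestInt
  rw [abs_abs]; exact abs_sub_round x

theorem limit_seq (b : ℤ) (α : ℝ) (hα2 : α^2 = b*α+1) (ξ V : ℝ) (hV : limsupDist α ξ = V) :
    ∃ (e : ℤ → ℝ) (a : ℤ → ℤ), (∀ k, e (k+1) = b * e k + e (k-1) - a k) ∧
      (∀ k, |e k| ≤ V) ∧ |e 0| = V := by
  let ε : ℕ → ℝ := fun n => ξ * α^n - round (ξ * α^n)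
  have hε : ∀ n, |ε n| ≤ 1/2 := fun n => abs_sub_round _
  have hLS : IsLS (fun n => |ε n|) V := by
    have := isLS_limsup (u := fun n => distNearestInt (ξ * α ^ n)) (C := 1/2) (fun n => dist_bd _)
    rw [← hV]; exact this
  have hcl : MapClusterPt V Filter.atTop (fun n => |ε n|) := by
    rw [mapClusterPt_iff_frequently]
    intro s hs
    obtain ⟨δ, hδ, hs⟩ := Metric.mem_nhds_iff.1 hs
    have h1 := hLS.1 (V + δ/2) (by linarith)
    have h2 := hLS.2 (V - δ/2) (by linarith)
    refine (h2.and_eventually h1).mono fun n hn => hs ?_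
    rw [Metric.mem_ball, Real.dist_eq, abs_lt]
    constructor <;> linarith [hn.1, hn.2]
  rw [mapClusterPt_iff_ultrafilter] at hcl
  obtain ⟨𝒰, hU, hlim⟩ := hcl
  have hex : ∀ k : ℤ, ∃ x, Filter.Tendsto (fun n : ℕ => ε ((n+k : ℤ).toNat)) 𝒰 (nhds x) := by
    intro k
    have hc : IsCompact (Set.Icc (-(1/2:ℝ)) (1/2)) := isCompact_Icc
    obtain ⟨x, -, hx⟩ := hc.ultrafilter_le_nhds (𝒰.map (fun n : ℕ => ε ((n+k : ℤ).toNat))) (by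
      rw [Filter.le_principal_iff]
      refine Filter.mem_map.2 (Filter.univ_mem' fun n => ?_)
      exact abs_le.1 (hε _))
    exact ⟨x, hx⟩
  choose e he using hex
  have hint : ∀ k, ∃ m : ℤ, (m:ℝ) = b * e k + e (k-1) - e (k+1) := by
    intro k
    have ht : Filter.Tendsto (fun n : ℕ => b * ε ((n+k : ℤ).toNat) + ε ((n+(k-1) : ℤ).toNat)
        - ε ((n+(k+1) : ℤ).toNat)) 𝒰 (nhds (b * e k + e (k-1) - e (k+1))) :=
      ((he k).const_mul _ |>.add (he (k-1))).sub (he (k+1))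
    have hcl := Int.isClosedEmbedding_coe_real.isClosed_range
    refine hcl.mem_of_tendsto ht ?_
    apply hU
    filter_upwards [Filter.eventually_ge_atTop (k.natAbs + 1)] with n hn
    obtain ⟨m, hm⟩ : ∃ m : ℕ, (m:ℤ) = n + (k-1) := ⟨((n:ℤ)+(k-1)).toNat, by omega⟩
    rw [show ((n:ℤ)+k).toNat = m+1 by omega, show ((n:ℤ)+(k-1)).toNat = m by omega,
      show ((n:ℤ)+(k+1)).toNat = m+2 by omega]
    refine ⟨- b * round (ξ * α^(m+1)) - round (ξ * α^m) + round (ξ * α^(m+2)), ?_⟩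
    simp only [ε]
    push_cast
    have : α^(m+2) = b * α^(m+1) + α^m := by
      rw [pow_add, hα2]; ring
    have h2 : ξ * α^(m+2) = b * (ξ * α^(m+1)) + ξ * α^m := by rw [this]; ring
    linear_combination (1:ℝ) * h2
  choose a ha using hint
  refine ⟨e, a, fun k => by rw [ha]; ring, fun k => ?_, ?_⟩
  · apply le_of_forall_gt_imp_ge_of_dense
    intro c hc
    have h1 := hLS.1 c hc
    have hsh : Filter.Tendsto (fun n : ℕ => ((n:ℤ)+k).toNat) Filter.atTop Filter.atTop := by
      rw [Filter.tendsto_atTop]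
      intro B
      filter_upwards [Filter.eventually_ge_atTop (B + k.natAbs)] with n hn
      omega
    have h2 := hU (hsh.eventually h1)
    exact le_of_tendsto (he k).abs h2
  · have h1 : Filter.Tendsto (fun n : ℕ => |ε n|) 𝒰 (nhds |e 0|) := by
      have := (he 0).abs
      simpa using this
    exact tendsto_nhds_unique h1 hlim

noncomputable def valM (b β : ℝ) (m : ℕ) : ℝ := b * β * (β^m - 1) / ((β+1) * (β^(m+1) - 1))

theorem pq_closed (b : ℤ) (hb : 3 ≤ b) (β : ℝ) (hβ : 1 < β) (hβb : (β - 1)^2 = b^2 * β)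
    (p q : ℕ → ℤ)
    (hp0 : p 0 = 0) (hp2 : p 2 = b)
    (hpeven : ∀ n : ℕ, p (2 * n + 4) = (b ^ 2 + 2) * p (2 * n + 2) - p (2 * n))
    (hpodd : ∀ n : ℕ, p (2 * n + 1) = p (2 * n) + p (2 * n + 2))
    (hq0 : q 0 = 1) (hq2 : q 2 = b ^ 2 + 3)
    (hqeven : ∀ n : ℕ, q (2 * n + 4) = (b ^ 2 + 2) * q (2 * n + 2) - q (2 * n))
    (hqodd : ∀ n : ℕ, q (2 * n + 1) = q (2 * n) + q (2 * n + 2)) (n : ℕ) :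
    (p n : ℝ) / q n = valM b β n := by
  have hβ0 : 0 < β := by linarith
  have hb2 : ((b:ℝ)^2 + 2) * β = β^2 + 1 := by linear_combination (-1)*hβb
  -- p_{2n} β^n (β^2-1) = b β (β^{2n}-1)
  have hP : ∀ n : ℕ, (p (2*n) : ℝ) * (β^n * (β^2-1)) = b * β * (β^(2*n) - 1) ∧
      (p (2*(n+1)) : ℝ) * (β^(n+1) * (β^2-1)) = b * β * (β^(2*(n+1)) - 1) := by
    intro n
    induction n with
    | zero => simp [hp0, hp2]; ring
    | succ n ih =>
      refine ⟨ih.2, ?_⟩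
      have h := hpeven n
      have h' : (p (2*(n+1+1)) : ℝ) = (b^2+2) * p (2*(n+1)) - p (2*n) := by
        rw [show 2*(n+1+1) = 2*n+4 by ring, show 2*(n+1) = 2*n+2 by ring]; exact_mod_cast h
      rw [h']
      have e1 : ∀ t : ℝ, t * (β^(n+1+1) * (β^2-1)) = β * (t * (β^(n+1)*(β^2-1))) := by intro t; ring
      rw [sub_mul, e1, mul_assoc ((b:ℝ)^2+2), ih.2, ← mul_assoc β, mul_comm β ((b:ℝ)^2+2), hb2]
      rw [show (p (2*n):ℝ) * (β^(n+1+1) * (β^2-1)) = β^2 * (p (2*n) * (β^n*(β^2-1))) by ring, ih.1]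
      ring
  -- q_{2n} β^n (β-1) = β^{2n+1}-1
  have hQ : ∀ n : ℕ, (q (2*n) : ℝ) * (β^n * (β-1)) = β^(2*n+1) - 1 ∧
      (q (2*(n+1)) : ℝ) * (β^(n+1) * (β-1)) = β^(2*(n+1)+1) - 1 := by
    intro n
    induction n with
    | zero => simp [hq0, hq2]; linear_combination (β-1) * hb2
    | succ n ih =>
      refine ⟨ih.2, ?_⟩
      have h := hqeven n
      have h' : (q (2*(n+1+1)) : ℝ) = (b^2+2) * q (2*(n+1)) - q (2*n) := by
        rw [show 2*(n+1+1) = 2*n+4 by ring, show 2*(n+1) = 2*n+2 by ring]; exact_mod_cast h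
      rw [h']
      have e1 : ∀ t : ℝ, t * (β^(n+1+1) * (β-1)) = β * (t * (β^(n+1)*(β-1))) := by intro t; ring
      rw [sub_mul, e1, mul_assoc ((b:ℝ)^2+2), ih.2, ← mul_assoc β, mul_comm β ((b:ℝ)^2+2), hb2]
      rw [show (q (2*n):ℝ) * (β^(n+1+1) * (β-1)) = β^2 * (q (2*n) * (β^n*(β-1))) by ring, ih.1]
      ring
  have hβ1 : β - 1 ≠ 0 := by linarith
  have hβ2 : β + 1 ≠ 0 := by linarith
  have hβ3 : β^2 - 1 ≠ 0 := by
    rw [show β^2-1 = (β-1)*(β+1) by ring]; positivity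
  have hP' : ∀ n : ℕ, (p (2*n) : ℝ) = b * β * (β^(2*n) - 1) / (β^n * (β^2-1)) := by
    intro n
    rw [eq_div_iff (by positivity)]; exact (hP n).1
  have hQ' : ∀ n : ℕ, (q (2*n) : ℝ) = (β^(2*n+1) - 1) / (β^n * (β-1)) := by
    intro n
    rw [eq_div_iff (by positivity)]; exact (hQ n).1
  have hpos : ∀ n : ℕ, β^(n+1) - 1 ≠ 0 := by
    intro n
    have : 1 < β^(n+1) := one_lt_pow₀ hβ (by omega)
    linarith
  unfold valM
  rcases Nat.even_or_odd' n with ⟨m, rfl | rfl⟩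
  · rw [hP', hQ']
    have := hpos (2*m)
    rw [show β^2-1 = (β-1)*(β+1) by ring]
    field_simp
  · have h1 : (p (2*m+1) : ℝ) = p (2*m) + p (2*(m+1)) := by exact_mod_cast hpodd m
    have h2 : (q (2*m+1) : ℝ) = q (2*m) + q (2*(m+1)) := by exact_mod_cast hqodd m
    have h1' : (p (2*m+1) : ℝ) = b * β * (β+1) * (β^(2*m+1) - 1) / (β^(m+1) * (β^2-1)) := by
      rw [h1, hP', hP']
      field_simp
      ring
    have h2' : (q (2*m+1) : ℝ) = (β+1) * (β^(2*m+1+1) - 1) / (β^(m+1) * (β-1)) := by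
      rw [h2, hQ', hQ']
      field_simp
      ring
    rw [h1', h2']
    have := hpos (2*m+1)
    rw [show β^2-1 = (β-1)*(β+1) by ring]
    field_simp

lemma valM_eq (b β : ℝ) (hβ : 1 < β) (m : ℕ) :
    valM b β m = b / (β+1) * (1 - (β-1) / (β^(m+1) - 1)) := by
  have h1 : β^(m+1) - 1 ≠ 0 := by
    have : 1 < β^(m+1) := one_lt_pow₀ hβ (by omega)
    linarith
  have : β + 1 ≠ 0 := by linarith
  unfold valM
  field_simp
  ring

lemma valM_strictMono (b β : ℝ) (hb : 0 < b) (hβ : 1 < β) : StrictMono (valM b β) := by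
  apply strictMono_nat_of_lt_succ
  intro n
  rw [valM_eq b β hβ, valM_eq b β hβ]
  have h1 : 1 < β^(n+1) := one_lt_pow₀ hβ (by omega)
  have h2 : β^(n+1) < β^(n+1+1) := pow_lt_pow_right₀ hβ (by omega)
  have h3 : (β-1) / (β^(n+1+1) - 1) < (β-1) / (β^(n+1) - 1) :=
    div_lt_div_of_pos_left (by linarith) (by linarith) (by linarith)
  have : 0 < b / (β+1) := by apply div_pos <;> linarith
  apply mul_lt_mul_of_pos_left _ this
  linarith

lemma valM_tendsto (b β : ℝ) (hβ : 1 < β) :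
    Filter.Tendsto (valM b β) Filter.atTop (nhds (b / (β+1))) := by
  have h0 : Filter.Tendsto (fun m : ℕ => β^(m+1) - 1) Filter.atTop Filter.atTop := by
    apply Filter.tendsto_atTop_add_const_right
    exact (tendsto_pow_atTop_atTop_of_one_lt hβ).comp (Filter.tendsto_add_atTop_nat 1)
  have h1 : Filter.Tendsto (fun m : ℕ => (β-1) / (β^(m+1) - 1)) Filter.atTop (nhds 0) :=
    h0.const_div_atTop _
  have h2 := (h1.const_sub 1).const_mul (b/(β+1))
  rw [sub_zero, mul_one] at h2
  refine h2.congr fun m => (valM_eq b β hβ m).symm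

lemma IsLS.perturb {u w δ : ℕ → ℝ} {v : ℝ} (h : IsLS u v) (hd : ∀ n, |u n - w n| ≤ δ n)
    (hδ : Filter.Tendsto δ Filter.atTop (nhds 0)) : IsLS w v := by
  constructor
  · intro c hc
    have h1 := h.1 ((v+c)/2) (by linarith)
    have h2 : ∀ᶠ n in Filter.atTop, δ n < (c-v)/2 := hδ.eventually_lt_const (by linarith)
    filter_upwards [h1, h2] with n a1 a2
    have := (abs_le.1 (hd n)).1
    linarith
  · intro c hc
    have h1 := h.2 ((v+c)/2) (by linarith)
    have h2 : ∀ᶠ n in Filter.atTop, δ n < (v-c)/2 := hδ.eventually_lt_const (by linarith)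
    refine (h1.and_eventually h2).mono fun n hn => ?_
    have := (abs_le.1 (hd n)).2
    linarith [hn.1, hn.2]

lemma abs_le_abs_sub_int (x : ℝ) (hx : |x| ≤ 1/2) (k : ℤ) : |x| ≤ |x - k| := by
  have h := abs_le.1 hx
  rcases lt_trichotomy k 0 with hk | hk | hk
  · have : (k:ℝ) ≤ -1 := by exact_mod_cast (by omega : k ≤ -1)
    rw [abs_of_nonneg (by linarith : 0 ≤ x - k)]
    linarith
  · simp [hk]
  · have : (1:ℝ) ≤ k := by exact_mod_cast hk
    rw [abs_of_nonpos (by linarith : x - k ≤ 0)]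
    linarith

lemma limsup_of_eps (b : ℤ) (α : ℝ) (hα2 : α^2 = b*α+1) (hα : 3 < α) (ε : ℕ → ℝ)
    (hdef : ∀ n, ∃ m : ℤ, ε (n+2) = b * ε (n+1) + ε n - m) (hb : ∀ n, |ε n| ≤ 1/2)
    (v ξ : ℝ) (hv : IsLS (fun n => |ε n|) v) (hξ : ε 1 + ε 0 / α = ξ * (α + 1/α)) :
    limsupDist α ξ = v := by
  have hα0 : 0 < α := by linarith
  set ρ := -1/α with hρ
  have hρα : α * ρ = -1 := by rw [hρ]; field_simp
  have hbρ : (b:ℝ) = α + ρ := by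
    have : α * (b:ℝ) = α * (α + ρ) := by linear_combination hα2 * (-1) - hρα
    exact mul_left_cancel₀ hα0.ne' this
  have hρ2 : ρ^2 = b*ρ+1 := by rw [hbρ]; linear_combination (-1) * hρα
  set ζ := ε 0 - ξ with hζ
  have key : ∀ n, (∃ k : ℤ, ξ * α^n + ζ * ρ^n - ε n = k) ∧
      ∃ k : ℤ, ξ * α^(n+1) + ζ * ρ^(n+1) - ε (n+1) = k := by
    intro n
    induction n with
    | zero =>
      refine ⟨⟨0, by simp [hζ]⟩, ⟨0, ?_⟩⟩
      have : ε 1 + ε 0 * (-ρ) = ξ * (α - ρ) := by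
        rw [hρ]; linear_combination hξ
      simp [hζ]
      linear_combination (-1) * this
    | succ n ih =>
      refine ⟨ih.2, ?_⟩
      obtain ⟨⟨k1, h1⟩, k2, h2⟩ := ih
      obtain ⟨m, hm⟩ := hdef n
      refine ⟨b * k2 + k1 + m, ?_⟩
      push_cast
      rw [← h1, ← h2, show n+1+1 = n+2 by ring, hm, pow_add α n 2, pow_add ρ n 2, hα2, hρ2]
      ring
  have hρ1 : |ρ| < 1 := by
    rw [hρ, abs_div, abs_neg, abs_one, abs_of_pos hα0, div_lt_one hα0]; linarith
  have hLS : IsLS (fun n => distNearestInt (ξ * α^n)) v := by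
    refine hv.perturb (δ := fun n => |ζ| * |ρ|^n) (fun n => ?_) ?_
    · obtain ⟨k, hk⟩ := (key n).1
      have e1 : |ζ * ρ^n| = |ζ| * |ρ|^n := by rw [abs_mul, abs_pow]
      rw [← e1]
      unfold distNearestInt
      have h1 : |ξ * α^n - round (ξ * α^n)| ≤ |ξ * α^n - k| := round_le _ _
      have h2 : |ξ * α^n - k| ≤ |ε n| + |ζ * ρ^n| := by
        rw [show ξ * α^n - k = ε n - ζ * ρ^n by linarith]
        exact abs_sub _ _
      have h3 : |ε n| ≤ |ε n - (round (ξ * α^n) - k : ℤ)| := abs_le_abs_sub_int _ (hb n) _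
      have h4 : |ε n - (round (ξ * α^n) - k : ℤ)| ≤ |ξ * α^n - round (ξ * α^n)| + |ζ * ρ^n| := by
        push_cast
        rw [show ε n - ((round (ξ * α^n) : ℝ) - k) = (ξ * α^n - round (ξ * α^n)) + ζ * ρ^n by linarith]
        exact abs_add_le _ _
      rw [abs_le]
      constructor <;> linarith
    · have := (tendsto_pow_atTop_nhds_zero_of_lt_one (abs_nonneg ρ) hρ1).const_mul |ζ|
      simpa using this
  exact hLS.limsup_eq (C := 1/2) (fun n => dist_bd _)

lemma limsup_of_X (b : ℤ) (hb3 : 3 ≤ b) (α : ℝ) (hα2 : α^2 = b*α+1) (hα : 3 < α) (X : ℕ → ℝ)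
    (hX : ∀ i, ∃ d : ℤ, X (i+2) - (b^2+2) * X (i+1) + X i = - b * d) (hXb : ∀ i, |X i| ≤ 1/2)
    (v ξ : ℝ) (hv0 : 0 ≤ v) (hv : IsLS (fun n => |X n|) v)
    (hξ : (X 1 - X 0) / b + X 0 / α = ξ * (α + 1/α)) :
    limsupDist α ξ = v := by
  have hbR : (3:ℝ) ≤ b := by exact_mod_cast hb3
  have hb0 : (0:ℝ) < b := by linarith
  let ε : ℕ → ℝ := fun n => if n % 2 = 0 then X (n/2) else (X (n/2+1) - X (n/2)) / b
  have he0 : ∀ i, ε (2*i) = X i := by intro i; simp [ε]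
  have he1 : ∀ i, ε (2*i+1) = (X (i+1) - X i)/b := by
    intro i
    simp only [ε]
    rw [if_neg (by omega), show (2*i+1)/2 = i by omega]
  have hodd : ∀ i c, |X i| ≤ c → |X (i+1)| ≤ c → |ε (2*i+1)| ≤ c := by
    intro i c h1 h2
    rw [he1, abs_div, abs_of_pos hb0, div_le_iff₀ hb0]
    have := abs_sub (X (i+1)) (X i)
    have := abs_nonneg (X i)
    nlinarith
  apply limsup_of_eps b α hα2 hα ε _ _ v ξ _ _
  · intro n
    rcases Nat.even_or_odd' n with ⟨i, rfl | rfl⟩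
    · refine ⟨0, ?_⟩
      rw [show 2*i+2 = 2*(i+1) by ring, he0, he0, he1]
      push_cast
      field_simp
      ring
    · obtain ⟨d, hd⟩ := hX i
      refine ⟨d, ?_⟩
      rw [show 2*i+1+2 = 2*(i+1)+1 by ring, show 2*i+1+1 = 2*(i+1) by ring, he0, he1, he1]
      field_simp
      linear_combination hd
  · intro n
    rcases Nat.even_or_odd' n with ⟨i, rfl | rfl⟩
    · rw [he0]; exact hXb i
    · exact hodd i _ (hXb _) (hXb _)
  · constructor
    · intro c hc
      obtain ⟨N, hN⟩ := Filter.eventually_atTop.1 (hv.1 c hc)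
      rw [Filter.eventually_atTop]
      refine ⟨2*N, fun n hn => ?_⟩
      rcases Nat.even_or_odd' n with ⟨i, rfl | rfl⟩
      · change |ε (2*i)| ≤ c
        rw [he0]; exact hN i (by omega)
      · exact hodd i c (hN i (by omega)) (hN (i+1) (by omega))
    · intro c hc
      have h := hv.2 c hc
      rw [Filter.frequently_atTop] at h ⊢
      intro N
      obtain ⟨i, hi, h2⟩ := h N
      exact ⟨2*i, by omega, by change c ≤ |ε (2*i)|; rw [he0]; exact h2⟩
  · rw [← hξ]
    have h1 := he1 0
    have h0 := he0 0
    norm_num at h1 h0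
    rw [h1, h0]

lemma X_rec (b L β s : ℝ) (hβs : β * s = 1) (hb2 : β + s = b^2+2) (hL : L * (β+1) = b)
    (τ : ℕ → ℤ) (F P : ℕ → ℝ) (hF : ∀ i, F i = L * τ i + s * F (i+1))
    (hP : ∀ i, P (i+1) = L * τ i + s * P i) (i : ℕ) :
    ∃ d : ℤ, (F (i+2) - P (i+2)) - (b^2+2) * (F (i+1) - P (i+1)) + (F i - P i) = - b * d := by
  refine ⟨τ (i+1) - τ i, ?_⟩
  have h1 := hF i
  have h2 := hF (i+1)
  have h3 := hP i
  have h4 := hP (i+1)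
  rw [show i+1+1 = i+2 by ring] at h2 h4
  rw [← hb2, ← hL]
  push_cast
  linear_combination (-β) * h2 + h1 - h4 + β * h3 - (F (i+2) - P i) * hβs

theorem real_pq (b : ℤ) (hb3 : 3 ≤ b) (α : ℝ) (hα2 : α^2 = b*α+1) (hα : 3 < α) (m : ℕ) :
    ∃ ξ, limsupDist α ξ = valM b (α^2) m := by
  have hbR : (3:ℝ) ≤ b := by exact_mod_cast hb3
  have hα0 : 0 < α := by linarith
  set β := α^2 with hβ
  have hβ1 : 1 < β := by rw [hβ]; nlinarith
  have hβ0 : 0 < β := by linarith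
  have hβb : (β - 1)^2 = b^2 * β := by linear_combination (β - 1 + b*α) * hα2 - (b:ℝ)^2 * hβ
  set s := β⁻¹ with hs
  have hβs : β * s = 1 := mul_inv_cancel₀ hβ0.ne'
  have hb2 : β + s = b^2 + 2 := by
    have : β * (β + s) = β * (b^2+2) := by linear_combination hβb + hβs
    exact mul_left_cancel₀ hβ0.ne' this
  set L := (b:ℝ) / (β+1) with hLd
  have hL : L * (β+1) = b := by rw [hLd]; field_simp
  have hLpos : 0 < L := by rw [hLd]; positivity
  have hpm : 1 < β^(m+1) := one_lt_pow₀ hβ1 (by omega)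
  set A := L * β / (β^(m+1) - 1) with hA
  have hAm : A * (β^(m+1) - 1) = L * β := by
    rw [hA]; exact div_mul_cancel₀ _ (by linarith)
  have hA0 : 0 < A := by rw [hA]; apply div_pos (by positivity); linarith
  have hval : valM b β m = A * (β^m - 1) := by
    unfold valM
    rw [hA, hLd]
    have : β^(m+1) - 1 ≠ 0 := by linarith
    field_simp
  let F : ℕ → ℝ := fun i => A * β^(i%(m+1))
  let P : ℕ → ℝ := fun i => A * β^(m - i%(m+1))
  let τ : ℕ → ℤ := fun i => if i%(m+1) = m then 1 else 0
  have hmod : ∀ i, i%(m+1) ≠ m → (i+1)%(m+1) = i%(m+1)+1 ∧ i%(m+1) < m := by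
    intro i hi
    have hlt : i % (m+1) < m+1 := Nat.mod_lt _ (by omega)
    refine ⟨?_, by omega⟩
    rw [Nat.add_mod, Nat.mod_eq_of_lt]
    · rcases m with _ | m
      · omega
      · simp
    · rcases m with _ | m
      · omega
      · simp; omega
  have hmod' : ∀ i, i%(m+1) = m → (i+1)%(m+1) = 0 := by
    intro i hi
    have := Nat.div_add_mod i (m+1)
    rw [hi] at this
    have : i + 1 = (m+1) * (i/(m+1) + 1) := by rw [mul_add]; omega
    rw [this]; simp
  have hF : ∀ i, F i = L * τ i + s * F (i+1) := by
    intro i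
    simp only [F, τ]
    split_ifs with h
    · rw [hmod' i h, h]
      have : β * (A * β^m) = β * (L + s * A) := by
        linear_combination hAm - A * hβs
      have := mul_left_cancel₀ hβ0.ne' this
      simp; linarith
    · rw [(hmod i h).1, pow_succ]
      simp
      linear_combination (-A * β^(i%(m+1))) * hβs
  have hP : ∀ i, P (i+1) = L * τ i + s * P i := by
    intro i
    simp only [P, τ]
    split_ifs with h
    · rw [hmod' i h, h]
      have : β * (A * β^m) = β * (L + s * A) := by
        linear_combination hAm - A * hβs
      have := mul_left_cancel₀ hβ0.ne' this
      simp; linarith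
    · rw [(hmod i h).1]
      have h2 := (hmod i h).2
      obtain ⟨t, ht⟩ : ∃ t, m - i%(m+1) = t + 1 := ⟨m - i%(m+1) - 1, by omega⟩
      rw [ht, show m - (i%(m+1)+1) = t by omega, pow_succ]
      simp
      linear_combination (-A * β^t) * hβs
  have hXrec := X_rec (b:ℝ) L β s hβs hb2 hL τ F P hF hP
  have hXb : ∀ i, |F i - P i| ≤ valM b β m := by
    intro i
    rw [hval]
    simp only [F, P]
    have hlt : i % (m+1) < m+1 := Nat.mod_lt _ (by omega)
    have h1 : 1 ≤ β^(i%(m+1)) := one_le_pow₀ hβ1.le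
    have h2 : β^(i%(m+1)) ≤ β^m := pow_le_pow_right₀ hβ1.le (by omega)
    have h3 : 1 ≤ β^(m - i%(m+1)) := one_le_pow₀ hβ1.le
    have h4 : β^(m - i%(m+1)) ≤ β^m := pow_le_pow_right₀ hβ1.le (by omega)
    rw [abs_le]; constructor <;> nlinarith
  have hv0 : 0 ≤ valM b β m := (abs_nonneg _).trans (hXb 0)
  have hvL : valM b β m ≤ L := by
    rw [valM_eq b β hβ1]
    have : 0 ≤ (β-1)/(β^(m+1)-1) := by apply div_nonneg <;> linarith
    nlinarith
  have hL2 : L ≤ 1/2 := by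
    rw [hLd, div_le_iff₀ (by linarith), hα2]; nlinarith
  refine ⟨((F 1 - P 1) - (F 0 - P 0)) / b / (α + 1/α) + (F 0 - P 0) / α / (α+1/α), ?_⟩
  apply limsup_of_X b hb3 α hα2 hα (fun i => F i - P i) hXrec
    (fun i => by have := hXb i; linarith) _ _ hv0
  · constructor
    · intro c hc
      exact Filter.Eventually.of_forall fun i => (hXb i).trans hc.le
    · intro c hc
      rw [Filter.frequently_atTop]
      intro N
      refine ⟨m + (m+1)*N, by nlinarith, ?_⟩
      refine hc.le.trans ?_
      rw [hval]
      simp only [F, P]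
      rw [Nat.add_mul_mod_self_left, Nat.mod_eq_of_lt (by omega), Nat.sub_self, pow_zero]
      refine le_trans (le_of_eq ?_) (le_abs_self _)
      ring
  · have : 0 < α + 1/α := by positivity
    field_simp

lemma F_zero (s M : ℝ) (hs : 0 ≤ s) (L : ℝ) (τ : ℕ → ℤ) (F : ℕ → ℝ)
    (hF : ∀ i, F i = L * τ i + s * F (i+1)) (hM : ∀ i, F i ≤ M) (R : ℕ) :
    ∀ i, (∀ t, t < R → τ (i+t) = 0) → F i ≤ s^R * M := by
  induction R with
  | zero => intro i _; simpa using hM i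
  | succ R ih =>
    intro i h
    have h0 := h 0 (by omega)
    have h1 := ih (i+1) (fun t ht => by rw [show i+1+t = i+(t+1) by ring]; exact h _ (by omega))
    rw [hF i]
    rw [add_zero] at h0
    rw [h0]
    calc L * ((0:ℤ):ℝ) + s * F (i+1) = s * F (i+1) := by simp
      _ ≤ s * (s^R * M) := mul_le_mul_of_nonneg_left h1 hs
      _ = _ := by ring

lemma F_le (s M : ℝ) (hs : 0 ≤ s) (hs1 : s ≤ 1) (L : ℝ) (hL : 0 ≤ L) (τ : ℕ → ℤ)
    (hτ : ∀ i, τ i = 0 ∨ τ i = 1) (F : ℕ → ℝ)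
    (hF : ∀ i, F i = L * τ i + s * F (i+1)) (hM : ∀ i, F i ≤ M) (R : ℕ) :
    ∀ i, (∀ t t', t < t' → t' < R → τ (i+t) = 1 → τ (i+t') = 0) → F i ≤ L + s^R * M := by
  induction R with
  | zero => intro i _; have := hM i; simp; linarith
  | succ R ih =>
    intro i h
    rcases hτ i with h0 | h0
    · have h1 := ih (i+1) (fun t t' h1 h2 h3 => by
        rw [show i+1+t' = i+(t'+1) by ring]
        rw [show i+1+t = i+(t+1) by ring] at h3
        exact h _ _ (by omega) (by omega) h3)
      rw [hF i, h0]
      calc L * ((0:ℤ):ℝ) + s * F (i+1) = s * F (i+1) := by simp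
        _ ≤ s * (L + s^R * M) := mul_le_mul_of_nonneg_left h1 hs
        _ = s * L + s^(R+1) * M := by ring
        _ ≤ _ := by nlinarith
    · have h1 := F_zero s M hs L τ F hF hM R (i+1) (fun t ht => by
        rw [show i+1+t = i+(t+1) by ring]
        exact h 0 (t+1) (by omega) (by omega) (by simpa using h0))
      rw [hF i, h0]
      calc L * ((1:ℤ):ℝ) + s * F (i+1) = L + s * F (i+1) := by simp
        _ ≤ L + s * (s^R * M) := by have := mul_le_mul_of_nonneg_left h1 hs; linarith
        _ = _ := by ring

lemma P_zero (s M : ℝ) (hs : 0 ≤ s) (L : ℝ) (τ : ℕ → ℤ) (P : ℕ → ℝ)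
    (hP : ∀ i, P (i+1) = L * τ i + s * P i) (hM : ∀ i, P i ≤ M) (R : ℕ) :
    ∀ i, (∀ t, t < R → τ (i+t) = 0) → P (i+R) ≤ s^R * M := by
  induction R with
  | zero => intro i _; simpa using hM i
  | succ R ih =>
    intro i h
    have h0 := h R (by omega)
    have h1 := ih i (fun t ht => h _ (by omega))
    rw [← add_assoc, hP, h0]
    calc L * ((0:ℤ):ℝ) + s * P (i+R) = s * P (i+R) := by simp
      _ ≤ s * (s^R * M) := mul_le_mul_of_nonneg_left h1 hs
      _ = _ := by ring

lemma P_le (s M : ℝ) (hs : 0 ≤ s) (hs1 : s ≤ 1) (L : ℝ) (hL : 0 ≤ L) (τ : ℕ → ℤ)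
    (hτ : ∀ i, τ i = 0 ∨ τ i = 1) (P : ℕ → ℝ)
    (hP : ∀ i, P (i+1) = L * τ i + s * P i) (hM : ∀ i, P i ≤ M) (R : ℕ) :
    ∀ i, (∀ t t', t < t' → t' < R → τ (i+t) = 1 → τ (i+t') = 0) → P (i+R) ≤ L + s^R * M := by
  induction R with
  | zero => intro i _; have := hM i; simp; linarith
  | succ R ih =>
    intro i h
    rw [← add_assoc, hP]
    rcases hτ (i+R) with h0 | h0
    · have h1 := ih i (fun t t' h1 h2 h3 => h _ _ (by omega) (by omega) h3)
      rw [h0]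
      calc L * ((0:ℤ):ℝ) + s * P (i+R) = s * P (i+R) := by simp
        _ ≤ s * (L + s^R * M) := mul_le_mul_of_nonneg_left h1 hs
        _ = s * L + s^(R+1) * M := by ring
        _ ≤ _ := by nlinarith
    · have h1 := P_zero s M hs L τ P hP hM R i (fun t ht => by
        rcases hτ (i+t) with h3 | h3
        · exact h3
        · have := h t R ht (by omega) h3
          omega)
      rw [h0]
      calc L * ((1:ℤ):ℝ) + s * P (i+R) = L + s * P (i+R) := by simp
        _ ≤ L + s * (s^R * M) := by have := mul_le_mul_of_nonneg_left h1 hs; linarith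
        _ = _ := by ring

open Classical in
noncomputable def tauS (x : Set ℕ) (i : ℕ) : ℤ :=
  if ∃ j, i = (j+1)^2 ∧ (j % 2 = 0 ∨ j/2 ∈ x) then 1 else 0

lemma tauS_01 (x : Set ℕ) (i : ℕ) : tauS x i = 0 ∨ tauS x i = 1 := by
  unfold tauS; split_ifs <;> simp

lemma tauS_sq (x : Set ℕ) (i : ℕ) (h : tauS x i = 1) : ∃ j, i = (j+1)^2 := by
  unfold tauS at h
  split_ifs at h with h1
  · exact ⟨h1.choose, h1.choose_spec.1⟩
  · exact absurd h (by norm_num)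

lemma tauS_zero (x : Set ℕ) : tauS x 0 = 0 := by
  rcases tauS_01 x 0 with h | h
  · exact h
  · obtain ⟨j, hj⟩ := tauS_sq x 0 h
    have : 0 < (j+1)^2 := by positivity
    omega

lemma tauS_even (x : Set ℕ) (k : ℕ) : tauS x ((2*k+1)^2) = 1 := by
  unfold tauS
  rw [if_pos]
  exact ⟨2*k, rfl, Or.inl (by omega)⟩

lemma tauS_mem (x : Set ℕ) (k : ℕ) : tauS x ((2*k+2)^2) = 1 ↔ k ∈ x := by
  unfold tauS
  constructor
  · intro h
    split_ifs at h with h1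
    swap
    · exact absurd h (by norm_num)
    obtain ⟨j, hj, h2⟩ := h1
    have hjk : 2*k+2 = j+1 := Nat.pow_left_injective (n := 2) (by norm_num) hj
    have : j = 2*k+1 := by omega
    subst this
    rcases h2 with h2 | h2
    · omega
    · rwa [show (2*k+1)/2 = k by omega] at h2
  · intro h
    rw [if_pos]
    exact ⟨2*k+1, rfl, Or.inr (by rwa [show (2*k+1)/2 = k by omega])⟩

lemma tauS_sparse (x : Set ℕ) (R i u v : ℕ) (hi : R^2 ≤ i) (hu : i ≤ u) (huv : u < v)
    (hv : v ≤ u + R) (h1 : tauS x u = 1) : tauS x v = 0 := by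
  rcases tauS_01 x v with h | h
  · exact h
  · exfalso
    obtain ⟨j, rfl⟩ := tauS_sq x u h1
    obtain ⟨k, rfl⟩ := tauS_sq x v h
    have a1 : R ≤ j+1 := (Nat.pow_le_pow_iff_left (n := 2) (by norm_num)).1 (hi.trans hu)
    have a2 : j+1 < k+1 := (Nat.pow_lt_pow_iff_left (n := 2) (by norm_num)).1 huv
    nlinarith

noncomputable def FS (L s : ℝ) (x : Set ℕ) (i : ℕ) : ℝ := ∑' t : ℕ, L * tauS x (i+t) * s^t

noncomputable def PS (L s : ℝ) (x : Set ℕ) : ℕ → ℝ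
  | 0 => 0
  | (i+1) => L * tauS x i + s * PS L s x i

lemma FS_term (L s : ℝ) (hL : 0 ≤ L) (hs : 0 ≤ s) (x : Set ℕ) (i t : ℕ) :
    0 ≤ L * tauS x (i+t) * s^t ∧ L * tauS x (i+t) * s^t ≤ L * s^t := by
  have : 0 ≤ L * s^t := by positivity
  rcases tauS_01 x (i+t) with h | h <;> rw [h] <;> simp [this]

lemma FS_summable (L s : ℝ) (hL : 0 ≤ L) (hs : 0 ≤ s) (hs1 : s < 1) (x : Set ℕ) (i : ℕ) :
    Summable (fun t : ℕ => L * tauS x (i+t) * s^t) :=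
  Summable.of_nonneg_of_le (fun t => (FS_term L s hL hs x i t).1)
    (fun t => (FS_term L s hL hs x i t).2) ((summable_geometric_of_lt_one hs hs1).mul_left L)

lemma FS_rec (L s : ℝ) (hL : 0 ≤ L) (hs : 0 ≤ s) (hs1 : s < 1) (x : Set ℕ) (i : ℕ) :
    FS L s x i = L * tauS x i + s * FS L s x (i+1) := by
  unfold FS
  rw [(FS_summable L s hL hs hs1 x i).tsum_eq_zero_add, ← tsum_mul_left]
  congr 1
  · simp
  · congr 1
    ext t
    rw [show i + (t+1) = i+1+t by ring]
    ring

lemma FS_nonneg (L s : ℝ) (hL : 0 ≤ L) (hs : 0 ≤ s) (x : Set ℕ) (i : ℕ) : 0 ≤ FS L s x i :=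
  tsum_nonneg fun t => (FS_term L s hL hs x i t).1

lemma FS_le (L s : ℝ) (hL : 0 ≤ L) (hs : 0 ≤ s) (hs1 : s < 1) (x : Set ℕ) (i : ℕ) :
    FS L s x i ≤ L / (1 - s) := by
  have h := (FS_summable L s hL hs hs1 x i).tsum_le_tsum
    (fun t => (FS_term L s hL hs x i t).2) ((summable_geometric_of_lt_one hs hs1).mul_left L)
  rw [tsum_mul_left, tsum_geometric_of_lt_one hs hs1] at h
  exact h

lemma PS_bd (L s : ℝ) (hL : 0 ≤ L) (hs : 0 ≤ s) (hs1 : s < 1) (x : Set ℕ) (i : ℕ) :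
    0 ≤ PS L s x i ∧ PS L s x i ≤ L / (1 - s) := by
  have hM : L / (1-s) = L + s * (L/(1-s)) := by
    have : 1 - s ≠ 0 := by linarith
    field_simp
    ring
  have hM0 : 0 ≤ L/(1-s) := div_nonneg hL (by linarith)
  induction i with
  | zero => simp [PS, hM0]
  | succ i ih =>
    have h0 := mul_nonneg hs ih.1
    have h1 := mul_le_mul_of_nonneg_left ih.2 hs
    simp only [PS]
    rcases tauS_01 x i with h | h <;> rw [h] <;> push_cast <;> constructor <;> linarith

lemma FS_inj (L s : ℝ) (hL : 0 < L) (hs : 0 < s) (hs1 : s < 1/2) :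
    Function.Injective (fun x => FS L s x 0) := by
  intro x y hxy
  have hs1' : s < 1 := by linarith
  have hdet : ∀ (z : Set ℕ) i, (tauS z i = 1 ↔ L ≤ FS L s z i) := by
    intro z i
    have hr := FS_rec L s hL.le hs.le hs1' z i
    have h0 := FS_nonneg L s hL.le hs.le z (i+1)
    have h1 := FS_le L s hL.le hs.le hs1' z (i+1)
    rw [le_div_iff₀ (by linarith)] at h1
    constructor
    · intro h
      rw [h] at hr
      push_cast at hr
      nlinarith
    · intro h
      rcases tauS_01 z i with h2 | h2
      · exfalso
        rw [h2] at hr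
        push_cast at hr
        rw [hr] at h
        nlinarith
      · exact h2
  have hteq : ∀ i, FS L s x i = FS L s y i → tauS x i = tauS y i := by
    intro i h
    have h1 := hdet x i
    have h2 := hdet y i
    rw [h] at h1
    have h3 := h1.trans h2.symm
    rcases tauS_01 x i with a | a <;> rcases tauS_01 y i with c | c <;> omega
  have hF : ∀ i, FS L s x i = FS L s y i := by
    intro i
    induction i with
    | zero => exact hxy
    | succ i ih =>
      have h1 := FS_rec L s hL.le hs.le hs1' x i
      have h2 := FS_rec L s hL.le hs.le hs1' y i
      rw [hteq i ih] at h1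
      have : s * FS L s x (i+1) = s * FS L s y (i+1) := by linarith
      exact mul_left_cancel₀ hs.ne' this
  ext k
  rw [← tauS_mem, ← tauS_mem, hteq _ (hF _)]

lemma FS_LS (L s : ℝ) (hL : 0 < L) (hs : 0 < s) (hs1 : s < 1) (x : Set ℕ) :
    IsLS (fun i => |FS L s x i - PS L s x i|) L := by
  set M := L / (1-s) with hM
  have hsum := FS_rec L s hL.le hs.le hs1 x
  have hFM : ∀ i, FS L s x i ≤ M := FS_le L s hL.le hs.le hs1 x
  have hPM : ∀ i, PS L s x i ≤ M := fun i => (PS_bd L s hL.le hs.le hs1 x i).2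
  have hP : ∀ i, PS L s x (i+1) = L * tauS x i + s * PS L s x i := fun i => rfl
  have hF0 := FS_nonneg L s hL.le hs.le x
  have hP0 : ∀ i, 0 ≤ PS L s x i := fun i => (PS_bd L s hL.le hs.le hs1 x i).1
  have hlim : Filter.Tendsto (fun R : ℕ => s^R * M) Filter.atTop (nhds 0) := by
    have := (tendsto_pow_atTop_nhds_zero_of_lt_one hs.le hs1).mul_const M
    simpa using this
  have hR : ∀ δ, 0 < δ → ∃ R : ℕ, s^R * M < δ := fun δ hδ =>
    (hlim.eventually_lt_const hδ).exists
  constructor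
  · intro c hc
    obtain ⟨R, hR⟩ := hR (c - L) (by linarith)
    rw [Filter.eventually_atTop]
    refine ⟨R^2 + R, fun i hi => ?_⟩
    have h1 : FS L s x i ≤ L + s^R * M :=
      F_le s M hs.le hs1.le L hL.le _ (tauS_01 x) _ hsum hFM R i (fun t t' a1 a2 a3 =>
        tauS_sparse x R i (i+t) (i+t') (by omega) (by omega) (by omega) (by omega) a3)
    have h2 : PS L s x i ≤ L + s^R * M := by
      have := P_le s M hs.le hs1.le L hL.le _ (tauS_01 x) _ hP hPM R (i-R) (fun t t' a1 a2 a3 =>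
        tauS_sparse x R (i-R) (i-R+t) (i-R+t') (by omega) (by omega) (by omega) (by omega) a3)
      rwa [show i - R + R = i by omega] at this
    have := hF0 i
    have := hP0 i
    rw [abs_le]; constructor <;> linarith
  · intro c hc
    obtain ⟨R, hR⟩ := hR (L - c) (by linarith)
    rw [Filter.frequently_atTop]
    intro N
    set n := N + R + R^2 with hn
    set i := (2*n+1)^2 with hi
    have hin : n ≤ i := by rw [hi]; nlinarith
    refine ⟨i, by omega, ?_⟩
    have ht : tauS x i = 1 := tauS_even x n
    have h1 : L ≤ FS L s x i := by
      rw [hsum, ht]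
      have := mul_nonneg hs.le (hF0 (i+1))
      push_cast
      linarith
    have h2 : PS L s x i ≤ s^R * M := by
      have := P_zero s M hs.le L _ _ hP hPM R (i-R) (fun t ht' => by
        rcases tauS_01 x (i-R+t) with h | h
        · exact h
        · have := tauS_sparse x R (i-R) (i-R+t) i (by omega) (by omega) (by omega) (by omega) h
          omega)
      rwa [show i - R + R = i by omega] at this
    refine le_trans ?_ (le_abs_self _)
    linarith

theorem real_L (b : ℤ) (hb3 : 3 ≤ b) (α : ℝ) (hα2 : α^2 = b*α+1) (hα : 3 < α) (x : Set ℕ) :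
    limsupDist α (FS (b / (1+α^2)) (α^2)⁻¹ x 0) = b / (1+α^2) := by
  have hbR : (3:ℝ) ≤ b := by exact_mod_cast hb3
  have hα0 : 0 < α := by linarith
  obtain ⟨β, hβ⟩ : ∃ β, β = α^2 := ⟨_, rfl⟩
  rw [← hβ] at hα2 ⊢
  have hβ9 : 9 < β := by rw [hβ]; nlinarith
  have hβ0 : 0 < β := by linarith
  have hβb : (β - 1)^2 = b^2 * β := by
    linear_combination (β - 1 + b*α) * hα2 - (b:ℝ)^2 * hβ
  obtain ⟨s, hs⟩ : ∃ s, s = β⁻¹ := ⟨_, rfl⟩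
  have hβs : β * s = 1 := by rw [hs]; exact mul_inv_cancel₀ hβ0.ne'
  have hs0 : 0 < s := by rw [hs]; positivity
  have hs1 : s < 1/9 := by nlinarith
  have hb2 : β + s = b^2 + 2 := by
    have : β * (β + s) = β * (b^2+2) := by linear_combination hβb + hβs
    exact mul_left_cancel₀ hβ0.ne' this
  rw [← hs]
  obtain ⟨L, hLd⟩ : ∃ L, L = (b:ℝ) / (1+β) := ⟨_, rfl⟩
  rw [← hLd]
  have hL : L * (β+1) = b := by rw [hLd]; field_simp; ring
  have hL0 : 0 < L := by rw [hLd]; positivity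
  have hL3 : L ≤ 1/3 := by
    rw [hLd, div_le_iff₀ (by linarith), hα2]; nlinarith
  have hM : L/(1-s) ≤ 1/2 := by rw [div_le_iff₀ (by linarith)]; nlinarith
  have hs1' : s < 1 := by linarith
  have hFr := FS_rec L s hL0.le hs0.le hs1' x
  have hPr : ∀ i, PS L s x (i+1) = L * tauS x i + s * PS L s x i := fun i => rfl
  apply limsup_of_X b hb3 α (by rw [← hβ, hα2]) hα (fun i => FS L s x i - PS L s x i)
    (X_rec (b:ℝ) L β s hβs hb2 hL (tauS x) _ _ hFr hPr) _ _ _ hL0.le (FS_LS L s hL0 hs0 hs1' x)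
  · have h1 := hFr 0
    have h2 := hPr 0
    rw [tauS_zero] at h1 h2
    have h3 : PS L s x 0 = 0 := rfl
    have h4 : PS L s x 1 = 0 := by
      have : PS L s x (0+1) = 0 := by rw [h2, h3]; simp
      exact this
    have h5 : FS L s x 1 = β * FS L s x 0 := by
      simp only [zero_add] at h1
      rw [h1]
      push_cast
      linear_combination (- FS L s x 1) * hβs
    rw [h3, h4, h5]
    have hb0 : (b:ℝ) ≠ 0 := by linarith
    have h6 : (β * FS L s x 0 - 0 - (FS L s x 0 - 0)) / b = α * FS L s x 0 := by
      rw [div_eq_iff hb0, hα2]; ring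
    rw [h6]
    ring
  · intro i
    have h1 := FS_le L s hL0.le hs0.le hs1' x i
    have h2 := FS_nonneg L s hL0.le hs0.le x i
    have h3 := PS_bd L s hL0.le hs0.le hs1' x i
    rw [abs_le]; constructor <;> linarith

theorem uncountable_L (b : ℤ) (hb3 : 3 ≤ b) (α : ℝ) (hα2 : α^2 = b*α+1) (hα : 3 < α) :
    ¬ Set.Countable {ξ : ℝ | limsupDist α ξ = (b : ℝ) / (1 + α ^ 2)} := by
  intro hc
  have hbR : (3:ℝ) ≤ b := by exact_mod_cast hb3
  have hL0 : 0 < (b:ℝ) / (1 + α^2) := by positivity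
  have hs0 : 0 < (α^2)⁻¹ := by positivity
  have hs1 : (α^2)⁻¹ < 1/2 := by
    rw [inv_lt_comm₀ (by positivity) (by norm_num)]; nlinarith
  have hinj := FS_inj _ _ hL0 hs0 hs1
  have h1 := hc.preimage hinj
  have h2 : (fun x : Set ℕ => FS ((b:ℝ) / (1 + α^2)) (α^2)⁻¹ x 0) ⁻¹'
      {ξ : ℝ | limsupDist α ξ = (b : ℝ) / (1 + α ^ 2)} = Set.univ := by
    ext x
    simp only [Set.mem_preimage, Set.mem_ofPred_eq, Set.mem_univ, iff_true]
    exact real_L b hb3 α hα2 hα x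
  rw [h2, Set.countable_univ_iff] at h1
  obtain ⟨f, hf⟩ := h1.exists_injective_nat
  exact Function.cantor_injective f hf

theorem lower_part (b : ℤ) (hb : 3 ≤ b) (α : ℝ) (hα2 : α^2 = b*α+1) (hα : 3 < α) (ξ V : ℝ)
    (hξ : limsupDist α ξ = V) (hV : V < b / (1+α^2)) : ∃ m, V = valM b (α^2) m := by
  obtain ⟨e, a, hrec, hbd, hatt⟩ := limit_seq b α hα2 ξ V hξ
  have main : ∀ (e : ℤ → ℝ) (a : ℤ → ℤ), (∀ k, e (k+1) = b * e k + e (k-1) - a k) →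
      (∀ k, |e k| ≤ V) → (∃ k, |e k| = V) → (∀ i : ℤ, a (2*i+1) = 0) →
      ∃ m, V = valM b (α^2) m := by
    intro e a hrec hbd hatt hodd
    obtain ⟨K0, hlex⟩ := lex_of_lt b hb α hα2 hα e a hrec V hV hbd
    obtain ⟨H, hH1, hH2, hmid⟩ := build_H hlex hodd
    obtain ⟨Q, hQ, hE1, hE0, n0, hn0⟩ := mid_structure H _ hH1 hmid
    have hβb : (α^2 - 1)^2 = b^2 * α^2 := by
      linear_combination (α^2 - 1 + b*α) * hα2
    have := value_eq b hb (α^2) (by nlinarith) hβb e a hrec V hbd hatt hodd H hH2 Q hQ hE1 hE0 n0 hn0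
    refine ⟨Q-1, ?_⟩
    rw [this]
    unfold valM
    rw [show Q - 1 + 1 = Q by omega]
  by_cases hodd : ∀ i : ℤ, a (2*i+1) = 0
  · exact main e a hrec hbd ⟨0, hatt⟩ hodd
  · push Not at hodd
    obtain ⟨i0, hi0⟩ := hodd
    obtain ⟨K0, hlex⟩ := lex_of_lt b hb α hα2 hα e a hrec V hV hbd
    refine main (fun k => e (k+1)) (fun k => a (k+1)) ?_ (fun k => hbd _) ⟨-1, by simpa using hatt⟩ ?_
    · intro k
      have := hrec (k+1)
      rw [show k+1-1 = k-1+1 by ring] at this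
      exact this
    · intro i
      by_contra hc
      have := parity_of hlex _ _ hi0 hc
      rw [Int.even_iff] at this
      omega

theorem stmt6 (b : ℤ) (hb : 3 ≤ b) (α : ℝ)
    (hα : α = ((b : ℝ) + Real.sqrt ((b : ℝ) ^ 2 + 4)) / 2)
    (p q : ℕ → ℤ)
    (hp0 : p 0 = 0) (hp2 : p 2 = b)
    (hpeven : ∀ n : ℕ, p (2 * n + 4) = (b ^ 2 + 2) * p (2 * n + 2) - p (2 * n))
    (hpodd : ∀ n : ℕ, p (2 * n + 1) = p (2 * n) + p (2 * n + 2))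
    (hq0 : q 0 = 1) (hq2 : q 2 = b ^ 2 + 3)
    (hqeven : ∀ n : ℕ, q (2 * n + 4) = (b ^ 2 + 2) * q (2 * n + 2) - q (2 * n))
    (hqodd : ∀ n : ℕ, q (2 * n + 1) = q (2 * n) + q (2 * n + 2)) :
    StrictMono (fun n : ℕ => (p n : ℝ) / (q n : ℝ)) ∧
    Filter.Tendsto (fun n : ℕ => (p n : ℝ) / (q n : ℝ)) Filter.atTop
      (nhds ((b : ℝ) / (1 + α ^ 2))) ∧
    (specL α ∩ Set.Icc 0 ((b : ℝ) / (1 + α ^ 2)) =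
      {x : ℝ | ∃ n : ℕ, x = (p n : ℝ) / (q n : ℝ)} ∪ {(b : ℝ) / (1 + α ^ 2)}) ∧
    ¬ Set.Countable {ξ : ℝ | limsupDist α ξ = (b : ℝ) / (1 + α ^ 2)} := by
  have hbR : (3:ℝ) ≤ b := by exact_mod_cast hb
  have hsq : Real.sqrt ((b:ℝ)^2+4) ^ 2 = (b:ℝ)^2 + 4 := Real.sq_sqrt (by positivity)
  have hα2 : α^2 = b*α+1 := by rw [hα]; linear_combination hsq / 4
  have hα3 : 3 < α := by
    have h0 : (b:ℝ) < Real.sqrt ((b:ℝ)^2+4) := by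
      apply Real.lt_sqrt_of_sq_lt; linarith
    rw [hα]; linarith
  have hβ1 : 1 < α^2 := by nlinarith
  have hβb : (α^2 - 1)^2 = b^2 * α^2 := by
    linear_combination (α^2 - 1 + b*α) * hα2
  have hpq : ∀ n, (p n : ℝ) / (q n : ℝ) = valM b (α^2) n :=
    pq_closed b hb (α^2) hβ1 hβb p q hp0 hp2 hpeven hpodd hq0 hq2 hqeven hqodd
  have hL0 : 0 < (b:ℝ) / (1+α^2) := by positivity
  have hmono : StrictMono (valM (b:ℝ) (α^2)) := valM_strictMono _ _ (by linarith) hβ1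
  have hlim : Filter.Tendsto (valM (b:ℝ) (α^2)) Filter.atTop (nhds ((b:ℝ) / (1+α^2))) := by
    rw [add_comm]; exact valM_tendsto _ _ hβ1
  simp only [hpq]
  refine ⟨hmono, hlim, ?_, uncountable_L b hb α hα2 hα3⟩
  apply Set.Subset.antisymm
  · rintro l ⟨⟨ξ, hξ⟩, hl0, hl1⟩
    rcases hl1.lt_or_eq with h | h
    · exact Or.inl (lower_part b hb α hα2 hα3 ξ l hξ h)
    · exact Or.inr h
  · rintro l (⟨n, rfl⟩ | h)
    · refine ⟨real_pq b hb α hα2 hα3 n, ?_, hmono.monotone.ge_of_tendsto hlim n⟩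
      have h1 := hmono.monotone (Nat.zero_le n)
      have h2 : valM (b:ℝ) (α^2) 0 = 0 := by simp [valM]
      rw [h2] at h1
      exact h1
    · have h' : l = (b:ℝ) / (1+α^2) := h
      rw [h']
      exact ⟨⟨_, real_L b hb α hα2 hα3 ∅⟩, hL0.le, le_refl _⟩
end

section
/- Let α > 3 be a quadratic unit, i.e. α = (b+√(b²−4))/2 with an integer b ≥ 4 (conjugate α₂ = 1/α > 0) or α = (b+√(b²+4))/2 with an integer b ≥ 3 (conjugate α₂ = −1/α < 0). Then the infimum of limsup_{n→∞} ‖ξ·α^n‖ over all ξ ∈ ℝ ∖ ℚ(α) equals 1/(1+α) when α₂ > 0, and equals b/(1+α²) when α₂ < 0. -/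
def MK (K : ℕ) (t : ℕ → Bool) : Prop :=
  ∃ N, ∀ n ≥ N, t n ≠ t (n+1) → ∃ i < K, (∀ j < i, t (n+2+j) = t (n-1-j)) ∧
    t (n+2+i) = t n ∧ t (n-1-i) = t (n+1)

def Pat (t : ℕ → Bool) (m d : ℕ) (x : Bool) : Prop :=
  t m = x ∧ t (m+1) = x ∧ t (m+d) = !x ∧ t (m+d+1) = !x ∧
    ∀ k, m < k → k < m + d → t (k+1) = !t k

lemma exists_pat (t : ℕ → Bool) (d : ℕ) : ∀ m x, t m = x → t (m+1) = x → t (m+d) = (!x) →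
    t (m+d+1) = (!x) → ∃ m' ≥ m, ∃ d', Pat t m' d' x := by
  induction d using Nat.strong_induction_on with
  | _ d ih =>
    intro m x h1 h2 h3 h4
    by_cases h : ∀ k, m < k → k < m + d → t (k+1) = !t k
    · exact ⟨m, le_rfl, d, h1, h2, h3, h4, h⟩
    · push Not at h
      obtain ⟨k, hk1, hk2, hk⟩ := h
      have hk' : t (k+1) = t k := by
        revert hk; cases t (k+1) <;> cases t k <;> simp
      by_cases hx : t k = x
      · obtain ⟨m', hm', d', hd'⟩ := ih (m+d-k) (by omega) k x hx (by rw [hk', hx])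
          (by rw [← h3]; congr 1; omega) (by rw [← h4]; congr 1; omega)
        exact ⟨m', by omega, d', hd'⟩
      · have hx' : t k = !x := by revert hx; cases t k <;> cases x <;> simp
        exact ih (k-m) (by omega) m x h1 h2 (by rw [← hx']; congr 1; omega)
          (by rw [← hx', ← hk']; congr 1; omega)

lemma pat_step (K N : ℕ) (t : ℕ → Bool) (h : ∀ n ≥ N, t n ≠ t (n+1) →
    ∃ i < K, (∀ j < i, t (n+2+j) = t (n-1-j)) ∧
    t (n+2+i) = t n ∧ t (n-1-i) = t (n+1)) (m d : ℕ) (x : Bool) (hm : N + K + 2 ≤ m)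
    (hp : Pat t m d x) : ∃ e, e < d ∧ e ≤ K ∧ Pat t (m-e) e (!x) := by
  obtain ⟨h1, h2, h3, h4, h5⟩ := hp
  have A : ∀ j, j + 1 ≤ d → t (m+1+j) = (x ^^ decide (j % 2 = 1)) := by
    intro j
    induction j with
    | zero => intro _; simp [h2]
    | succ j ih =>
      intro hj
      have := h5 (m+1+j) (by omega) (by omega)
      rw [show m+1+(j+1) = m+1+j+1 by ring, this, ih (by omega)]
      rcases Nat.mod_two_eq_zero_or_one j with h | h
      · have : (j+1) % 2 = 1 := by omega
        simp [h, this]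
      · have : (j+1) % 2 = 0 := by omega
        simp [h, this]
  have hd0 : d ≠ 0 := by rintro rfl; simp [h1] at h3
  have hdodd : (d-1) % 2 = 1 := by
    have := A (d-1) (by omega)
    rw [show m+1+(d-1) = m+d by omega, h3] at this
    by_contra hc
    simp [hc] at this
  have hc1 : t (m+1+1) = !x := by rw [A 1 (by omega)]; simp
  obtain ⟨i, hiK, hi1, hi2, hi3⟩ := h (m+1) (by omega) (by rw [hc1, h2]; simp)
  have R : ∀ j, j + 3 ≤ d → t (m+1+2+j) = (x ^^ decide (j % 2 = 1)) := by
    intro j hj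
    have := A (j+2) (by omega)
    rw [show m+1+2+j = m+1+(j+2) by ring, this]
    simp
  have Rd : t (m+1+2+(d-2)) = !x := by rw [← h4]; congr 1; omega
  -- choose e
  have key : ∃ e, e < d ∧ e ≤ K ∧ e % 2 = 0 ∧ t (m-e) = (!x) ∧
      ∀ j < e, t (m-j) = (x ^^ decide (j % 2 = 1)) := by
    have L : ∀ j, m+1-1-j = m-j := by intro j; omega
    by_cases hid : i < d - 2
    · refine ⟨i, by omega, by omega, ?_, ?_, ?_⟩
      · have := R i (by omega)
        rw [hi2, h2] at this
        by_contra hc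
        have hc' : i % 2 = 1 := by omega
        simp [hc'] at this
      · rw [← L, hi3, hc1]
      · intro j hj
        rw [← L, ← hi1 j hj, R j (by omega)]
    · have hne : i ≠ d - 2 := by
        intro he
        rw [he, Rd, h2] at hi2
        simp at hi2
      refine ⟨d-2, by omega, by omega, by omega, ?_, ?_⟩
      · rw [← L, ← hi1 _ (by omega), Rd]
      · intro j hj
        rw [← L, ← hi1 j (by omega), R j (by omega)]
  obtain ⟨e, he1, he2, he3, he4, he5⟩ := key
  have he0 : e ≠ 0 := by rintro rfl; simp [h1] at he4
  refine ⟨e, he1, he2, he4, ?_, ?_, ?_, ?_⟩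
  · rw [show m - e + 1 = m - (e-1) by omega, he5 _ (by omega)]
    have : (e-1) % 2 = 1 := by omega
    simp [this]
  · rw [show m - e + e = m by omega, h1]; simp
  · rw [show m - e + e = m by omega, h2]; simp
  · intro k hk1 hk2
    have a1 := he5 (m-k) (by omega)
    have a2 := he5 (m-k-1) (by omega)
    rw [show m-(m-k) = k by omega] at a1
    rw [show m-(m-k-1) = k+1 by omega] at a2
    rw [a1, a2]
    rcases Nat.mod_two_eq_zero_or_one (m-k) with h | h
    · have : (m-k-1) % 2 = 1 := by omega
      simp [h, this]
    · have : (m-k-1) % 2 = 0 := by omega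
      simp [h, this]

lemma no_both (K : ℕ) (t : ℕ → Bool) (h : MK K t) :
    (∃ N, ∀ n ≥ N, ¬ (t n = true ∧ t (n+1) = true)) ∨
    (∃ N, ∀ n ≥ N, ¬ (t n = false ∧ t (n+1) = false)) := by
  obtain ⟨N, h⟩ := h
  have Q : ∀ d m x, N + K + 2 + d * (K+1) ≤ m → Pat t m d x → False := by
    intro d
    induction d using Nat.strong_induction_on with
    | _ d ih =>
      intro m x hm hp
      obtain ⟨e, he1, he2, he3⟩ := pat_step K N t h m d x (by omega) hp
      refine ih e he1 (m-e) _ ?_ he3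
      have : (e+1) * (K+1) ≤ d * (K+1) := Nat.mul_le_mul_right _ he1
      have h2 : (e+1) * (K+1) = e * (K+1) + K + 1 := by ring
      omega
  by_contra hc
  push Not at hc
  obtain ⟨hc1, hc2⟩ := hc
  obtain ⟨m, hm, hm1, hm2⟩ := hc1 (N + K + 2 + K + K*(K+1))
  obtain ⟨n, hn, hn1, hn2⟩ := hc2 m
  obtain ⟨m', hm', d', hp⟩ := exists_pat t (n-m) m true hm1 hm2
    (by rw [show m+(n-m) = n by omega, hn1]; rfl) (by rw [show m+(n-m) = n by omega, hn2]; rfl)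
  obtain ⟨e, he1, he2, he3⟩ := pat_step K N t h m' d' _ (by omega) hp
  have : e * (K+1) ≤ K * (K+1) := Nat.mul_le_mul_right _ he2
  exact Q e (m'-e) _ (by omega) he3

def dpos (t : ℕ → Bool) (N : ℕ) : ℕ → ℕ
  | 0 => N
  | i+1 => if t (dpos t N i) then dpos t N i + 2 else dpos t N i + 1

lemma desub (K : ℕ) (t : ℕ → Bool) (h : MK (K+1) t) (N : ℕ)
    (h11 : ∀ n ≥ N, ¬ (t n = true ∧ t (n+1) = true)) : MK K (fun i => t (dpos t N i)) := by
  obtain ⟨M, h⟩ := h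
  set p := dpos t N with hp
  have p1 : ∀ i, t (p i) = true → p (i+1) = p i + 2 := by
    intro i hi; show (if t (p i) then p i + 2 else p i + 1) = _; simp [hi]
  have p0 : ∀ i, t (p i) = false → p (i+1) = p i + 1 := by
    intro i hi; show (if t (p i) then p i + 2 else p i + 1) = _; simp [hi]
  have pi : ∀ i, N + i ≤ p i := by
    intro i
    induction i with
    | zero => simp [hp, dpos]
    | succ i ih =>
      cases hc : t (p i)
      · rw [p0 i hc]; omega
      · rw [p1 i hc]; omega
  have q1 : ∀ i, t (p i) = true → t (p i + 1) = false := by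
    intro i hi
    by_contra hc
    exact h11 (p i) (by have := pi i; omega) ⟨hi, by simpa using hc⟩
  -- last letter of a block is false
  have last : ∀ i, t (p (i+1) - 1) = false := by
    intro i
    cases hc : t (p i)
    · rw [p0 i hc]; simpa using hc
    · rw [p1 i hc]; simpa using q1 i hc
  refine ⟨M + K + 3, ?_⟩
  intro i hi hne
  simp only at hne ⊢
  -- cut
  have hcut : t (p i + 1) = t (p (i+1)) ∧ t (p i + 2) = false ∧ p (i+2) = p i + 3 := by
    cases hc : t (p i)
    · have e1 := p0 i hc
      have e2 : t (p (i+1)) = true := by rw [hc] at hne; simpa using hne.symm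
      have e3 := p1 _ e2
      have e4 := q1 _ e2
      rw [e1] at e4 e3
      exact ⟨by rw [e1], e4, by rw [show i+2 = i+1+1 by ring, e3]⟩
    · have e1 := p1 i hc
      have e2 : t (p (i+1)) = false := by rw [hc] at hne; simpa using hne.symm
      have e3 := p0 _ e2
      have e4 := q1 i hc
      refine ⟨by rw [e4, e2], by rw [← e1, e2], by rw [show i+2 = i+1+1 by ring, e3, e1]⟩
  obtain ⟨c1, c2, c3⟩ := hcut
  obtain ⟨r, hr, hr1, hr2, hr3⟩ := h (p i) (by have := pi i; omega) (by rw [c1]; exact hne)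
  -- matching
  have mt : ∀ l, l + 1 ≤ i → (∀ j < l, t (p (i+2+j)) = t (p (i-1-j))) → ∃ D, l ≤ D ∧ p (i+2+l) = p i + 3 + D ∧
      p (i-l) + D = p i ∧ ∀ j ≤ D, t (p i + 2 + j) = t (p i - 1 - j) := by
    intro l
    induction l with
    | zero =>
      intro hl _
      refine ⟨0, le_rfl, by simpa using c3, by simp, ?_⟩
      intro j hj
      obtain rfl : j = 0 := by omega
      have := last (i-1)
      rw [show i-1+1 = i by omega] at this
      simp [c2, this]
    | succ l ih =>
      intro hl hm
      obtain ⟨D, hD1, hD2, hD3, hD4⟩ := ih (by omega) (fun j hj => hm j (by omega))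
      have hml := hm l (by omega)
      have la := last (i-(l+1)-1)
      rw [show i-(l+1)-1+1 = i-(l+1) by omega] at la
      have hge := pi (i-(l+1))
      have hil : i - l = i - (l+1) + 1 := by omega
      have hil2 : i - 1 - l = i - (l+1) := by omega
      rw [hil2] at hml
      cases hc : t (p (i-(l+1)))
      · have e1 := p0 _ hc
        rw [hc] at hml
        have e2 := p0 _ hml
        rw [← hil] at e1
        refine ⟨D+1, by omega, by rw [show i+2+(l+1) = i+2+l+1 by ring, e2]; omega, by omega, ?_⟩
        intro j hj
        rcases Nat.lt_or_ge D j with hj' | hj'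
        · obtain rfl : j = D+1 := by omega
          rw [show p i + 2 + (D+1) = p (i+2+l) by omega, hml,
            show p i - 1 - (D+1) = p (i-(l+1)) - 1 by omega, la]
        · exact hD4 j hj'
      · have e1 := p1 _ hc
        rw [hc] at hml
        have e2 := p1 _ hml
        have e3 := q1 _ hml
        rw [← hil] at e1
        refine ⟨D+2, by omega, by rw [show i+2+(l+1) = i+2+l+1 by ring, e2]; omega, by omega, ?_⟩
        intro j hj
        rcases Nat.lt_or_ge D j with hj' | hj'
        · have : j = D+1 ∨ j = D+2 := by omega
          rcases this with rfl | rfl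
          · rw [show p i + 2 + (D+1) = p (i+2+l) by omega, hml,
              show p i - 1 - (D+1) = p (i-(l+1)) by omega, hc]
          · rw [show p i + 2 + (D+2) = p (i+2+l) + 1 by omega, e3,
              show p i - 1 - (D+2) = p (i-(l+1)) - 1 by omega, la]
        · exact hD4 j hj'
  have hrne : t (p i + 2 + r) ≠ t (p i - 1 - r) := by
    rw [hr2, hr3, c1]; exact hne
  have hex : ∃ l, t (p (i+2+l)) ≠ t (p (i-1-l)) ∧ l ≤ K := by
    by_contra hc
    push Not at hc
    obtain ⟨D, hD1, -, -, hD4⟩ := mt (K+1) (by omega) (fun j hj => by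
      by_contra h'
      exact absurd (hc j h') (by omega))
    exact hrne (hD4 r (by omega))
  classical
  obtain ⟨hl1, hl2⟩ := Nat.find_spec hex
  have hlmin := fun j (hj : j < Nat.find hex) => Nat.find_min hex hj
  set l := Nat.find hex
  have hm : ∀ j < l, t (p (i+2+j)) = t (p (i-1-j)) := by
    intro j hj
    by_contra h'
    exact hlmin j hj ⟨h', by omega⟩
  obtain ⟨D, hD1, hD2, hD3, hD4⟩ := mt l (by omega) hm
  have a1 : t (p i + 2 + (D+1)) = t (p (i+2+l)) := by congr 1; omega
  have a2 : t (p i - 1 - (D+1)) = t (p (i-1-l)) := by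
    have hil : i - l = i - 1 - l + 1 := by omega
    have hge := pi (i-1-l)
    cases hc : t (p (i-1-l))
    · have e1 := p0 _ hc
      have la := last (i-1-l-1)
      rw [show i-1-l-1+1 = i-1-l by omega] at la
      rw [← la, show p i - 1 - (D+1) = p (i-1-l) - 1 by rw [← hil] at e1; omega]
    · have e1 := p1 _ hc
      rw [← hc, show p i - 1 - (D+1) = p (i-1-l) by rw [← hil] at e1; omega]
  have hrD : r = D + 1 := by
    rcases lt_trichotomy r (D+1) with h' | h' | h'
    · exact absurd (hD4 r (by omega)) hrne
    · exact h'
    · exact absurd (by rw [← a1, ← a2]; exact hr1 _ h') hl1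
  subst hrD
  refine ⟨l, by omega, hm, ?_, ?_⟩
  · rw [← a1, hr2]
  · rw [← a2, hr3, c1]

def EvPer {X : Type} (t : ℕ → X) : Prop := ∃ p > 0, ∃ N, ∀ n ≥ N, t (n+p) = t n

lemma resub (t : ℕ → Bool) (N : ℕ)
    (h11 : ∀ n ≥ N, ¬ (t n = true ∧ t (n+1) = true)) (h : EvPer (fun i => t (dpos t N i))) :
    EvPer t := by
  obtain ⟨q, hq, I, h⟩ := h
  set p := dpos t N with hp
  simp only at h
  have p1 : ∀ i, t (p i) = true → p (i+1) = p i + 2 := by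
    intro i hi; show (if t (p i) then p i + 2 else p i + 1) = _; simp [hi]
  have p0 : ∀ i, t (p i) = false → p (i+1) = p i + 1 := by
    intro i hi; show (if t (p i) then p i + 2 else p i + 1) = _; simp [hi]
  have pi : ∀ i, N + i ≤ p i := by
    intro i
    induction i with
    | zero => simp [hp, dpos]
    | succ i ih =>
      cases hc : t (p i)
      · rw [p0 i hc]; omega
      · rw [p1 i hc]; omega
  have q1 : ∀ i, t (p i) = true → t (p i + 1) = false := by
    intro i hi
    by_contra hc
    exact h11 (p i) (by have := pi i; omega) ⟨hi, by simpa using hc⟩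
  have mono : StrictMono p := by
    apply strictMono_nat_of_lt_succ
    intro i
    cases hc : t (p i)
    · rw [p0 i hc]; omega
    · rw [p1 i hc]; omega
  have hlt := mono (show I < I + q by omega)
  obtain ⟨P, hP⟩ : ∃ P, p (I+q) = p I + P := ⟨p (I+q) - p I, by omega⟩
  have hall : ∀ k, p (I+k+q) = p (I+k) + P := by
    intro k
    induction k with
    | zero => simpa using hP
    | succ k ih =>
      have := h (I+k) (by omega)
      cases hc : t (p (I+k))
      · rw [hc] at this
        have e1 := p0 _ hc
        have e2 := p0 _ this
        rw [show I+(k+1)+q = I+k+q+1 by ring, e2, show I+(k+1) = I+k+1 by ring, e1]; omega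
      · rw [hc] at this
        have e1 := p1 _ hc
        have e2 := p1 _ this
        rw [show I+(k+1)+q = I+k+q+1 by ring, e2, show I+(k+1) = I+k+1 by ring, e1]; omega
  refine ⟨P, by omega, p I, ?_⟩
  have cover : ∀ n, ∃ k, p I + n = p (I+k) ∨ (p I + n = p (I+k) + 1 ∧ t (p (I+k)) = true) := by
    intro n
    induction n with
    | zero => exact ⟨0, Or.inl rfl⟩
    | succ n ih =>
      obtain ⟨k, hk | ⟨hk, hk'⟩⟩ := ih
      · cases hc : t (p (I+k))
        · exact ⟨k+1, Or.inl (by rw [show I+(k+1) = I+k+1 by ring, p0 _ hc]; omega)⟩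
        · exact ⟨k, Or.inr ⟨by omega, hc⟩⟩
      · exact ⟨k+1, Or.inl (by rw [show I+(k+1) = I+k+1 by ring, p1 _ hk']; omega)⟩
  intro n hn
  obtain ⟨k, hk⟩ := cover (n - p I)
  rw [show p I + (n - p I) = n by omega] at hk
  have h1 := hall k
  have h2 := h (I+k) (by omega)
  rcases hk with hk | ⟨hk, hk'⟩
  · rw [hk, ← h1, h2]
  · have h3 := q1 _ hk'
    rw [hk'] at h2
    have h4 := q1 _ h2
    rw [hk, h3, ← h4]; congr 1; omega

theorem markoff (K : ℕ) : ∀ t, MK K t → EvPer t := by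
  induction K with
  | zero =>
    rintro t ⟨N, h⟩
    refine ⟨1, one_pos, N, fun n hn => ?_⟩
    by_contra hc
    obtain ⟨i, hi, -⟩ := h n hn (fun h' => hc h'.symm)
    omega
  | succ K ih =>
    intro t h
    rcases no_both _ t h with ⟨N, hN⟩ | ⟨N, hN⟩
    · exact resub t N hN (ih _ (desub K t h N hN))
    · have h' : MK (K+1) (fun n => !t n) := by
        obtain ⟨M, h⟩ := h
        refine ⟨M, fun n hn hne => ?_⟩
        obtain ⟨i, hi, h1, h2, h3⟩ := h n hn (fun h' => hne (by simp [h']))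
        exact ⟨i, hi, fun j hj => by simp [h1 j hj], by simp [h2], by simp [h3]⟩
      have hN' : ∀ n ≥ N, ¬ ((!t n) = true ∧ (!t (n+1)) = true) := by
        intro n hn; simpa using hN n hn
      obtain ⟨p, hp, M, hM⟩ := resub _ N hN' (ih _ (desub K _ h' N hN'))
      exact ⟨p, hp, M, fun n hn => by simpa using hM n hn⟩

set_option maxHeartbeats 1000000 in
theorem core (β δ : ℝ) (hβ : 3 < β) (hδ : 0 < δ) (ε : ℕ → ℝ) (a : ℕ → ℤ)
    (hrec : ∀ n, ε (n+2) = (β + β⁻¹) * ε (n+1) - ε n - a (n+1))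
    (hb : ∀ n, |ε n| * (1 + β) ≤ 1 - δ) : EvPer a := by
  obtain ⟨r, hr⟩ : ∃ r, r = β⁻¹ := ⟨_, rfl⟩
  have hβr : β * r = 1 := by rw [hr]; field_simp
  have hr0 : 0 < r := by rw [hr]; positivity
  have hr3 : r < 1/3 := by nlinarith
  rw [← hr] at hrec
  obtain ⟨F, hF⟩ : ∃ F : ℕ → ℝ, ∀ n, F n = β * ε (n+1) - ε n := ⟨_, fun _ => rfl⟩
  obtain ⟨G, hG⟩ : ∃ G : ℕ → ℝ, ∀ n, G n = β * ε n - ε (n+1) := ⟨_, fun _ => rfl⟩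
  have hεb : ∀ n, -(1-δ) ≤ (1+β) * ε n ∧ (1+β) * ε n ≤ 1-δ := by
    intro n
    have h1 := hb n
    have h2 := le_abs_self (ε n)
    have h3 := neg_abs_le (ε n)
    constructor <;> nlinarith
  have hF1 : ∀ n, -1 < F n ∧ F n < 1 := by
    intro n
    have h1 := hεb n
    have h2 := hεb (n+1)
    rw [hF]
    constructor
    · have : 0 < (1+β) * (β * ε (n+1) - ε n + 1) := by nlinarith
      have := (pos_iff_pos_of_mul_pos this).1 (by linarith); linarith
    · have : 0 < (1+β) * (1 - (β * ε (n+1) - ε n)) := by nlinarith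
      have := (pos_iff_pos_of_mul_pos this).1 (by linarith); linarith
  have hG1 : ∀ n, -1 < G n ∧ G n < 1 := by
    intro n
    have h1 := hεb n
    have h2 := hεb (n+1)
    rw [hG]
    constructor
    · have : 0 < (1+β) * (β * ε n - ε (n+1) + 1) := by nlinarith
      have := (pos_iff_pos_of_mul_pos this).1 (by linarith); linarith
    · have : 0 < (1+β) * (1 - (β * ε n - ε (n+1))) := by nlinarith
      have := (pos_iff_pos_of_mul_pos this).1 (by linarith); linarith
  have hFr : ∀ n, F n = a (n+1) + r * F (n+1) := by
    intro n
    rw [hF, hF, hrec]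
    linear_combination ((ε n) + a (n+1) - (r) * ε (n+1)- β * ε (n+1)) * hβr
  have hGr : ∀ n, G (n+1) = a (n+1) + r * G n := by
    intro n
    rw [hG, hG, hrec]
    linear_combination (- ε n) * hβr
  set t : ℕ → Bool := fun n => decide (F n < 0) with ht
  obtain ⟨τ, hτ⟩ : ∃ τ : ℕ → ℤ, ∀ n, τ n = if t n then 1 else 0 := ⟨_, fun _ => rfl⟩
  have hτ1 : ∀ n, F n < 0 → τ n = 1 := by intro n hn; simp [hτ, ht, hn]
  have hτ0 : ∀ n, 0 ≤ F n → τ n = 0 := by intro n hn; simp [hτ, ht, hn]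
  have haτ : ∀ n, a (n+1) = τ (n+1) - τ n := by
    intro n
    have h1 := hF1 n
    have h2 := hF1 (n+1)
    have h3 := hFr n
    have ha1 : a (n+1) < 2 := by
      have : (a (n+1) : ℝ) < 2 := by nlinarith
      exact_mod_cast this
    have ha2 : -2 < a (n+1) := by
      have : (-2:ℝ) < a (n+1) := by nlinarith
      exact_mod_cast this
    have hc : a (n+1) = -1 ∨ a (n+1) = 0 ∨ a (n+1) = 1 := by omega
    rcases hc with hc | hc | hc
    · rw [hc] at h3; push_cast at h3
      rw [hc, hτ1 n (by nlinarith), hτ0 (n+1) (by by_contra h; push Not at h; nlinarith)]; norm_num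
    · rw [hc] at h3; push_cast at h3
      rw [hc]
      rcases lt_or_ge (F (n+1)) 0 with h | h
      · rw [hτ1 _ h, hτ1 n (by nlinarith)]; norm_num
      · rw [hτ0 _ h, hτ0 n (by nlinarith)]; norm_num
    · rw [hc] at h3; push_cast at h3
      rw [hc, hτ0 n (by nlinarith), hτ1 (n+1) (by by_contra h; push Not at h; nlinarith)]; norm_num
  have hper : EvPer t → EvPer a := by
    rintro ⟨p, hp, N, h⟩
    refine ⟨p, hp, N+1, fun n hn => ?_⟩
    obtain ⟨m, rfl⟩ : ∃ m, n = m + 1 := ⟨n-1, by omega⟩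
    rw [show m+1+p = m+p+1 by ring, haτ, haτ, hτ, hτ, hτ, hτ, h m (by omega),
      show m+p+1 = m+1+p by ring, h (m+1) (by omega)]
  apply hper
  -- V and W
  obtain ⟨γ, hγ⟩ : ∃ γ : ℝ, γ * (1 - r) = 1 := ⟨(1-r)⁻¹, by rw [inv_mul_cancel₀]; linarith⟩
  have hγ0 : 0 < γ := by
    by_contra h; push Not at h; nlinarith
  have hγ2 : γ < 3/2 := by nlinarith
  obtain ⟨V, hV⟩ : ∃ V : ℕ → ℝ, ∀ n, V n = (F n + τ n) * γ := ⟨_, fun _ => rfl⟩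
  obtain ⟨W, hW⟩ : ∃ W : ℕ → ℝ, ∀ n, W n = (τ (n+1) - G (n+1)) * γ := ⟨_, fun _ => rfl⟩
  have hVr : ∀ n, V n = τ (n+1) + r * V (n+1) := by
    intro n
    rw [hV, hV, hFr, haτ]
    push_cast
    linear_combination (τ (n+1) : ℝ) * hγ
  have hWr : ∀ n, W (n+1) = τ (n+1) + r * W n := by
    intro n
    rw [hW, hW, hGr, haτ]
    push_cast
    linear_combination (τ (n+1) : ℝ) * hγ
  have hVW : ∀ n, V n - W n = (1 + β) * ε (n+1) := by
    intro n
    have h1 : (1-r) * (V n - W n) = (1 - r) * ((1 + β) * ε (n+1)) := by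
      have h2 : (1-r) * (V n - W n) = F n + G (n+1) - a (n+1) := by
        rw [hV, hW, haτ]; push_cast
        linear_combination (F n + τ n - τ (n+1) + G (n+1)) * hγ
      rw [h2, hF, hG, show n+1+1 = n+2 by ring, hrec]
      linear_combination (ε (n+1)) * hβr
    exact mul_left_cancel₀ (by linarith) h1
  have hτb : ∀ n, (τ n : ℝ) = 0 ∨ (τ n : ℝ) = 1 := by
    intro n; rw [hτ]; cases t n <;> simp
  have hV0 : ∀ n, 0 ≤ V n ∧ V n ≤ 3/2 := by
    intro n
    have h1 := hF1 n
    rw [hV]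
    rcases lt_or_ge (F n) 0 with h | h
    · rw [hτ1 _ h]; push_cast; constructor <;> nlinarith
    · rw [hτ0 _ h]; push_cast; constructor <;> nlinarith
  have hW0 : ∀ n, -(3/2) ≤ W n ∧ W n < 3 := by
    intro n
    have h1 := hG1 (n+1)
    rw [hW]
    rcases hτb (n+1) with h | h <;> rw [h] <;> constructor <;> nlinarith
  obtain ⟨K, hK⟩ := exists_pow_lt_of_lt_one (show 0 < δ / 5 by positivity) (show r < 1 by linarith)
  refine markoff K t ⟨K + 2, fun n hn hne => ?_⟩
  have hmatch : ∀ i ≤ K, (∀ j < i, t (n+2+j) = t (n-1-j)) →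
      V (n+1) - W (n-1) = r ^ i * (V (n+1+i) - W (n-1-i)) := by
    intro i
    induction i with
    | zero => intro _ _; simp
    | succ i ih =>
      intro hi hj
      rw [ih (by omega) (fun j h => hj j (by omega)), hVr (n+1+i)]
      have h1 := hWr (n-1-(i+1))
      rw [show n-1-(i+1)+1 = n-1-i by omega] at h1
      have h2 : τ (n+1+i+1) = τ (n-1-i) := by
        rw [hτ, hτ, ← hj i (by omega)]; congr 3; ring
      rw [h1, h2, show n+1+(i+1) = n+1+i+1 by ring, pow_succ]
      ring
  have hWn := hWr (n-1)
  rw [show n-1+1 = n by omega] at hWn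
  have hVn := hVr n
  have hd := hVW n
  have he := hεb (n+1)
  have hdiff : (t n = false ∧ t (n+1) = true ∧ V (n+1) - W (n-1) ≤ -δ) ∨
      (t n = true ∧ t (n+1) = false ∧ δ ≤ V (n+1) - W (n-1)) := by
    cases h1 : t n
    · have h2 : t (n+1) = true := by rw [h1] at hne; simpa using hne.symm
      left
      refine ⟨rfl, h2, ?_⟩
      have e1 : (τ n : ℝ) = 0 := by simp [hτ, h1]
      have e2 : (τ (n+1) : ℝ) = 1 := by simp [hτ, h2]
      rw [e1] at hWn; rw [e2] at hVn
      have : r * (V (n+1) - W (n-1)) ≤ -δ := by linarith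
      by_contra hc; push Not at hc
      nlinarith
    · have h2 : t (n+1) = false := by rw [h1] at hne; simpa using hne.symm
      right
      refine ⟨rfl, h2, ?_⟩
      have e1 : (τ n : ℝ) = 1 := by simp [hτ, h1]
      have e2 : (τ (n+1) : ℝ) = 0 := by simp [hτ, h2]
      rw [e1] at hWn; rw [e2] at hVn
      have : δ ≤ r * (V (n+1) - W (n-1)) := by linarith
      by_contra hc; push Not at hc
      nlinarith
  have hex : ∃ i, t (n+2+i) ≠ t (n-1-i) ∧ i < K := by
    by_contra hc
    push Not at hc
    have := hmatch K le_rfl (fun j hj => by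
      by_contra h'
      exact absurd (hc j h') (by omega))
    have b1 := hV0 (n+1+K)
    have b2 := hW0 (n-1-K)
    have b3 : 0 < r ^ K := by positivity
    rcases hdiff with ⟨-, -, h⟩ | ⟨-, -, h⟩
    · rw [this] at h; nlinarith
    · rw [this] at h; nlinarith
  classical
  obtain ⟨hl1, hl2⟩ := Nat.find_spec hex
  have hlmin := fun j (hj : j < Nat.find hex) => Nat.find_min hex hj
  set l := Nat.find hex
  have hm : ∀ j < l, t (n+2+j) = t (n-1-j) := by
    intro j hj
    by_contra h'
    exact hlmin j hj ⟨h', by omega⟩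
  have hml := hmatch l (by omega) hm
  have hrl : 0 < r ^ l := by positivity
  have hVl := hVr (n+1+l)
  have hWl := hWr (n-1-l-1)
  rw [show n-1-l-1+1 = n-1-l by omega] at hWl
  rw [show n+1+l+1 = n+2+l by ring] at hVl
  have b1 := hV0 (n+2+l)
  have b2 := hW0 (n-1-l-1)
  refine ⟨l, hl2, hm, ?_⟩
  rcases hdiff with ⟨h1, h2, h⟩ | ⟨h1, h2, h⟩
  · rw [h1, h2]
    cases h3 : t (n+2+l)
    · rw [h3] at hl1
      exact ⟨rfl, by simpa using hl1.symm⟩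
    · exfalso
      have h4 : t (n-1-l) = false := by rw [h3] at hl1; simpa using hl1.symm
      have e1 : (τ (n+2+l) : ℝ) = 1 := by simp [hτ, h3]
      have e2 : (τ (n-1-l) : ℝ) = 0 := by simp [hτ, h4]
      rw [e1] at hVl; rw [e2] at hWl
      have : 0 < V (n+1+l) - W (n-1-l) := by nlinarith
      nlinarith [mul_pos hrl this]
  · rw [h1, h2]
    cases h3 : t (n+2+l)
    · exfalso
      have h4 : t (n-1-l) = true := by rw [h3] at hl1; simpa using hl1.symm
      have e1 : (τ (n+2+l) : ℝ) = 0 := by simp [hτ, h3]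
      have e2 : (τ (n-1-l) : ℝ) = 1 := by simp [hτ, h4]
      rw [e1] at hVl; rw [e2] at hWl
      have : V (n+1+l) - W (n-1-l) ≤ 0 := by nlinarith
      nlinarith [mul_nonneg hrl.le (neg_nonneg.2 this)]
    · rw [h3] at hl1
      exact ⟨rfl, by simpa using hl1.symm⟩

set_option maxHeartbeats 1000000 in
theorem core2 (α b c : ℝ) (hb : 3 ≤ b) (hα0 : 0 < α) (hα : α ^ 2 = b * α + 1) (ε : ℕ → ℝ) (a : ℕ → ℤ)
    (hc : c * (1 + α ^ 2) < b)
    (hrec : ∀ n, ε (n+2) = b * ε (n+1) + ε n - a (n+1))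
    (hε : ∀ n, |ε n| ≤ c) : EvPer a := by
  obtain ⟨r, hr⟩ : ∃ r, r = α⁻¹ := ⟨_, rfl⟩
  have hαr : α * r = 1 := by rw [hr]; field_simp
  have hr0 : 0 < r := by rw [hr]; positivity
  have hbr : b = α - r := by
    have : α * b = α * (α - r) := by linear_combination -hα + hαr
    exact mul_left_cancel₀ hα0.ne' this
  have hα3 : 3 < α := by linarith
  have hr3 : r < 1/3 := by nlinarith
  have hc0 : 0 ≤ c := (abs_nonneg _).trans (hε 0)
  have hcr : c < r := by
    by_contra h; push Not at h
    nlinarith [mul_le_mul_of_nonneg_right h (sq_nonneg α)]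
  have hcb : c * (b^2 + 2) < b := by nlinarith
  have hε1 : ∀ n, -c ≤ ε n := fun n => (abs_le.1 (hε n)).1
  have hε2 : ∀ n, ε n ≤ c := fun n => (abs_le.1 (hε n)).2
  obtain ⟨F, hF⟩ : ∃ F : ℕ → ℝ, ∀ n, F n = α * ε (n+1) + ε n := ⟨_, fun _ => rfl⟩
  obtain ⟨G, hG⟩ : ∃ G : ℕ → ℝ, ∀ n, G n = α * ε n - ε (n+1) := ⟨_, fun _ => rfl⟩
  have hFr : ∀ n, F n = a (n+1) + r * F (n+1) := by
    intro n
    rw [hF, hF, hrec, hbr]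
    linear_combination (- (ε n) + a (n+1) + (r) * ε (n+1)- α * ε (n+1)) * hαr
  have hGr : ∀ n, G (n+1) = a (n+1) - r * G n := by
    intro n
    rw [hG, hG, hrec, hbr]
    linear_combination (ε n) * hαr
  have hFb : ∀ n, -(1+r) < F n ∧ F n < 1 + r := by
    intro n
    rw [hF]
    have h1 := hε1 n
    have h2 := hε1 (n+1)
    have h3 := hε2 n
    have h4 := hε2 (n+1)
    constructor <;> nlinarith
  have hGb : ∀ n, -(1+r) < G n ∧ G n < 1 + r := by
    intro n
    rw [hG]
    have h1 := hε1 n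
    have h2 := hε1 (n+1)
    have h3 := hε2 n
    have h4 := hε2 (n+1)
    constructor <;> nlinarith
  have ha : ∀ n, a (n+1) = -1 ∨ a (n+1) = 0 ∨ a (n+1) = 1 := by
    intro n
    have h1 := hFb n
    have h2 := hFb (n+1)
    have h3 := hFr n
    have ha1 : a (n+1) < 2 := by
      have : (a (n+1) : ℝ) < 2 := by nlinarith
      exact_mod_cast this
    have ha2 : -2 < a (n+1) := by
      have : (-2:ℝ) < a (n+1) := by nlinarith
      exact_mod_cast this
    omega
  have hadj : ∀ n, a (n+1) ≠ 0 → a (n+2) = 0 := by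
    intro n hn
    by_contra hn2
    have r1 := hrec n
    have r2 := hrec (n+1)
    rw [show n+1+2 = n+3 by ring, show n+1+1 = n+2 by ring] at r2
    have u0 := hε1 n
    have u1 := hε1 (n+1)
    have u2 := hε1 (n+2)
    have u3 := hε1 (n+3)
    have v0 := hε2 n
    have v1 := hε2 (n+1)
    have v2 := hε2 (n+2)
    have v3 := hε2 (n+3)
    rcases ha n with h | h | h <;> rcases ha (n+1) with h' | h' | h'
    all_goals first | exact hn h | exact hn2 h' | skip
    all_goals
      rw [h] at r1; rw [show n+1+1 = n+2 by ring] at h'; rw [h'] at r2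
      push_cast at r1 r2
      generalize ε n = x0 at *
      generalize ε (n+1) = x1 at *
      generalize ε (n+2) = x2 at *
      generalize ε (n+3) = x3 at *
    · nlinarith [mul_nonneg (sub_nonneg.2 u1) (show 0 ≤ b^2 by positivity), mul_nonneg (sub_nonneg.2 v1) (show 0 ≤ b^2 by positivity)]
    · nlinarith [mul_nonneg (sub_nonneg.2 u2) (show 0 ≤ b^2 by positivity), mul_nonneg (sub_nonneg.2 v2) (show 0 ≤ b^2 by positivity)]
    · nlinarith [mul_nonneg (sub_nonneg.2 u2) (show 0 ≤ b^2 by positivity), mul_nonneg (sub_nonneg.2 v2) (show 0 ≤ b^2 by positivity)]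
    · nlinarith [mul_nonneg (sub_nonneg.2 u1) (show 0 ≤ b^2 by positivity), mul_nonneg (sub_nonneg.2 v1) (show 0 ≤ b^2 by positivity)]
  have hF1 : ∀ n, a (n+1) = 0 → -1 < F (n+1) ∧ F (n+1) < 1 := by
    intro n hn
    have h1 := hFr n
    rw [hn] at h1; push_cast at h1
    have h2 : b * F (n+1) = α^2 * ε (n+2) - ε n := by
      have e0 := hF n
      have e1 := hF (n+1)
      rw [show n+1+1 = n+2 by ring] at e1
      rw [hbr]
      linear_combination α * e1 - e0 + h1
    have u0 := hε1 n
    have u2 := hε1 (n+2)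
    have v0 := hε2 n
    have v2 := hε2 (n+2)
    have w1 := mul_le_mul_of_nonneg_left u2 (sq_nonneg α)
    have w2 := mul_le_mul_of_nonneg_left v2 (sq_nonneg α)
    constructor <;> nlinarith
  have hG1 : ∀ n, a (n+1) = 0 → -1 < G n ∧ G n < 1 := by
    intro n hn
    have h1 := hGr n
    rw [hn] at h1; push_cast at h1
    have h2 : b * G n = α^2 * ε n - ε (n+2) := by
      have e0 := hG n
      have e1 := hG (n+1)
      rw [show n+1+1 = n+2 by ring] at e1
      rw [hbr]
      linear_combination α * e0 + e1 - h1
    have u0 := hε1 n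
    have u2 := hε1 (n+2)
    have v0 := hε2 n
    have v2 := hε2 (n+2)
    have w1 := mul_le_mul_of_nonneg_left u0 (sq_nonneg α)
    have w2 := mul_le_mul_of_nonneg_left v0 (sq_nonneg α)
    constructor <;> nlinarith
  have hH : ∀ n, a (n+2) ≠ 0 → F (n+2) * G (n+2) < 0 ∧ 0 < F (n+1) * G (n+1) := by
    intro n hn
    have z1 : a (n+1) = 0 := by
      by_contra h; exact hn (hadj n h)
    have z3 : a (n+3) = 0 := hadj (n+1) hn
    have f1 := hF1 n z1
    have g1 := hG1 (n+2) z3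
    have f2 := hFr (n+1)
    have g2 := hGr (n+1)
    rw [show n+1+1 = n+2 by ring] at f2 g2
    have f3 := hFb (n+2)
    have g3 := hGb (n+1)
    rcases ha (n+1) with h | h | h
    · rw [show n+1+1 = n+2 by ring] at h
      rw [h] at f2 g2; push_cast at f2 g2
      have a1 : F (n+1) < 0 := by nlinarith
      have a2 : 0 < F (n+2) := by by_contra h; push Not at h; nlinarith
      have a3 : G (n+2) < 0 := by nlinarith
      have a4 : G (n+1) < 0 := by by_contra h; push Not at h; nlinarith
      exact ⟨mul_neg_of_pos_of_neg a2 a3, mul_pos_of_neg_of_neg a1 a4⟩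
    · exact absurd h hn
    · rw [show n+1+1 = n+2 by ring] at h
      rw [h] at f2 g2; push_cast at f2 g2
      have a1 : 0 < F (n+1) := by nlinarith
      have a2 : F (n+2) < 0 := by by_contra h; push Not at h; nlinarith
      have a3 : 0 < G (n+2) := by nlinarith
      have a4 : 0 < G (n+1) := by by_contra h; push Not at h; nlinarith
      exact ⟨mul_neg_of_neg_of_pos a2 a3, mul_pos a1 a4⟩
  have hH0 : ∀ n, a (n+1) = 0 → F (n+1) * G (n+1) = - (F n * G n) := by
    intro n hn
    have f2 := hFr n
    have g2 := hGr n
    rw [hn] at f2 g2; push_cast at f2 g2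
    rw [f2, g2]; ring
  by_cases hz : ∀ n, a (n+2) = 0
  · refine ⟨1, one_pos, 2, fun n hn => ?_⟩
    obtain ⟨m, rfl⟩ : ∃ m, n = m + 2 := ⟨n-2, by omega⟩
    rw [hz m, show m+2+1 = m+1+2 by ring, hz]
  · push Not at hz
    obtain ⟨m, hm⟩ := hz
    have hodd0 : ∀ j, F (m+2+j) * G (m+2+j) < 0 → a (m+2+j+1) = 0 := by
      intro j hj
      by_contra h
      have := (hH (m+j+1) (by rw [show m+j+1+2 = m+2+j+1 by ring]; exact h)).2
      rw [show m+j+1+1 = m+2+j by ring] at this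
      linarith
    have heven : ∀ k, F (m+2+2*k) * G (m+2+2*k) < 0 := by
      intro k
      induction k with
      | zero => exact (hH m hm).1
      | succ k ih =>
        have h1 := hodd0 _ ih
        have h2 := hH0 _ h1
        by_cases h3 : a (m+2+2*k+1+1) = 0
        · have h4 := hH0 _ h3
          rw [show m+2+2*(k+1) = m+2+2*k+1+1 by ring, h4, h2]
          linarith
        · have := (hH (m+2+2*k) h3).1
          exact this
    have hodd : ∀ k, a (m+2+2*k+1) = 0 := fun k => hodd0 _ (heven k)
    have hper := core (α^2) (1 - c * (1+α^2) / b) (by nlinarith) (by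
      rw [sub_pos, div_lt_one (by linarith)]; exact hc)
      (fun k => ε (m+2+2*k) / b) (fun k => a (m+2+2*k)) (by
        intro k
        have e1 := hrec (m+2+2*k)
        have e2 := hrec (m+2+2*k+1)
        have e3 := hrec (m+2+2*k+2)
        have z1 := hodd k
        have z2 := hodd (k+1)
        rw [show m+2+2*(k+1)+1 = m+2+2*k+2+1 by ring] at z2
        rw [z1] at e1; rw [z2] at e3
        rw [show m+2+2*k+1+2 = m+2+2*k+2+1 by ring, show m+2+2*k+1+1 = m+2+2*k+2 by ring] at e2
        rw [show m+2+2*(k+2) = m+2+2*k+2+2 by ring, show m+2+2*(k+1) = m+2+2*k+2 by ring]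
        push_cast at e1 e3
        have hb2 : α^2 + (α^2)⁻¹ = b^2 + 2 := by
          rw [show (α^2)⁻¹ = r^2 by rw [hr]; ring, hbr]
          linear_combination 2 * hαr
        have hb0 : b ≠ 0 := by linarith
        rw [hb2]
        field_simp
        linear_combination e3 + b * e2 - e1)
      (by
        intro k
        have hb0 : 0 < b := by linarith
        have := hε (m+2+2*k)
        rw [abs_div, abs_of_pos hb0]
        have h3 : |ε (m+2+2*k)| * (1+α^2) ≤ c * (1+α^2) := by gcongr
        have h4 : |ε (m+2+2*k)| * (1+α^2) / b ≤ c * (1+α^2) / b := by gcongr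
        calc _ = |ε (m+2+2*k)| * (1+α^2) / b := by ring
          _ ≤ _ := by linarith)
    obtain ⟨p, hp, N, hN⟩ := hper
    refine ⟨2*p, by omega, m+2+2*N, fun n hn => ?_⟩
    obtain ⟨j, hj⟩ : ∃ j, n = m+2+j := ⟨n-(m+2), by omega⟩
    rcases Nat.even_or_odd' j with ⟨k, hk | hk⟩
    · have := hN k (by omega)
      simp only at this
      rw [hj, hk, ← this]; congr 1; ring
    · rw [hj, hk, ← add_assoc, hodd k, ← hodd (k+p)]; congr 1; ring

theorem perMem (α ξ : ℝ) (b s : ℤ) (hs : -1 ≤ s) (h1 : 1 < α) (hα : α^2 = b * α + s) (u a : ℕ → ℤ)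
    (hu : ∀ n, u (n+2) = b * u (n+1) + s * u n + a (n+1))
    (hbd : ∀ n, |ξ * α^n - u n| ≤ 1) (hper : EvPer a) :
    ξ ∈ IntermediateField.adjoin ℚ ({α} : Set ℝ) := by
  obtain ⟨p, hp, N, hN⟩ := hper
  have hα0 : α ≠ 0 := by linarith
  set U : ℕ → ℝ := fun n => u (n+p) - u n with hU
  have hUr : ∀ n ≥ N, U (n+2) = b * U (n+1) + s * U n := by
    intro n hn
    have e1 := hu n
    have e2 := hu (n+p)
    have e3 := hN (n+1) (by omega)
    rw [show n+1+p = n+p+1 by ring] at e3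
    rw [e3] at e2
    simp only [hU]
    rw [show n+2+p = n+p+2 by ring, show n+1+p = n+p+1 by ring, e1, e2]
    push_cast; ring
  have hY : ∀ k, U (N+k+1) * α + s * U (N+k) = α^k * (U (N+1) * α + s * U N) := by
    intro k
    induction k with
    | zero => simp
    | succ k ih =>
      have := hUr (N+k) (by omega)
      rw [pow_succ', mul_assoc, ← ih, show N+(k+1)+1 = N+k+2 by ring, this, show N+(k+1) = N+k+1 by ring]
      linear_combination (-U (N+k+1)) * hα
  have hUb : ∀ n, |ξ * α^n * (α^p-1) - U n| ≤ 2 := by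
    intro n
    have e1 := abs_le.1 (hbd n)
    have e2 := abs_le.1 (hbd (n+p))
    rw [pow_add] at e2
    simp only [hU]
    rw [abs_le]
    constructor <;> nlinarith
  set Z : ℝ := ξ * α^N * (α^p-1) * (α^2+s) - (U (N+1) * α + s * U N) with hZ
  have hZb : ∀ k, α^k * |Z| ≤ 2 * α + 2 * |(s:ℝ)| := by
    intro k
    have e : α^k * Z = (ξ * α^(N+k+1) * (α^p-1) - U (N+k+1)) * α + (ξ * α^(N+k) * (α^p-1) - U (N+k)) * s := by
      rw [hZ, mul_sub, ← hY k]; ring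
    have e1 := hUb (N+k+1)
    have e2 := hUb (N+k)
    rw [← abs_of_pos (show 0 < α^k by positivity), ← abs_mul, e]
    refine (abs_add_le _ _).trans ?_
    rw [abs_mul, abs_mul, abs_of_pos (show 0 < α by linarith)]
    gcongr
  have hZ0 : Z = 0 := by
    by_contra h
    have hpos : 0 < |Z| := abs_pos.2 h
    obtain ⟨k, hk⟩ := pow_unbounded_of_one_lt ((2 * α + 2 * |(s:ℝ)|) / |Z|) h1
    rw [div_lt_iff₀ hpos] at hk
    linarith [hZb k]
  have hαm : α ∈ IntermediateField.adjoin ℚ ({α} : Set ℝ) :=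
    IntermediateField.mem_adjoin_simple_self ℚ α
  have hint : ∀ k : ℤ, (k : ℝ) ∈ IntermediateField.adjoin ℚ ({α} : Set ℝ) := fun k => intCast_mem _ k
  have hp1 : 1 < α^p := one_lt_pow₀ h1 hp.ne'
  have hs' : (-1:ℝ) ≤ s := by exact_mod_cast hs
  have hden : α^N * (α^p-1) * (α^2+s) ≠ 0 := by
    have : 0 < α^N * (α^p-1) * (α^2+s) := by
      apply mul_pos (mul_pos (by positivity) (by linarith))
      nlinarith
    exact this.ne'
  have hξ : ξ = (U (N+1) * α + s * U N) / (α^N * (α^p-1) * (α^2+s)) := by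
    rw [eq_div_iff hden]
    linarith
  rw [hξ]
  have hUm : ∀ n, U n ∈ IntermediateField.adjoin ℚ ({α} : Set ℝ) := fun n => sub_mem (hint _) (hint _)
  exact div_mem (add_mem (mul_mem (hUm _) hαm) (mul_mem (hint _) (hUm _)))
    (mul_mem (mul_mem (pow_mem hαm _) (sub_mem (pow_mem hαm _) (one_mem _))) (add_mem (pow_mem hαm _) (hint _)))

lemma dist_nonneg' (x : ℝ) : 0 ≤ distNearestInt x := abs_nonneg _

lemma dist_le_half (x : ℝ) : distNearestInt x ≤ 1/2 := abs_sub_round x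

lemma dist_bdd (α ξ : ℝ) : Filter.IsBoundedUnder (· ≤ ·) Filter.atTop
    (fun n : ℕ => distNearestInt (ξ * α ^ n)) :=
  Filter.isBoundedUnder_of ⟨1/2, fun _ => dist_le_half _⟩

lemma dist_cobdd (α ξ : ℝ) : Filter.IsCoboundedUnder (· ≤ ·) Filter.atTop
    (fun n : ℕ => distNearestInt (ξ * α ^ n)) :=
  Filter.IsBoundedUnder.isCoboundedUnder_le
    (Filter.isBoundedUnder_of ⟨0, fun _ => dist_nonneg' _⟩)

theorem lower_gen (α ξ e : ℝ) (b s : ℤ) (hs : -1 ≤ s) (h1 : 1 < α) (hα : α^2 = b * α + s)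
    (hcore : ∀ c < e, ∀ (ε : ℕ → ℝ) (a : ℕ → ℤ), (∀ n, ε (n+2) = b * ε (n+1) + s * ε n - a (n+1)) →
      (∀ n, |ε n| ≤ c) → EvPer a)
    (hξ : ξ ∉ IntermediateField.adjoin ℚ ({α} : Set ℝ)) : e ≤ limsupDist α ξ := by
  by_contra hlt
  push Not at hlt
  obtain ⟨c, hc1, hc2⟩ := exists_between hlt
  have hev := Filter.eventually_lt_of_limsup_lt hc1 (dist_bdd α ξ)
  obtain ⟨N, hN⟩ := Filter.eventually_atTop.1 hev
  apply hξ
  set u : ℕ → ℤ := fun n => round (ξ * α^N * α^n) with hu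
  set a : ℕ → ℤ := fun n => u (n+1) - b * u n - s * u (n-1) with ha
  have hb : ∀ n, |ξ * α^N * α^n - u n| ≤ c := by
    intro n
    have := hN (N+n) (by omega)
    rw [pow_add, ← mul_assoc] at this
    exact this.le
  have har : ∀ n, u (n+2) = b * u (n+1) + s * u n + a (n+1) := by
    intro n; simp only [ha, Nat.add_sub_cancel]; ring
  have hper : EvPer a := by
    refine hcore c hc2 (fun n => ξ * α^N * α^n - u n) a ?_ hb
    intro n
    simp only [har n]
    push_cast
    rw [pow_add, hα]; ring
  have hm := perMem α (ξ * α^N) b s hs h1 hα u a har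
    (fun n => (abs_sub_round _).trans (by norm_num)) hper
  have hαm : α ∈ IntermediateField.adjoin ℚ ({α} : Set ℝ) :=
    IntermediateField.mem_adjoin_simple_self ℚ α
  have := div_mem hm (pow_mem hαm N)
  rwa [mul_div_cancel_right₀ _ (by positivity)] at this

open Classical in
noncomputable def spt (n : ℕ) : ℤ := if ∃ k, n = 2^k then 1 else 0

lemma spt01 (n : ℕ) : spt n = 0 ∨ spt n = 1 := by
  unfold spt; split_ifs <;> simp

lemma spt_inf (N : ℕ) : ∃ n ≥ N, spt n = 1 :=
  ⟨2^N, Nat.lt_two_pow_self.le, by unfold spt; rw [if_pos ⟨N, rfl⟩]⟩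

lemma spt_sparse (L n : ℕ) (hn : 2 * L + 2 ≤ n) (h : spt n = 1) (j : ℕ) (hj : 1 ≤ j) (hjL : j ≤ L) :
    spt (n+j) = 0 ∧ spt (n-j) = 0 := by
  have h' : ∃ k, n = 2^k := by
    by_contra hc; unfold spt at h; rw [if_neg hc] at h; omega
  obtain ⟨k, hk⟩ := h'
  unfold spt
  constructor
  · rw [if_neg]
    rintro ⟨l, hl⟩
    have h1 : 2^k < 2^l := by omega
    have h2 := (Nat.pow_lt_pow_iff_right (by norm_num : 1 < 2)).1 h1
    have h3 : 2^(k+1) ≤ 2^l := Nat.pow_le_pow_right (by norm_num) h2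
    rw [pow_succ] at h3
    omega
  · rw [if_neg]
    rintro ⟨l, hl⟩
    have h1 : 2^l < 2^k := by omega
    have h2 := (Nat.pow_lt_pow_iff_right (by norm_num : 1 < 2)).1 h1
    have h3 : 2^(l+1) ≤ 2^k := Nat.pow_le_pow_right (by norm_num) h2
    rw [pow_succ] at h3
    omega

/-- Data of the extremal construction. -/
lemma construct (β : ℝ) (B : ℤ) (hβ : 3 < β) (hB : β^2 = B * β - 1) :
    ∃ V W : ℕ → ℝ, ∃ u : ℕ → ℤ,
      (∀ n, V 0 / (1+β) * β^n - u n = (V n - W n) / (1 + β)) ∧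
      (∀ η > 0, ∃ N, ∀ n ≥ N, |V n - W n| ≤ 1 + η) ∧
      (∀ x y : ℚ, V 0 ≠ x + y * β) := by
  obtain ⟨r, hr⟩ : ∃ r, r = β⁻¹ := ⟨_, rfl⟩
  have hβr : β * r = 1 := by rw [hr]; field_simp
  have hr0 : 0 < r := by rw [hr]; positivity
  have hr3 : r < 1/3 := by nlinarith
  have hBr : (B : ℝ) = β + r := by
    have : β * B = β * (β + r) := by linear_combination -hB - hβr
    exact mul_left_cancel₀ (by linarith) this
  have ht0 : ∀ n, (0:ℝ) ≤ spt n := by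
    intro n; rcases spt01 n with h | h <;> simp [h]
  have ht1 : ∀ n, (spt n : ℝ) ≤ 1 := by
    intro n; rcases spt01 n with h | h <;> simp [h]
  have hgeo : Summable (fun j : ℕ => r^j) := summable_geometric_of_lt_one hr0.le (by linarith)
  have hsum : ∀ n, Summable (fun j : ℕ => (spt (n+j) : ℝ) * r^j) := by
    intro n
    refine Summable.of_nonneg_of_le (fun j => mul_nonneg (ht0 _) (by positivity)) (fun j => ?_) hgeo
    have : 0 < r^j := by positivity
    nlinarith [ht1 (n+j)]
  obtain ⟨V, hV⟩ : ∃ V : ℕ → ℝ, ∀ n, V n = ∑' j : ℕ, (spt (n+j) : ℝ) * r^j := ⟨_, fun _ => rfl⟩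
  have hVr : ∀ n, V n = spt n + r * V (n+1) := by
    intro n
    rw [hV, (hsum n).tsum_eq_zero_add, hV, ← tsum_mul_left]
    simp only [add_zero, pow_zero, mul_one]
    congr 1
    apply tsum_congr
    intro j
    rw [show n+(j+1) = n+1+j by ring, pow_succ]; ring
  have hV0 : ∀ n, 0 ≤ V n := by
    intro n; rw [hV]; exact tsum_nonneg (fun j => mul_nonneg (ht0 _) (by positivity))
  have hV2 : ∀ n, V n ≤ 2 := by
    intro n
    rw [hV]
    have : ∑' j : ℕ, (spt (n+j) : ℝ) * r^j ≤ ∑' j : ℕ, r^j := by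
      refine Summable.tsum_le_tsum (fun j => ?_) (hsum n) hgeo
      have : 0 < r^j := by positivity
      nlinarith [ht1 (n+j)]
    rw [tsum_geometric_of_lt_one hr0.le (by linarith)] at this
    refine this.trans ?_
    rw [inv_le_comm₀ (by linarith) (by norm_num)]
    linarith
  set W : ℕ → ℝ := fun n => Nat.rec 0 (fun n w => spt n + r * w) n with hW
  have hW00 : W 0 = 0 := rfl
  have hWr : ∀ n, W (n+1) = spt n + r * W n := fun n => rfl
  have hW0 : ∀ n, 0 ≤ W n ∧ W n ≤ 2 := by
    intro n
    induction n with
    | zero => rw [hW00]; norm_num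
    | succ n ih =>
      rw [hWr]
      have h1 := ht0 n
      have h2 := ht1 n
      constructor <;> nlinarith
  clear_value W
  have hVz : ∀ l n, (∀ j < l, spt (n+j) = 0) → V n = r^l * V (n+l) := by
    intro l
    induction l with
    | zero => intro n _; simp
    | succ l ih =>
      intro n h
      rw [ih n (fun j hj => h j (by omega)), hVr (n+l), h l (by omega), pow_succ,
        show n+l+1 = n+(l+1) by ring]
      push_cast; ring
  have hWz : ∀ l n, (∀ j < l, spt (n+j) = 0) → W (n+l) = r^l * W n := by
    intro l
    induction l with
    | zero => intro n _; simp
    | succ l ih =>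
      intro n h
      rw [show n+(l+1) = n+l+1 by ring, hWr, ih n (fun j hj => h j (by omega)), h l (by omega), pow_succ]
      push_cast; ring
  have hint : ∀ n, ∃ u w : ℤ, β^n * V 0 - V n + W n = (1+β) * u ∧
      β * (β^n * V 0 - V n) + r * W n = (1+β) * w := by
    intro n
    induction n with
    | zero => exact ⟨0, 0, by simp [hW00], by simp [hW00]⟩
    | succ n ih =>
      obtain ⟨u, w, h1, h2⟩ := ih
      have hP : β^(n+1) * V 0 - V (n+1) = β * (β^n * V 0 - V n) + β * spt n := by
        have := hVr n
        rw [pow_succ]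
        linear_combination β * this + (V (n+1)) * hβr
      refine ⟨spt n + w, B * w - u + (B-1) * spt n, ?_, ?_⟩
      · rw [hP, hWr]; push_cast
        linear_combination h2
      · rw [hP, hWr]; push_cast; rw [hBr]
        linear_combination (β + r) * h2 - h1 + (-(β^n * V 0 - V n) - W n - spt n ) * hβr
  choose u w hu hw using hint
  have hβ1 : (1 + β) ≠ 0 := by linarith
  refine ⟨V, W, u, ?_, ?_, ?_⟩
  · intro n
    field_simp
    linear_combination hu n
  · intro η hη
    obtain ⟨L, hL⟩ := exists_pow_lt_of_lt_one (show 0 < η / 2 by positivity) (show r < 1 by linarith)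
    have hrL : 0 < r^L := by positivity
    refine ⟨2*L+3, fun n hn => ?_⟩
    have hVn : V n ≤ 1 + η := by
      rw [hVr n]
      rcases spt01 n with h | h
      · rw [h]; push_cast; nlinarith [hV2 (n+1)]
      · rw [h, hVz L (n+1) (fun j hj => by
          have := (spt_sparse L n (by omega) h (j+1) (by omega) (by omega)).1
          rwa [show n+(j+1) = n+1+j by ring] at this)]
        push_cast
        have h1 := hV2 (n+1+L)
        have h0 := hV0 (n+1+L)
        have : r^L * V (n+1+L) ≤ η := by nlinarith
        have h3 : 0 ≤ r^L * V (n+1+L) := by positivity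
        nlinarith
    have hWn : W n ≤ 1 + η := by
      obtain ⟨m, rfl⟩ : ∃ m, n = m + 1 := ⟨n-1, by omega⟩
      rw [hWr m]
      rcases spt01 m with h | h
      · rw [h]; push_cast; nlinarith [(hW0 m).2]
      · have := hWz L (m-L) (fun j hj => by
          have := (spt_sparse L m (by omega) h (L-j) (by omega) (by omega)).2
          rwa [show m-(L-j) = m-L+j by omega] at this)
        rw [show m-L+L = m by omega] at this
        rw [h, this]
        push_cast
        obtain ⟨h0, h1⟩ := hW0 (m-L)
        have : r^L * W (m-L) ≤ η := by nlinarith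
        have h3 : 0 ≤ r^L * W (m-L) := by positivity
        nlinarith
    rw [abs_le]
    constructor <;> linarith [hV0 n, (hW0 n).1]
  · intro x y hxy
    -- clear denominators
    obtain ⟨q, X, Y, hq, hqe⟩ : ∃ q X Y : ℤ, 0 < q ∧ (q:ℝ) * V 0 = X + Y * β := by
      refine ⟨x.den * y.den, x.num * y.den, y.num * x.den, by positivity, ?_⟩
      have hx : (x:ℝ) * x.den = x.num := by exact_mod_cast Rat.mul_den_eq_num x
      have hy : (y:ℝ) * y.den = y.num := by exact_mod_cast Rat.mul_den_eq_num y
      rw [hxy]; push_cast; rw [← hx, ← hy]; ring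
    have hq' : (1:ℝ) ≤ q := by exact_mod_cast hq
    have hXY : ∀ n, ∃ X' Y' : ℤ, (q:ℝ) * V n = X' + Y' * β ∧ |X' + Y' * r| ≤ |X + Y * r| + q := by
      intro n
      induction n with
      | zero => exact ⟨X, Y, hqe, by linarith⟩
      | succ n ih =>
        obtain ⟨X', Y', h1, h2⟩ := ih
        refine ⟨-Y', X' - q * spt n + B * Y', ?_, ?_⟩
        · push_cast; rw [hBr]
          linear_combination (-(q * β)) * hVr n + β * h1 + (-q * V (n+1) - Y') * hβr
        · have : (((-Y' : ℤ) : ℝ) + ((X' - q * spt n + B * Y' : ℤ) : ℝ) * r) = r * ((X' + Y' * r) - q * spt n) := by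
            push_cast; rw [hBr]; linear_combination Y' * hβr
          rw [this, abs_mul, abs_of_pos hr0]
          have h3 : |(X' + Y' * r) - q * spt n| ≤ |X' + Y' * r| + q := by
            refine (abs_sub _ _).trans ?_
            rw [abs_of_nonneg (mul_nonneg (by linarith) (ht0 n))]
            nlinarith [ht1 n]
          have h4 := abs_nonneg (X + Y * r)
          nlinarith
    set M := |X + Y * r| + q with hM
    have hM0 : 1 ≤ M := by have := abs_nonneg (X + Y * r); linarith
    obtain ⟨L, hL⟩ := exists_pow_lt_of_lt_one (show 0 < 1 / (2 * q * M) by positivity) (show r < 1 by linarith)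
    obtain ⟨n, hn, hn1⟩ := spt_inf (2*L+2)
    have hz := hVz L (n+1) (fun j hj => by
          have := (spt_sparse L n (by omega) hn1 (j+1) (by omega) (by omega)).1
          rwa [show n+(j+1) = n+1+j by ring] at this)
    have hVpos : ∀ m, 0 < V m := by
      intro m
      obtain ⟨k, hk, hk1⟩ := spt_inf m
      have : ∀ d, 0 < V (k - d) := by
        intro d
        induction d with
        | zero =>
          rw [Nat.sub_zero, hVr, hk1]; push_cast
          have := hV0 (k+1)
          positivity
        | succ d ih =>
          rcases Nat.lt_or_ge d k with h | h
          · rw [hVr, show k-(d+1)+1 = k-d by omega]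
            have := ht0 (k-(d+1))
            positivity
          · rwa [show k-(d+1) = k-d by omega]
      have h2 := this (k-m)
      rwa [show k-(k-m) = m by omega] at h2
    obtain ⟨X', Y', h1, h2⟩ := hXY (n+1)
    have hzp : 0 < (q:ℝ) * V (n+1) := mul_pos (by linarith) (hVpos _)
    have hzs : (q:ℝ) * V (n+1) * M < 1 := by
      rw [hz]
      have h3 := hV2 (n+1+L)
      have h4 := hVpos (n+1+L)
      rw [lt_div_iff₀ (by positivity)] at hL
      have : (q:ℝ) * (r^L * V (n+1+L)) * M = (r^L * (2 * q * M)) * (V (n+1+L) / 2) := by ring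
      rw [this]
      have : 0 < r^L * (2 * q * M) := by positivity
      nlinarith
    have hnorm : ((X'^2 + B * X' * Y' + Y'^2 : ℤ) : ℝ) = (q * V (n+1)) * (X' + Y' * r) := by
      rw [h1]; push_cast; rw [hBr]; linear_combination (-(Y':ℝ)^2) * hβr
    have hN0 : X'^2 + B * X' * Y' + Y'^2 = 0 := by
      have : |((X'^2 + B * X' * Y' + Y'^2 : ℤ) : ℝ)| < 1 := by
        rw [hnorm, abs_mul, abs_of_pos hzp]
        nlinarith
      rw [← Int.cast_abs] at this
      have h5 : |X'^2 + B * X' * Y' + Y'^2| < 1 := by exact_mod_cast this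
      exact Int.abs_lt_one_iff.1 h5
    rw [hN0, Int.cast_zero] at hnorm
    have hz' : (X' : ℝ) + Y' * r = 0 := by
      rcases mul_eq_zero.1 hnorm.symm with h | h
      · linarith
      · exact h
    have hzY : (q:ℝ) * V (n+1) = Y' * (β - r) := by rw [h1]; linear_combination hz'
    have hYpos : 0 < Y' := by
      have : (0:ℝ) < Y' := by
        by_contra hc; push Not at hc
        nlinarith
      exact_mod_cast this
    have hY1 : (1:ℝ) ≤ Y' := by exact_mod_cast hYpos
    nlinarith

lemma mem_adj (α : ℝ) (b s : ℤ) (hα : α^2 = b * α + s) (ξ : ℝ)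
    (h : ξ ∈ IntermediateField.adjoin ℚ ({α} : Set ℝ)) : ∃ x y : ℚ, ξ = x + y * α := by
  have halg : IsAlgebraic ℚ α := by
    obtain ⟨b', hb'⟩ : ∃ b' : ℚ, (b':ℝ) = b := ⟨b, by simp⟩
    obtain ⟨s', hs'⟩ : ∃ b' : ℚ, (b':ℝ) = s := ⟨s, by simp⟩
    refine ⟨Polynomial.X^2 - Polynomial.C b' * Polynomial.X - Polynomial.C s', ?_, ?_⟩
    · intro h0
      have := congrArg (fun p => Polynomial.coeff p 2) h0
      simp [Polynomial.coeff_X, Polynomial.coeff_C] at this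
    · simp [hα, hb', hs']
  have h' : ξ ∈ (IntermediateField.adjoin ℚ ({α} : Set ℝ)).toSubalgebra := h
  rw [IntermediateField.adjoin_simple_toSubalgebra_of_isAlgebraic halg] at h'
  clear h
  induction h' using Algebra.adjoin_induction with
  | mem z hz => exact ⟨0, 1, by simp at hz; simp [hz]⟩
  | algebraMap q => exact ⟨q, 0, by simp⟩
  | add y z _ _ hy hz =>
    obtain ⟨x1, y1, rfl⟩ := hy
    obtain ⟨x2, y2, rfl⟩ := hz
    exact ⟨x1+x2, y1+y2, by push_cast; ring⟩
  | mul y z _ _ hy hz =>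
    obtain ⟨x1, y1, rfl⟩ := hy
    obtain ⟨x2, y2, rfl⟩ := hz
    exact ⟨x1*x2+s*(y1*y2), x1*y2+y1*x2+b*(y1*y2), by push_cast; linear_combination ((y1:ℝ)*y2)*hα⟩

lemma limsup_ub (α ξ e : ℝ) (h : ∀ η > 0, ∃ N, ∀ n ≥ N, ∃ v : ℤ, |ξ * α^n - v| ≤ (1+η) * e) (he : 0 < e) :
    limsupDist α ξ ≤ e := by
  apply le_of_forall_pos_le_add
  intro η hη
  obtain ⟨N, hN⟩ := h (η / e) (by positivity)
  unfold limsupDist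
  refine Filter.limsup_le_of_le (dist_cobdd α ξ) ?_
  filter_upwards [Filter.eventually_ge_atTop N] with n hn
  obtain ⟨v, hv⟩ := hN n hn
  refine le_trans (round_le _ v) (hv.trans (le_of_eq ?_))
  field_simp

lemma sInf_fin (α e ξ : ℝ)
    (hl : ∀ ξ : ℝ, ξ ∉ IntermediateField.adjoin ℚ ({α} : Set ℝ) → e ≤ limsupDist α ξ)
    (hξ : ξ ∉ IntermediateField.adjoin ℚ ({α} : Set ℝ)) (hu : limsupDist α ξ ≤ e) :
    sInf {l : ℝ | ∃ ξ : ℝ,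
          ξ ∉ IntermediateField.adjoin ℚ ({α} : Set ℝ) ∧ limsupDist α ξ = l} = e := by
  apply le_antisymm
  · refine le_trans (csInf_le ?_ ?_) hu
    · refine ⟨e, ?_⟩
      rintro l ⟨x, hx, rfl⟩
      exact hl x hx
    · exact ⟨ξ, hξ, rfl⟩
  · refine le_csInf ⟨_, ξ, hξ, rfl⟩ ?_
    rintro l ⟨x, hx, rfl⟩
    exact hl x hx

lemma case1 (b : ℤ) (α : ℝ) (h3 : 3 < α) (hα : α^2 = b * α - 1) :
    sInf {l : ℝ | ∃ ξ : ℝ,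
          ξ ∉ IntermediateField.adjoin ℚ ({α} : Set ℝ) ∧ limsupDist α ξ = l} = 1 / (1 + α) := by
  have hα' : α^2 = b * α + ((-1 : ℤ) : ℝ) := by push_cast; linarith
  have hα0 : 0 < α := by linarith
  have hbα : (b:ℝ) = α + α⁻¹ := by field_simp; linarith
  obtain ⟨V, W, u, h1, h2, h4⟩ := construct α b h3 hα
  refine sInf_fin α _ (V 0 / (1+α)) ?_ ?_ ?_
  · intro ξ hξ
    refine lower_gen α ξ _ b (-1) le_rfl (by linarith) hα' ?_ hξ
    intro c hc ε a hr hε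
    rw [lt_div_iff₀ (by linarith)] at hc
    refine core α (1 - c * (1+α)) h3 (by linarith) ε a ?_ ?_
    · intro n
      rw [hr n, ← hbα]; push_cast; ring
    · intro n
      have := mul_le_mul_of_nonneg_right (hε n) (show 0 ≤ 1 + α by linarith)
      linarith
  · intro hm
    have hm2 : V 0 ∈ IntermediateField.adjoin ℚ ({α} : Set ℝ) := by
      have h5 : (1 + α) ∈ IntermediateField.adjoin ℚ ({α} : Set ℝ) :=
        add_mem (one_mem _) (IntermediateField.mem_adjoin_simple_self ℚ α)
      have := mul_mem hm h5
      rwa [div_mul_cancel₀ _ (by linarith)] at this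
    obtain ⟨x, y, hxy⟩ := mem_adj α b (-1) hα' _ hm2
    exact h4 x y hxy
  · refine limsup_ub _ _ _ ?_ (by positivity)
    intro η hη
    obtain ⟨N, hN⟩ := h2 η hη
    refine ⟨N, fun n hn => ⟨u n, ?_⟩⟩
    rw [h1 n, abs_div, abs_of_pos (show 0 < 1 + α by linarith), mul_one_div]
    have := hN n hn
    gcongr

lemma case2 (b : ℤ) (α : ℝ) (hb : 3 ≤ b) (h3 : 3 < α) (hα : α^2 = b * α + 1) :
    sInf {l : ℝ | ∃ ξ : ℝ,
          ξ ∉ IntermediateField.adjoin ℚ ({α} : Set ℝ) ∧ limsupDist α ξ = l} = b / (1 + α^2) := by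
  have hα' : α^2 = b * α + ((1 : ℤ) : ℝ) := by push_cast; linarith
  have hα0 : 0 < α := by linarith
  have hbR : (3:ℝ) ≤ b := by exact_mod_cast hb
  have hb0 : (b:ℝ) ≠ 0 := by linarith
  have hB : (α^2)^2 = ((b^2+2 : ℤ) : ℝ) * α^2 - 1 := by
    push_cast
    linear_combination (α^2 + b * α - 1) * hα
  have hp : 0 < 1 + α^2 := by positivity
  obtain ⟨V, W, u, h1, h2, h4⟩ := construct (α^2) (b^2+2) (by nlinarith) hB
  refine sInf_fin α _ (b * (V 0 / (1+α^2))) ?_ ?_ ?_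
  · intro ξ hξ
    refine lower_gen α ξ _ b 1 (by norm_num) (by linarith) hα' ?_ hξ
    intro c hc ε a hr hε
    rw [lt_div_iff₀ hp] at hc
    refine core2 α b c hbR hα0 hα ε a hc ?_ hε
    intro n
    rw [hr n]; push_cast; ring
  · intro hm
    have hm2 : V 0 ∈ IntermediateField.adjoin ℚ ({α} : Set ℝ) := by
      have h5 : (1 + α^2) / b ∈ IntermediateField.adjoin ℚ ({α} : Set ℝ) :=
        div_mem (add_mem (one_mem _) (pow_mem (IntermediateField.mem_adjoin_simple_self ℚ α) 2)) (intCast_mem _ b)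
      have h6 := mul_mem hm h5
      have h7 : (b:ℝ) * (V 0 / (1+α^2)) * ((1 + α^2) / b) = V 0 := by field_simp
      rwa [h7] at h6
    obtain ⟨x, y, hxy⟩ := mem_adj α b 1 hα' _ hm2
    refine h4 (x - y / b) (y / b) ?_
    rw [hxy]; push_cast; rw [hα]; field_simp; ring
  · refine limsup_ub _ _ _ ?_ (by positivity)
    intro η hη
    obtain ⟨N, hN⟩ := h2 η hη
    refine ⟨2 * N, fun n hn => ?_⟩
    have key : ∀ z : ℝ, |z| ≤ b * (1+η) → |z / (1+α^2)| ≤ (1+η) * (b / (1+α^2)) := by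
      intro z hz
      rw [abs_div, abs_of_pos hp, ← mul_div_assoc, mul_comm (1+η)]
      gcongr
    rcases Nat.even_or_odd' n with ⟨m, rfl | rfl⟩
    · refine ⟨b * u m, ?_⟩
      have e : b * (V 0 / (1+α^2)) * α^(2*m) - ((b * u m : ℤ) : ℝ) = (b * (V m - W m)) / (1+α^2) := by
        rw [mul_div_assoc, ← h1 m, pow_mul]; push_cast; ring
      rw [e]
      apply key
      rw [abs_mul, abs_of_pos (show (0:ℝ) < b by linarith)]
      exact mul_le_mul_of_nonneg_left (hN m (by omega)) (by linarith)
    · refine ⟨u (m+1) - u m, ?_⟩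
      have e : b * (V 0 / (1+α^2)) * α^(2*m+1) - ((u (m+1) - u m : ℤ) : ℝ)
          = ((V (m+1) - W (m+1)) - (V m - W m)) / (1+α^2) := by
        rw [sub_div, ← h1 m, ← h1 (m+1), pow_succ α (2*m), pow_mul, pow_succ (α^2) m]; push_cast
        linear_combination (-(V 0 / (1+α^2)) * (α^2)^m) * hα
      rw [e]
      apply key
      have a1 := hN m (by omega)
      have a2 := hN (m+1) (by omega)
      have a3 := abs_sub (V (m+1) - W (m+1)) (V m - W m)
      nlinarith

theorem stmt8 (b : ℤ) (α : ℝ) :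
    (4 ≤ b → α = ((b : ℝ) + Real.sqrt ((b : ℝ) ^ 2 - 4)) / 2 →
      sInf {l : ℝ | ∃ ξ : ℝ,
          ξ ∉ IntermediateField.adjoin ℚ ({α} : Set ℝ) ∧ limsupDist α ξ = l} =
        1 / (1 + α)) ∧
    (3 ≤ b → α = ((b : ℝ) + Real.sqrt ((b : ℝ) ^ 2 + 4)) / 2 →
      sInf {l : ℝ | ∃ ξ : ℝ,
          ξ ∉ IntermediateField.adjoin ℚ ({α} : Set ℝ) ∧ limsupDist α ξ = l} =
        (b : ℝ) / (1 + α ^ 2)) := by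
  constructor
  · intro hb hα
    have hbR : (4:ℝ) ≤ b := by exact_mod_cast hb
    have hs := Real.sq_sqrt (show (0:ℝ) ≤ (b:ℝ)^2 - 4 by nlinarith)
    have h2 : 2 < √((b:ℝ)^2 - 4) := Real.lt_sqrt_of_sq_lt (by nlinarith)
    refine case1 b α (by linarith) ?_
    rw [hα]; linear_combination hs / 4
  · intro hb hα
    have hbR : (3:ℝ) ≤ b := by exact_mod_cast hb
    have hs := Real.sq_sqrt (show (0:ℝ) ≤ (b:ℝ)^2 + 4 by nlinarith)
    have h2 : 3 < √((b:ℝ)^2 + 4) := Real.lt_sqrt_of_sq_lt (by nlinarith)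
    refine case2 b α hb (by linarith) ?_
    rw [hα]; linear_combination hs / 4
end

section
/- Let x ∈ X_F and suppose that for some integers a, b ≥ 0 the word 1 0^a 1 0^b 1 is a factor of x. Then |a − b| ≤ 1. -/
/-- `u` occurs as a block of consecutive letters of the bi-infinite word `x : ℤ → Bool`. -/
def IsFactorZ (u : List Bool) (x : ℤ → Bool) : Prop :=
  ∃ i : ℤ, ∀ k : ℕ, k < u.length → x (i + k) = u.getD k false

/-- `u` occurs as a block of consecutive letters of the right-infinite word `y : ℕ → Bool`. -/
def IsFactorN (u : List Bool) (y : ℕ → Bool) : Prop :=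
  ∃ i : ℕ, ∀ k : ℕ, k < u.length → y (i + k) = u.getD k false

/-- The forbidden word `0v01ṽ1` (with `0 = false`, `1 = true`). -/
def forbidden1 (v : List Bool) : List Bool :=
  [false] ++ v ++ [false, true] ++ v.reverse ++ [true]

/-- The forbidden word `1v10ṽ0` (with `0 = false`, `1 = true`). -/
def forbidden2 (v : List Bool) : List Bool :=
  [true] ++ v ++ [true, false] ++ v.reverse ++ [false]

/-- Membership in the subshift `X_F`: no factor of `x` lies in `F`. -/
def memXF (x : ℤ → Bool) : Prop :=
  ∀ v : List Bool, ¬ IsFactorZ (forbidden1 v) x ∧ ¬ IsFactorZ (forbidden2 v) x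

/-- Membership in the one-sided subshift `Y_F`: no factor of `y` lies in `F`. -/
def memYF (y : ℕ → Bool) : Prop :=
  ∀ v : List Bool, ¬ IsFactorN (forbidden1 v) y ∧ ¬ IsFactorN (forbidden2 v) y

/-- A finite word is balanced if any two factors of equal length have numbers of
occurrences of `1` differing by at most one. -/
def BalancedL (w : List Bool) : Prop :=
  ∀ u v : List Bool, u <:+: w → v <:+: w → u.length = v.length →
    |(u.count true : ℤ) - (v.count true : ℤ)| ≤ 1

/-- A right-infinite word is balanced if any two factors of equal length have numbers of
occurrences of `1` differing by at most one. -/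
def BalancedN (y : ℕ → Bool) : Prop :=
  ∀ u v : List Bool, IsFactorN u y → IsFactorN v y → u.length = v.length →
    |(u.count true : ℤ) - (v.count true : ℤ)| ≤ 1

/-- A bi-infinite word is balanced if any two factors of equal length have numbers of
occurrences of `1` differing by at most one. -/
def BalancedZ (x : ℤ → Bool) : Prop :=
  ∀ u v : List Bool, IsFactorZ u x → IsFactorZ v x → u.length = v.length →
    |(u.count true : ℤ) - (v.count true : ℤ)| ≤ 1

theorem factor_mid {p u s : List Bool} {x : ℤ → Bool} (h : IsFactorZ (p ++ (u ++ s)) x) :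
    IsFactorZ u x := by
  obtain ⟨i, hi⟩ := h
  refine ⟨i + p.length, fun k hk => ?_⟩
  have h1 := hi (p.length + k) (by simp; omega)
  rw [List.getD_append_right _ _ _ _ (by omega), Nat.add_sub_cancel_left,
    List.getD_append _ _ _ _ hk] at h1
  rw [← h1]
  congr 1
  push_cast
  ring

theorem stmt9 (x : ℤ → Bool) (hx : memXF x) (a b : ℕ)
    (hfac : IsFactorZ
      ([true] ++ List.replicate a false ++ [true] ++ List.replicate b false ++ [true]) x) :
    |(a : ℤ) - (b : ℤ)| ≤ 1 := by
  by_contra hc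
  have hab : b + 2 ≤ a ∨ a + 2 ≤ b := by
    by_contra h
    apply hc
    rw [abs_le]
    omega
  rcases hab with h | h
  · obtain ⟨c, rfl⟩ := Nat.exists_eq_add_of_le h
    refine (hx (List.replicate b false)).1
      (factor_mid (p := [true] ++ List.replicate c false) (s := []) ?_)
    convert hfac using 1
    have : List.replicate (b + 2 + c) false
        = List.replicate c false ++ [false] ++ List.replicate b false ++ [false] := by
      symm
      rw [List.eq_replicate_iff]
      constructor
      · simp
        omega
      · simp
    simp [forbidden1, this]
  · obtain ⟨c, rfl⟩ := Nat.exists_eq_add_of_le h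
    refine (hx (List.replicate a false)).2
      (factor_mid (p := []) (s := List.replicate c false ++ [true]) ?_)
    convert hfac using 1
    have : List.replicate (a + 2 + c) false
        = [false] ++ List.replicate a false ++ [false] ++ List.replicate c false := by
      symm
      rw [List.eq_replicate_iff]
      constructor
      · simp
        omega
      · simp
    simp [forbidden2, this]
end
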